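/- If A and B are quasi-isomorphic finite-type differential Poincaré duality algebras of dimension n ≥ 7 with H^{≤3}(A) = H^{≤3}(B) = k and A^{≤2} = B^{≤2} = k, then there exists a differential Poincaré duality algebra C and quasi-isomorphisms of CDGAs A → C and B → C. -/

import Mathlib

namespace PDCDGA

variable {k : Type} [Field k]

/-- Graded commutativity with Koszul signs, together with the convention that
squares of odd-degree elements vanish (also in characteristic 2). -/
structure GradedComm {A : Type} [Ring A] [Algebra k A] (𝒜 : ℕ → Submodule k A) : Prop where
  mul_comm : ∀ (i j : ℕ) (a b : A), a ∈ 𝒜 i → b ∈ 𝒜 j →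
    a * b = ((-1 : k) ^ (i * j)) • (b * a)
  odd_sq : ∀ i : ℕ, Odd i → ∀ a ∈ 𝒜 i, a * a = 0

/-- A `k`-linear differential of degree `+1` satisfying the graded Leibniz rule. -/
structure IsDifferential {A : Type} [Ring A] [Algebra k A] (𝒜 : ℕ → Submodule k A)
    (d : A →ₗ[k] A) : Prop where
  grade : ∀ i : ℕ, ∀ a ∈ 𝒜 i, d a ∈ 𝒜 (i + 1)
  d_sq : ∀ a : A, d (d a) = 0
  leibniz : ∀ (i : ℕ) (a b : A), a ∈ 𝒜 i →
    d (a * b) = d a * b + ((-1 : k) ^ i) • (a * d b)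

/-- An orientation `ε : A → k`, concentrated in degree `n`, vanishing on boundaries
and inducing an epimorphism `Hⁿ(A) → k`. -/
structure IsOrientation {A : Type} [Ring A] [Algebra k A] (𝒜 : ℕ → Submodule k A)
    (d : A →ₗ[k] A) (n : ℕ) (ε : A →ₗ[k] k) : Prop where
  homog : ∀ i : ℕ, i ≠ n → ∀ a ∈ 𝒜 i, ε a = 0
  eps_d : ∀ a : A, ε (d a) = 0
  exists_cocycle : ∃ μ : A, μ ∈ 𝒜 n ∧ d μ = 0 ∧ ε μ = 1

/-- The orphan ideal `O = {a | ∀ b, ε (a·b) = 0}` (as a `k`-submodule). -/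
def Orphans {A : Type} [Ring A] [Algebra k A] (ε : A →ₗ[k] k) : Submodule k A :=
  ⨅ b : A, LinearMap.ker (ε ∘ₗ LinearMap.mulRight k b)

lemma mem_orphans {A : Type} [Ring A] [Algebra k A] (ε : A →ₗ[k] k) (a : A) :
    a ∈ Orphans ε ↔ ∀ b : A, ε (a * b) = 0 := by
  simp [Orphans]

/-- `H^*(A,d)` is a Poincaré duality algebra in dimension `n` with respect to the
orientation `ε`: every nonzero cohomology class pairs nontrivially with some class
in the complementary degree. -/
def CohomologyPD {A : Type} [Ring A] [Algebra k A] (𝒜 : ℕ → Submodule k A)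
    (d : A →ₗ[k] A) (n : ℕ) (ε : A →ₗ[k] k) : Prop :=
  ∀ (i : ℕ) (a : A), a ∈ 𝒜 i → d a = 0 → a ∉ LinearMap.range d →
    ∃ (j : ℕ) (b : A), i + j = n ∧ b ∈ 𝒜 j ∧ d b = 0 ∧ ε (a * b) ≠ 0

/-- The orphan ideal is `N`-half-acyclic: `Hⁱ(O) = 0` for `n/2 + 1 ≤ i ≤ N`
(the condition `n/2 + 1 ≤ i` is written as `n + 2 ≤ 2 * i`). -/
def OrphansHalfAcyclic {A : Type} [Ring A] [Algebra k A] (𝒜 : ℕ → Submodule k A)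
    (d : A →ₗ[k] A) (n : ℕ) (ε : A →ₗ[k] k) (N : ℕ) : Prop :=
  ∀ i : ℕ, n + 2 ≤ 2 * i → i ≤ N → ∀ a : A, a ∈ Orphans ε → a ∈ 𝒜 i → d a = 0 →
    ∃ b : A, b ∈ Orphans ε ∧ b ∈ 𝒜 (i - 1) ∧ a = d b

/-- A chain map is a quasi-isomorphism: it induces a bijection on cohomology. -/
def IsQuasiIso {A B : Type} [Ring A] [Algebra k A] [Ring B] [Algebra k B]
    (d : A →ₗ[k] A) (D : B →ₗ[k] B) (f : A → B) : Prop :=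
  (∀ a : A, d a = 0 → (∃ b : B, f a = D b) → ∃ a' : A, a = d a') ∧
  (∀ x : B, D x = 0 → ∃ (a : A) (b : B), d a = 0 ∧ x = f a + D b)

/-- Indices of the monomial basis of `Λ(c₁,…,c_l,w₁,…,w_l)`, where `c_i` has degree
`q+1` and `w_i` has degree `q`: exponents of odd-degree generators are at most 1. -/
def MonIdx (q l : ℕ) : Type :=
  {se : (Fin l → ℕ) × (Fin l → ℕ) //
    (Odd (q + 1) → ∀ i, se.1 i ≤ 1) ∧ (Odd q → ∀ i, se.2 i ≤ 1)}

/-- The monomial `c₁^{s₁} ⋯ c_l^{s_l} · w₁^{e₁} ⋯ w_l^{e_l}`. -/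
def monomial {B : Type} [Monoid B] {l : ℕ} (c w : Fin l → B)
    (μ : (Fin l → ℕ) × (Fin l → ℕ)) : B :=
  (((List.finRange l).map fun i => c i ^ μ.1 i).prod) *
    (((List.finRange l).map fun i => w i ^ μ.2 i).prod)

/-- A bundled CDGA over `k`. -/
structure CDGAPack (k : Type) [Field k] : Type 1 where
  carrier : Type
  [ringI : Ring carrier]
  [algI : Algebra k carrier]
  grading : ℕ → Submodule k carrier
  [gradedI : GradedRing grading]
  diff : carrier →ₗ[k] carrier
  gcomm : GradedComm grading
  isdiff : IsDifferential grading diff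

attribute [instance] CDGAPack.ringI CDGAPack.algI CDGAPack.gradedI

/-- A morphism of CDGAs (graded algebra chain map) which is a quasi-isomorphism. -/
def IsQuasiIsoMap {k : Type} [Field k] (X Y : CDGAPack k)
    (f : X.carrier →ₐ[k] Y.carrier) : Prop :=
  (∀ i : ℕ, ∀ a ∈ X.grading i, f a ∈ Y.grading i) ∧
  (∀ a : X.carrier, Y.diff (f a) = f (X.diff a)) ∧
  IsQuasiIso X.diff Y.diff ⇑f

/-- One step of a zig-zag: there is a quasi-isomorphism of CDGAs `X → Y`. -/
def QIStep {k : Type} [Field k] (X Y : CDGAPack k) : Prop :=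
  ∃ f : X.carrier →ₐ[k] Y.carrier, IsQuasiIsoMap X Y f

/-- Weak equivalence of CDGAs: connected by a zig-zag of quasi-isomorphisms. -/
def WeaklyEquivalent {k : Type} [Field k] (X Y : CDGAPack k) : Prop :=
  Relation.EqvGen QIStep X Y

end PDCDGA

namespace PDCDGA
open DirectSum TensorProduct

section gradedBasics
variable {k : Type} [Field k]
variable {A : Type} [Ring A] [Algebra k A] (𝒜 : ℕ → Submodule k A) [GradedRing 𝒜]

/-- Projection to degree `i`. -/
noncomputable abbrev pr (i : ℕ) : A →ₗ[k] A := GradedAlgebra.proj 𝒜 i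

lemma pr_same {i : ℕ} {a : A} (h : a ∈ 𝒜 i) : pr 𝒜 i a = a := by
  simp [pr, GradedAlgebra.proj_apply, DirectSum.decompose_of_mem_same 𝒜 h]

lemma pr_ne {i j : ℕ} {a : A} (h : a ∈ 𝒜 i) (hij : i ≠ j) : pr 𝒜 j a = 0 := by
  simp [pr, GradedAlgebra.proj_apply, DirectSum.decompose_of_mem_ne 𝒜 h hij]

lemma pr_mem (i : ℕ) (a : A) : pr 𝒜 i a ∈ 𝒜 i := by
  simp [pr, GradedAlgebra.proj_apply]

theorem hom_ind {p : A → Prop} (a : A) (h0 : p 0) (hadd : ∀ a b, p a → p b → p (a + b))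
    (hh : ∀ i, ∀ a ∈ 𝒜 i, p a) : p a :=
  DirectSum.Decomposition.inductionOn 𝒜 (motive := p) h0 (fun {i} m => hh i m m.2) hadd a

theorem lin_ext {M : Type} [AddCommGroup M] [Module k M] {f g : A →ₗ[k] M}
    (h : ∀ i, ∀ a ∈ 𝒜 i, f a = g a) : f = g := by
  ext a
  refine hom_ind 𝒜 (p := fun a => f a = g a) a (by simp) ?_ h
  intro a b h1 h2; simp [h1, h2]

theorem sum_pr (a : A) : ∃ N, a = ∑ i ∈ Finset.range N, pr 𝒜 i a ∧ ∀ i, N ≤ i → pr 𝒜 i a = 0 := by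
  refine hom_ind 𝒜 (p := fun a => ∃ N, a = ∑ i ∈ Finset.range N, pr 𝒜 i a ∧ ∀ i, N ≤ i → pr 𝒜 i a = 0)
    a ⟨0, by simp⟩ ?_ ?_
  · rintro a b ⟨N, h1, h1'⟩ ⟨M, h2, h2'⟩
    have e1 : ∀ i, max N M ≤ i → pr 𝒜 i (a + b) = 0 := by
      intro i hi
      rw [map_add, h1' i (by omega), h2' i (by omega), add_zero]
    refine ⟨max N M, ?_, e1⟩
    simp only [map_add, Finset.sum_add_distrib]
    rw [← Finset.sum_subset (s₁ := Finset.range N) (f := fun i => pr 𝒜 i a), ← h1,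
      ← Finset.sum_subset (s₁ := Finset.range M) (f := fun i => pr 𝒜 i b), ← h2]
    · intro x hx; simp at *; omega
    · intro x _ hx; exact h2' x (by simpa using hx)
    · intro x hx; simp at *; omega
    · intro x _ hx; exact h1' x (by simpa using hx)
  · intro i a ha
    refine ⟨i + 1, ?_, fun j hj => pr_ne 𝒜 ha (by omega)⟩
    rw [Finset.sum_eq_single i]
    · exact (pr_same 𝒜 ha).symm
    · intro j _ hj; exact pr_ne 𝒜 ha hj.symm
    · simp

theorem eq_of_pr {a b : A} (h : ∀ i, pr 𝒜 i a = pr 𝒜 i b) : a = b := by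
  obtain ⟨N, hN, _⟩ := sum_pr 𝒜 (a - b)
  have : a - b = 0 := by
    rw [hN]; apply Finset.sum_eq_zero; intro i _; simp [map_sub, h i]
  exact sub_eq_zero.mp this

/-- Linear map from a family of linear maps on the graded pieces. -/
noncomputable def pieces {M : Type} [AddCommGroup M] [Module k M] (φ : ∀ i, 𝒜 i →ₗ[k] M) :
    A →ₗ[k] M :=
  (DirectSum.toModule k ℕ M φ) ∘ₗ (DirectSum.decomposeLinearEquiv 𝒜).toLinearMap

lemma pieces_apply {M : Type} [AddCommGroup M] [Module k M] (φ : ∀ i, 𝒜 i →ₗ[k] M)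
    {i : ℕ} (a : A) (ha : a ∈ 𝒜 i) : pieces 𝒜 φ a = φ i ⟨a, ha⟩ := by
  simp only [pieces, LinearMap.comp_apply, LinearEquiv.coe_coe, decomposeLinearEquiv_apply]
  rw [DirectSum.decompose_of_mem 𝒜 ha]
  exact DirectSum.toModule_lof k i _

/-- The sign involution. -/
noncomputable def sg : A →ₗ[k] A := pieces 𝒜 (fun i => ((-1 : k) ^ i) • (𝒜 i).subtype)

lemma sg_apply {i : ℕ} {a : A} (ha : a ∈ 𝒜 i) : sg 𝒜 a = ((-1 : k) ^ i) • a := by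
  simp [sg, pieces_apply 𝒜 _ a ha]

lemma sg_mem {i : ℕ} {a : A} (ha : a ∈ 𝒜 i) : sg 𝒜 a ∈ 𝒜 i := by
  rw [sg_apply 𝒜 ha]; exact Submodule.smul_mem _ _ ha

lemma sg_sg (a : A) : sg 𝒜 (sg 𝒜 a) = a := by
  have : sg 𝒜 ∘ₗ sg 𝒜 = LinearMap.id := by
    apply lin_ext 𝒜; intro i a ha
    simp [sg_apply 𝒜 ha, smul_smul, ← mul_pow]
  exact LinearMap.congr_fun this a

lemma sg_mul (a b : A) : sg 𝒜 (a * b) = sg 𝒜 a * sg 𝒜 b := by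
  refine hom_ind 𝒜 (p := fun a => sg 𝒜 (a * b) = sg 𝒜 a * sg 𝒜 b) a (by simp) ?_ ?_
  · intro a b h1 h2; simp [add_mul, h1, h2]
  intro i a ha
  refine hom_ind 𝒜 (p := fun b => sg 𝒜 (a * b) = sg 𝒜 a * sg 𝒜 b) b (by simp) ?_ ?_
  · intro a b h1 h2; simp [mul_add, h1, h2]
  intro j b hb
  rw [sg_apply 𝒜 ha, sg_apply 𝒜 hb, sg_apply 𝒜 (SetLike.mul_mem_graded ha hb)]
  simp [smul_smul, pow_add, mul_comm]

end gradedBasics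

section builder
variable {k : Type} [Field k]
variable {A : Type} [Ring A] [Algebra k A] 

/-- Build a graded ring structure from projections. -/
@[reducible] noncomputable def mkGraded (𝒯 : ℕ → Submodule k A) (π : ℕ → A →ₗ[k] A)
    (h1 : ∀ i, ∀ a ∈ 𝒯 i, π i a = a) (h2 : ∀ i j, i ≠ j → ∀ a ∈ 𝒯 i, π j a = 0)
    (htop : ⨆ i, 𝒯 i = ⊤) (hone : (1 : A) ∈ 𝒯 0)
    (hmul : ∀ i j a b, a ∈ 𝒯 i → b ∈ 𝒯 j → a * b ∈ 𝒯 (i + j)) : GradedRing 𝒯 := by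
  have hind : iSupIndep 𝒯 := by
    rw [iSupIndep_def]
    intro i
    rw [Submodule.disjoint_def]
    intro x hx hx'
    rw [← h1 i x hx]
    have : (⨆ j, ⨆ (_ : j ≠ i), 𝒯 j) ≤ LinearMap.ker (π i) := by
      refine iSup_le fun j => iSup_le fun hj => fun a ha => ?_
      exact h2 j i hj a ha
    exact this hx'
  have hI := DirectSum.isInternal_submodule_of_iSupIndep_of_iSup_eq_top hind htop
  letI := hI.chooseDecomposition
  exact { one_mem := hone, mul_mem := fun {i j a b} ha hb => hmul i j a b ha hb }

end builder

section tensor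
variable {k : Type} [Field k]
variable {A : Type} [Ring A] [Algebra k A] (𝒜 : ℕ → Submodule k A) [GradedRing 𝒜]
variable {B : Type} [Ring B] [Algebra k B] (ℬ : ℕ → Submodule k B) [GradedRing ℬ]

abbrev GT : Type := GradedTensorProduct k 𝒜 ℬ

/-- pure tensors -/
noncomputable def tm (a : A) (b : B) : GT 𝒜 ℬ := GradedTensorProduct.tmul k a b

variable {𝒜 ℬ}

@[simp] lemma tm_add_left (a a' : A) (b : B) : (tm 𝒜 ℬ (a + a') b) = tm 𝒜 ℬ a b + tm 𝒜 ℬ a' b := by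
  simp [tm, GradedTensorProduct.tmul, TensorProduct.add_tmul]
@[simp] lemma tm_add_right (a : A) (b b' : B) : (tm 𝒜 ℬ a (b + b')) = tm 𝒜 ℬ a b + tm 𝒜 ℬ a b' := by
  simp [tm, GradedTensorProduct.tmul, TensorProduct.tmul_add]
@[simp] lemma tm_smul_left (c : k) (a : A) (b : B) : (tm 𝒜 ℬ (c • a) b) = c • tm 𝒜 ℬ a b := by
  simp only [tm, GradedTensorProduct.tmul, ← TensorProduct.smul_tmul', map_smul]
@[simp] lemma tm_smul_right (c : k) (a : A) (b : B) : (tm 𝒜 ℬ a (c • b)) = c • tm 𝒜 ℬ a b := by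
  simp only [tm, GradedTensorProduct.tmul, TensorProduct.tmul_smul, map_smul]
@[simp] lemma tm_zero_left (b : B) : (tm 𝒜 ℬ 0 b) = 0 := by
  simp [tm, GradedTensorProduct.tmul]
@[simp] lemma tm_zero_right (a : A) : (tm 𝒜 ℬ a 0) = 0 := by
  simp [tm, GradedTensorProduct.tmul]
lemma tm_one : tm 𝒜 ℬ 1 1 = 1 := rfl

lemma tm_mul {j i : ℕ} (a : A) {b : B} (hb : b ∈ ℬ j) {a' : A} (ha : a' ∈ 𝒜 i) (b' : B) :
    tm 𝒜 ℬ a b * tm 𝒜 ℬ a' b' = ((-1 : k) ^ (j * i)) • tm 𝒜 ℬ (a * a') (b * b') := by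
  have := GradedTensorProduct.tmul_coe_mul_coe_tmul 𝒜 ℬ a ⟨b, hb⟩ ⟨a', ha⟩ b'
  simp only [tm]
  rw [this]
  rcases Nat.even_or_odd (j * i) with h | h
  · simp [h.neg_one_pow]
  · have : (-1 : ℤˣ) ^ (j * i) = -1 := by
      exact h.neg_one_pow
    erw [this, h.neg_one_pow]; simp

lemma tm_one_mul (a a' : A) (b' : B) :
    tm 𝒜 ℬ a 1 * tm 𝒜 ℬ a' b' = tm 𝒜 ℬ (a * a') b' := by
  refine hom_ind 𝒜 (p := fun a' => tm 𝒜 ℬ a 1 * tm 𝒜 ℬ a' b' = tm 𝒜 ℬ (a * a') b') a' (by simp) ?_ ?_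
  · intro x y h1 h2; simp [mul_add, h1, h2]
  · intro i x hx
    rw [tm_mul a (SetLike.GradedOne.one_mem) hx]; simp

lemma tm_mul_one (a : A) (b b' : B) :
    tm 𝒜 ℬ a b * tm 𝒜 ℬ 1 b' = tm 𝒜 ℬ a (b * b') := by
  refine hom_ind ℬ (p := fun b => tm 𝒜 ℬ a b * tm 𝒜 ℬ 1 b' = tm 𝒜 ℬ a (b * b')) b (by simp) ?_ ?_
  · intro x y h1 h2; simp [add_mul, h1, h2]
  · intro i x hx
    rw [tm_mul a hx (SetLike.GradedOne.one_mem)]; simp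

theorem tm_ind {p : GT 𝒜 ℬ → Prop} (x : GT 𝒜 ℬ) (h0 : p 0) (hadd : ∀ x y, p x → p y → p (x + y))
    (hh : ∀ i j, ∀ a ∈ 𝒜 i, ∀ b ∈ ℬ j, p (tm 𝒜 ℬ a b)) : p x := by
  refine TensorProduct.induction_on (motive := p) x h0 ?_ hadd
  intro a b
  change p (tm 𝒜 ℬ a b)
  refine hom_ind 𝒜 (p := fun a => p (tm 𝒜 ℬ a b)) a (by simpa) ?_ ?_
  · intro x y h1 h2; simpa using hadd _ _ h1 h2
  intro i a ha
  refine hom_ind ℬ (p := fun b => p (tm 𝒜 ℬ a b)) b (by simpa) ?_ ?_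
  · intro x y h1 h2; simpa using hadd _ _ h1 h2
  intro j b hb
  exact hh i j a ha b hb

theorem tm_ext {M : Type} [AddCommGroup M] [Module k M] {f g : GT 𝒜 ℬ →ₗ[k] M}
    (h : ∀ i j, ∀ a ∈ 𝒜 i, ∀ b ∈ ℬ j, f (tm 𝒜 ℬ a b) = g (tm 𝒜 ℬ a b)) : f = g := by
  refine LinearMap.ext fun x => ?_
  refine tm_ind (p := fun x => f x = g x) x (by simp) ?_ h
  intro x y h1 h2; simp [h1, h2]

/-- Linear map out of the graded tensor product. -/
noncomputable def tlift {M : Type} [AddCommGroup M] [Module k M] (f : A →ₗ[k] B →ₗ[k] M) :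
    GT 𝒜 ℬ →ₗ[k] M :=
  (TensorProduct.lift f) ∘ₗ (GradedTensorProduct.of k 𝒜 ℬ).symm.toLinearMap

@[simp] lemma tlift_tm {M : Type} [AddCommGroup M] [Module k M] (f : A →ₗ[k] B →ₗ[k] M) (a : A) (b : B) :
    tlift f (tm 𝒜 ℬ a b) = f a b := by
  simp [tlift, tm]

variable (𝒜 ℬ) in
/-- `tm` as a bilinear map -/
noncomputable def tmL : A →ₗ[k] B →ₗ[k] GT 𝒜 ℬ :=
  LinearMap.mk₂ k (tm 𝒜 ℬ) (by simp) (by simp) (by simp) (by simp)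

variable (𝒜 ℬ) in
/-- tensor product of two linear endomorphisms -/
noncomputable def tmap {A' : Type} [Ring A'] [Algebra k A'] {𝒜' : ℕ → Submodule k A'} [GradedRing 𝒜']
  {B' : Type} [Ring B'] [Algebra k B'] {ℬ' : ℕ → Submodule k B'} [GradedRing ℬ']
   (f : A →ₗ[k] A') (g : B →ₗ[k] B') : GT 𝒜 ℬ →ₗ[k] GT 𝒜' ℬ' :=
  tlift ((tmL 𝒜' ℬ').compl₁₂ f g)

@[simp] lemma tmap_tm  {A' : Type} [Ring A'] [Algebra k A'] {𝒜' : ℕ → Submodule k A'} [GradedRing 𝒜']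
  {B' : Type} [Ring B'] [Algebra k B'] {ℬ' : ℕ → Submodule k B'} [GradedRing ℬ']
   (f : A →ₗ[k] A') (g : B →ₗ[k] B') (a : A) (b : B) :
   (tmap 𝒜 ℬ f g : GT 𝒜 ℬ →ₗ[k] GT 𝒜' ℬ') (tm 𝒜 ℬ a b) = tm 𝒜' ℬ' (f a) (g b) := by
  simp [tmap, tmL]

variable (𝒜 ℬ)

/-- grading on the graded tensor product -/
noncomputable def tgr (n : ℕ) : Submodule k (GT 𝒜 ℬ) :=
  Submodule.span k {x | ∃ i j, i + j = n ∧ ∃ a ∈ 𝒜 i, ∃ b ∈ ℬ j, x = tm 𝒜 ℬ a b}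

variable {𝒜 ℬ} in
lemma tm_mem {i j n : ℕ} (h : i + j = n) {a : A} (ha : a ∈ 𝒜 i) {b : B} (hb : b ∈ ℬ j) :
    tm 𝒜 ℬ a b ∈ tgr 𝒜 ℬ n :=
  Submodule.subset_span ⟨i, j, h, a, ha, b, hb, rfl⟩

variable {𝒜 ℬ} in
theorem tgr_ind {n : ℕ} {p : GT 𝒜 ℬ → Prop} (x : GT 𝒜 ℬ) (hx : x ∈ tgr 𝒜 ℬ n) (h0 : p 0)
    (hadd : ∀ x y, x ∈ tgr 𝒜 ℬ n → y ∈ tgr 𝒜 ℬ n → p x → p y → p (x + y))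
    (hh : ∀ i j, i + j = n → ∀ a ∈ 𝒜 i, ∀ b ∈ ℬ j, p (tm 𝒜 ℬ a b)) : p x := by
  have key : ∀ x, x ∈ tgr 𝒜 ℬ n → (x ∈ tgr 𝒜 ℬ n ∧ ∀ c : k, p (c • x)) := by
    intro x hx
    refine Submodule.span_induction (p := fun x _ => x ∈ tgr 𝒜 ℬ n ∧ ∀ c : k, p (c • x)) ?_ ?_ ?_ ?_ hx
    · rintro x ⟨i, j, h, a, ha, b, hb, rfl⟩
      refine ⟨tm_mem h ha hb, fun c => ?_⟩
      rw [← tm_smul_left]; exact hh i j h _ (Submodule.smul_mem _ _ ha) b hb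
    · exact ⟨Submodule.zero_mem _, fun c => by simpa⟩
    · rintro x y _ _ ⟨h1, h2⟩ ⟨h3, h4⟩
      refine ⟨Submodule.add_mem _ h1 h3, fun c => ?_⟩
      rw [smul_add]
      exact hadd _ _ (Submodule.smul_mem _ _ h1) (Submodule.smul_mem _ _ h3) (h2 c) (h4 c)
    · rintro c x _ ⟨h1, h2⟩
      exact ⟨Submodule.smul_mem _ _ h1, fun c' => by rw [smul_smul]; exact h2 _⟩
  simpa using (key x hx).2 1

/-- projections -/
noncomputable def tpr (n : ℕ) : GT 𝒜 ℬ →ₗ[k] GT 𝒜 ℬ :=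
  ∑ p ∈ Finset.HasAntidiagonal.antidiagonal n, tmap 𝒜 ℬ (pr 𝒜 p.1) (pr ℬ p.2)

lemma tpr_tm {i j n : ℕ} {a : A} (ha : a ∈ 𝒜 i) {b : B} (hb : b ∈ ℬ j) :
    tpr 𝒜 ℬ n (tm 𝒜 ℬ a b) = if i + j = n then tm 𝒜 ℬ a b else 0 := by
  simp only [tpr, LinearMap.sum_apply, tmap_tm]
  split_ifs with h
  · rw [Finset.sum_eq_single (i, j)]
    · simp [pr_same 𝒜 ha, pr_same ℬ hb]
    · rintro ⟨i', j'⟩ _ h'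
      by_cases hi : i = i'
      · subst hi
        have : j ≠ j' := by rintro rfl; exact h' rfl
        simp [pr_ne ℬ hb this]
      · simp [pr_ne 𝒜 ha hi]
    · intro h'; simp [h] at h'
  · apply Finset.sum_eq_zero
    rintro ⟨i', j'⟩ h'
    simp at h'
    by_cases hi : i = i'
    · subst hi
      have : j ≠ j' := by rintro rfl; exact h h'
      simp [pr_ne ℬ hb this]
    · simp [pr_ne 𝒜 ha hi]

lemma tgr_mul {m n : ℕ} (x y : GT 𝒜 ℬ) (hx : x ∈ tgr 𝒜 ℬ m) (hy : y ∈ tgr 𝒜 ℬ n) :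
    x * y ∈ tgr 𝒜 ℬ (m + n) := by
  refine tgr_ind (p := fun x => x * y ∈ tgr 𝒜 ℬ (m + n)) x hx (by simp) ?_ ?_
  · intro x x' _ _ h1 h2; rw [add_mul]; exact Submodule.add_mem _ h1 h2
  intro i j hij a ha b hb
  refine tgr_ind (p := fun y => tm 𝒜 ℬ a b * y ∈ tgr 𝒜 ℬ (m + n)) y hy (by simp) ?_ ?_
  · intro x x' _ _ h1 h2; rw [mul_add]; exact Submodule.add_mem _ h1 h2
  intro i' j' hij' a' ha' b' hb'
  rw [tm_mul a hb ha' b']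
  apply Submodule.smul_mem
  exact tm_mem (by omega) (SetLike.mul_mem_graded ha ha') (SetLike.mul_mem_graded hb hb')

noncomputable instance tgrGraded : GradedRing (tgr 𝒜 ℬ) := by
  refine mkGraded (tgr 𝒜 ℬ) (tpr 𝒜 ℬ) ?_ ?_ ?_ ?_ ?_
  · intro n x hx
    refine tgr_ind (p := fun x => tpr 𝒜 ℬ n x = x) x hx (by simp) ?_ ?_
    · intro x y _ _ h1 h2; simp [h1, h2]
    · intro i j h a ha b hb; rw [tpr_tm 𝒜 ℬ ha hb, if_pos h]
  · intro n m hnm x hx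
    refine tgr_ind (p := fun x => tpr 𝒜 ℬ m x = 0) x hx (by simp) ?_ ?_
    · intro x y _ _ h1 h2; simp [h1, h2]
    · intro i j h a ha b hb; rw [tpr_tm 𝒜 ℬ ha hb, if_neg (by omega)]
  · rw [eq_top_iff]
    intro x _
    refine tm_ind (p := fun x => x ∈ ⨆ i, tgr 𝒜 ℬ i) x (by simp) ?_ ?_
    · intro x y h1 h2; exact Submodule.add_mem _ h1 h2
    · intro i j a ha b hb
      exact Submodule.mem_iSup_of_mem (i + j) (tm_mem rfl ha hb)
  · exact tm_mem (i := 0) (j := 0) rfl SetLike.GradedOne.one_mem SetLike.GradedOne.one_mem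
  · intro i j a b ha hb; exact tgr_mul 𝒜 ℬ a b ha hb

lemma tgr_comm (hA : GradedComm 𝒜) (hB : GradedComm ℬ) {m n : ℕ} (x y : GT 𝒜 ℬ)
    (hx : x ∈ tgr 𝒜 ℬ m) (hy : y ∈ tgr 𝒜 ℬ n) :
    x * y = ((-1 : k) ^ (m * n)) • (y * x) := by
  refine tgr_ind (p := fun x => x * y = ((-1 : k) ^ (m * n)) • (y * x)) x hx (by simp) ?_ ?_
  · intro x x' _ _ h1 h2; rw [add_mul, h1, h2, mul_add, smul_add]
  intro i j hij a ha b hb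
  refine tgr_ind (p := fun y => tm 𝒜 ℬ a b * y = ((-1 : k) ^ (m * n)) • (y * tm 𝒜 ℬ a b)) y hy (by simp) ?_ ?_
  · intro x x' _ _ h1 h2; rw [mul_add, h1, h2, add_mul, smul_add]
  intro i' j' hij' a' ha' b' hb'
  rw [tm_mul a hb ha' b', tm_mul a' hb' ha b, hA.mul_comm i i' a a' ha ha',
    hB.mul_comm j j' b b' hb hb']
  simp only [tm_smul_left, tm_smul_right, smul_smul, ← pow_add]
  congr 1
  subst hij hij'
  apply neg_one_pow_congr
  simp only [Nat.even_add, Nat.even_mul, parity_simps]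
  tauto

lemma tgr_gcomm (hA : GradedComm 𝒜) (hB : GradedComm ℬ) : GradedComm (tgr 𝒜 ℬ) where
  mul_comm i j a b ha hb := tgr_comm 𝒜 ℬ hA hB a b ha hb
  odd_sq n hn x hx := by
    refine tgr_ind (p := fun x => x * x = 0) x hx (by simp) ?_ ?_
    · intro x y hx hy h1 h2
      have := tgr_comm 𝒜 ℬ hA hB x y hx hy
      rw [(hn.mul hn).neg_one_pow] at this
      simp [add_mul, mul_add, h1, h2, this]
    · intro i j hij a ha b hb
      rw [tm_mul a hb ha b]
      subst hij
      rcases Nat.even_or_odd i with h | h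
      · have hj : Odd j := by
          rcases Nat.even_or_odd j with h' | h'
          · exact absurd (h.add h') (by simpa using hn)
          · exact h'
        simp [hB.odd_sq j hj b hb]
      · simp [hA.odd_sq i h a ha]
end tensor

end PDCDGA

namespace PDCDGA
open DirectSum TensorProduct

section homs
variable {k : Type} [Field k]

/-- CDGA morphisms. -/
structure Hm (X Y : CDGAPack k) where
  f : X.carrier →ₐ[k] Y.carrier
  gr : ∀ i : ℕ, ∀ a ∈ X.grading i, f a ∈ Y.grading i
  ch : ∀ a : X.carrier, Y.diff (f a) = f (X.diff a)

/-- composition -/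
def Hm.comp {X Y Z : CDGAPack k} (g : Hm Y Z) (f : Hm X Y) : Hm X Z where
  f := g.f.comp f.f
  gr i a h := g.gr i _ (f.gr i a h)
  ch a := by simp [g.ch, f.ch]

@[simp] lemma Hm.comp_f {X Y Z : CDGAPack k} (g : Hm Y Z) (f : Hm X Y) (a : X.carrier) :
    (g.comp f).f a = g.f (f.f a) := rfl

/-- identity -/
def Hm.id (X : CDGAPack k) : Hm X X where
  f := AlgHom.id k _
  gr i a h := h
  ch a := rfl

lemma Hm.ext' {X Y : CDGAPack k} {f g : Hm X Y} (h : ∀ a, f.f a = g.f a) : f = g := by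
  cases f; cases g; congr; exact AlgHom.ext h

lemma one_mem' (X : CDGAPack k) : (1 : X.carrier) ∈ X.grading 0 := SetLike.GradedOne.one_mem

lemma d_one (X : CDGAPack k) : X.diff 1 = 0 := by
  have := X.isdiff.leibniz 0 1 1 (one_mem' X)
  simpa using this

lemma mul_mem' (X : CDGAPack k) {i j m : ℕ} {a b : X.carrier} (ha : a ∈ X.grading i)
    (hb : b ∈ X.grading j) (h : i + j = m) : a * b ∈ X.grading m := by
  subst h; exact SetLike.mul_mem_graded ha hb

lemma sg_f {X Y : CDGAPack k} (f : Hm X Y) (a : X.carrier) :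
    f.f (sg X.grading a) = sg Y.grading (f.f a) := by
  refine hom_ind X.grading (p := fun a => f.f (sg X.grading a) = sg Y.grading (f.f a)) a (by simp) ?_ ?_
  · intro a b h1 h2; simp [h1, h2]
  · intro i a ha; rw [sg_apply _ ha, sg_apply _ (f.gr i a ha)]; simp

lemma pr_d (X : CDGAPack k) (i : ℕ) (a : X.carrier) :
    pr X.grading (i+1) (X.diff a) = X.diff (pr X.grading i a) := by
  have : pr X.grading (i+1) ∘ₗ X.diff = X.diff ∘ₗ pr X.grading i := by
    apply lin_ext X.grading
    intro j a ha
    simp only [LinearMap.comp_apply]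
    by_cases h : j = i
    · subst h; rw [pr_same _ ha, pr_same _ (X.isdiff.grade _ _ ha)]
    · rw [pr_ne _ ha h, pr_ne _ (X.isdiff.grade _ _ ha) (by omega)]; simp
  exact LinearMap.congr_fun this a

lemma pr_d_zero (X : CDGAPack k) (a : X.carrier) :
    pr X.grading 0 (X.diff a) = 0 := by
  have : pr X.grading 0 ∘ₗ X.diff = 0 := by
    apply lin_ext X.grading
    intro j a ha
    simp only [LinearMap.comp_apply]
    rw [pr_ne _ (X.isdiff.grade _ _ ha) (by omega)]; simp
  exact LinearMap.congr_fun this a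

lemma pr_f {X Y : CDGAPack k} (f : Hm X Y) (i : ℕ) (a : X.carrier) :
    pr Y.grading i (f.f a) = f.f (pr X.grading i a) := by
  refine hom_ind X.grading (p := fun a => pr Y.grading i (f.f a) = f.f (pr X.grading i a)) a (by simp) ?_ ?_
  · intro a b h1 h2; rw [map_add, map_add, h1, h2, map_add, map_add]
  · intro j a ha
    by_cases h : j = i
    · subst h; rw [pr_same _ ha, pr_same _ (f.gr _ _ ha)]
    · rw [pr_ne _ ha h, pr_ne _ (f.gr _ _ ha) h]; simp
end homs

section twist
variable {k : Type} [Field k]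

/-- Derivation-like operators of degree `1 - e`. -/
structure IsDer {B : Type} [Ring B] [Algebra k B] (ℬ : ℕ → Submodule k B)
    (e : ℕ) (δ : B →ₗ[k] B) : Prop where
  deg : ∀ j, ∀ b ∈ ℬ j, (∃ m, m + e = j + 1 ∧ δ b ∈ ℬ m) ∨ δ b = 0
  leib : ∀ j, ∀ b ∈ ℬ j, ∀ b', δ (b * b') = δ b * b' + ((-1 : k) ^ ((e + 1) * j)) • (b * δ b')
  sq : Odd e ∨ ∀ b, δ (δ b) = 0

variable (X : CDGAPack k) {B : Type} [Ring B] [Algebra k B] (ℬ : ℕ → Submodule k B) [GradedRing ℬ]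
  (z : X.carrier) (δ : B →ₗ[k] B)

/-- twisted differential -/
noncomputable def twD : GT X.grading ℬ →ₗ[k] GT X.grading ℬ :=
  tmap X.grading ℬ X.diff LinearMap.id +
    tmap X.grading ℬ (LinearMap.mulRight k z ∘ₗ sg X.grading) δ

lemma twD_tm (a : X.carrier) (b : B) : twD X ℬ z δ (tm X.grading ℬ a b) =
    tm X.grading ℬ (X.diff a) b + tm X.grading ℬ (sg X.grading a * z) (δ b) := by
  simp [twD]

lemma twD_isdiff {e : ℕ} (hz : z ∈ X.grading e) (dz : X.diff z = 0) (hδ : IsDer ℬ e δ) :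
    IsDifferential (tgr X.grading ℬ) (twD X ℬ z δ) where
  grade n x hx := by
    refine tgr_ind (p := fun x => twD X ℬ z δ x ∈ tgr X.grading ℬ (n+1)) x hx (by simp) ?_ ?_
    · intro x y _ _ h1 h2; rw [map_add]; exact Submodule.add_mem _ h1 h2
    · intro i j hij a ha b hb
      rw [twD_tm]
      refine Submodule.add_mem _ (tm_mem (by omega) (X.isdiff.grade i a ha) hb) ?_
      rcases hδ.deg j b hb with ⟨m, hm, hb'⟩ | h
      · exact tm_mem (i := i + e) (j := m) (by omega) (SetLike.mul_mem_graded (sg_mem _ ha) hz) hb'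
      · rw [h]; simp
  d_sq x := by
    refine tm_ind (p := fun x => twD X ℬ z δ (twD X ℬ z δ x) = 0) x (by simp) ?_ ?_
    · intro x y h1 h2; simp [h1, h2]
    · intro i j a ha b hb
      have hzz : tm X.grading ℬ (sg X.grading (sg X.grading a * z) * z) (δ (δ b)) = 0 := by
        rcases hδ.sq with h | h
        · have h2 : sg X.grading z * z = 0 := by
            rw [sg_apply _ hz]; simp [X.gcomm.odd_sq e h z hz]
          rw [sg_mul, mul_assoc, h2]; simp
        · simp [h b]
      rw [twD_tm, map_add, twD_tm, twD_tm, hzz, X.isdiff.d_sq,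
        sg_apply _ ha, sg_apply _ (X.isdiff.grade i a ha), smul_mul_assoc, smul_mul_assoc, map_smul,
        X.isdiff.leibniz i a z ha, dz]
      simp only [tm_smul_left, mul_zero, smul_zero, add_zero, tm_zero_left, zero_add, ← add_smul, pow_succ]
      simp
  leibniz n x y hx := by
    refine tgr_ind (p := fun x => twD X ℬ z δ (x * y) = twD X ℬ z δ x * y +
      ((-1 : k) ^ n) • (x * twD X ℬ z δ y)) x hx (by simp) ?_ ?_
    · intro x x' _ _ h1 h2; simp only [add_mul, map_add, h1, h2, smul_add]; abel
    intro i j hij a ha b hb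
    refine tm_ind (p := fun y => twD X ℬ z δ (tm X.grading ℬ a b * y) =
      twD X ℬ z δ (tm X.grading ℬ a b) * y +
      ((-1 : k) ^ n) • (tm X.grading ℬ a b * twD X ℬ z δ y)) y (by simp) ?_ ?_
    · intro x x' h1 h2; simp only [mul_add, map_add, h1, h2, smul_add]; abel
    intro i' j' a' ha' b' hb'
    have haa := SetLike.mul_mem_graded ha ha'
    have haz := SetLike.mul_mem_graded ha' hz
    rw [tm_mul a hb ha' b', map_smul, twD_tm, twD_tm, twD_tm, add_mul, mul_add,
      tm_mul _ hb ha', X.isdiff.leibniz i a a' ha, sg_apply _ haa, sg_apply _ ha, sg_apply _ ha',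
      hδ.leib j b hb b', tm_mul a hb (X.isdiff.grade i' a' ha'), smul_mul_assoc (_) a' z,
      tm_smul_left _ (a' * z), mul_smul_comm _ (tm X.grading ℬ a b), tm_mul a hb haz]
    have h3 : tm X.grading ℬ ((-1 : k) ^ i • a * z) (δ b) * tm X.grading ℬ a' b' =
        ((-1 : k) ^ (i + (j + 1) * i')) • tm X.grading ℬ (a * a' * z) (δ b * b') := by
      rcases hδ.deg j b hb with ⟨m, hm, hb2⟩ | h
      · rw [tm_mul _ hb2 ha', smul_mul_assoc, smul_mul_assoc, mul_assoc a z a',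
          X.gcomm.mul_comm e i' z a' hz ha', mul_smul_comm, tm_smul_left, tm_smul_left, smul_smul,
          smul_smul, ← pow_add, ← pow_add, mul_assoc, ← hm]
        congr 1; apply congrArg; ring
      · simp [h]
    rw [h3]
    subst hij
    simp only [tm_add_left, tm_add_right, tm_smul_left, tm_smul_right, smul_add, smul_smul, ← pow_add, smul_mul_assoc,
       ← mul_assoc]
    have s1 : (-1 : k) ^ (i + j + j * (i' + 1)) = (-1 : k) ^ (j * i' + i) := by
      have : i + j + j * (i' + 1) = j * i' + i + 2 * j := by ring
      rw [this, pow_add _ _ (2 * j), pow_mul _ 2]; simp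
    have s2 : i + (j+1) * i' = j * i' + (i + i') := by ring
    have s3 : i + j + (i' + j * (i' + e)) = j * i' + (i + i' + (e+1)*j) := by ring
    simp only [add_assoc] at s1 s2 s3 ⊢
    rw [s1, s2, s3]
    abel

/-- twisted tensor product -/
@[reducible] noncomputable def twist {e : ℕ} (hz : z ∈ X.grading e) (dz : X.diff z = 0) (hB : GradedComm ℬ)
    (hδ : IsDer ℬ e δ) : CDGAPack k where
  carrier := GT X.grading ℬ
  grading := tgr X.grading ℬ
  diff := twD X ℬ z δ
  gcomm := tgr_gcomm _ _ X.gcomm hB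
  isdiff := twD_isdiff X ℬ z δ hz dz hδ

lemma diff_isDer (Y : CDGAPack k) : IsDer Y.grading 0 Y.diff where
  deg j b hb := Or.inl ⟨j + 1, rfl, Y.isdiff.grade j b hb⟩
  leib j b hb b' := by simpa using Y.isdiff.leibniz j b b' hb
  sq := Or.inr Y.isdiff.d_sq

/-- tensor product of CDGAs -/
@[reducible] noncomputable def tens (X Y : CDGAPack k) : CDGAPack k :=
  twist X Y.grading 1 Y.diff (one_mem' X) (d_one X) Y.gcomm (diff_isDer Y)

/-- inclusion of the base -/
noncomputable def twInl {e : ℕ} (hz : z ∈ X.grading e) (dz : X.diff z = 0) (hB : GradedComm ℬ)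
    (hδ : IsDer ℬ e δ) (h1 : δ 1 = 0) : Hm X (twist X ℬ z δ hz dz hB hδ) where
  f := GradedTensorProduct.includeLeft X.grading ℬ
  gr i a ha := tm_mem (i := i) (j := 0) (by simp) ha SetLike.GradedOne.one_mem
  ch a := by
    change twD X ℬ z δ (tm X.grading ℬ a 1) = tm X.grading ℬ (X.diff a) 1
    rw [twD_tm, h1]; simp

/-- algebra map out of a tensor product -/
noncomputable def gtLift {A B C : Type} [Ring A] [Algebra k A] [Ring B] [Algebra k B] [Ring C]
   [Algebra k C] {𝒜 : ℕ → Submodule k A} {ℬ : ℕ → Submodule k B} [GradedRing 𝒜] [GradedRing ℬ]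
   (f : A →ₐ[k] C) (g : B →ₐ[k] C)
   (h : ∀ i j, ∀ a ∈ 𝒜 i, ∀ b ∈ ℬ j, g b * f a = ((-1 : k) ^ (j * i)) • (f a * g b)) :
   GT 𝒜 ℬ →ₐ[k] C :=
  AlgHom.ofLinearMap (tlift ((LinearMap.mul k C).compl₁₂ f.toLinearMap g.toLinearMap))
    (by rw [← tm_one, tlift_tm]; simp)
    (by
      intro x y
      refine tm_ind (p := fun x => tlift ((LinearMap.mul k C).compl₁₂ f.toLinearMap g.toLinearMap) (x * y) =
        tlift ((LinearMap.mul k C).compl₁₂ f.toLinearMap g.toLinearMap) x *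
        tlift ((LinearMap.mul k C).compl₁₂ f.toLinearMap g.toLinearMap) y) x (by simp) ?_ ?_
      · intro x x' h1 h2; simp only [add_mul, map_add, h1, h2]
      intro i j a ha b hb
      refine tm_ind (p := fun y => tlift ((LinearMap.mul k C).compl₁₂ f.toLinearMap g.toLinearMap)
          (tm 𝒜 ℬ a b * y) =
        tlift ((LinearMap.mul k C).compl₁₂ f.toLinearMap g.toLinearMap) (tm 𝒜 ℬ a b) *
        tlift ((LinearMap.mul k C).compl₁₂ f.toLinearMap g.toLinearMap) y) y (by simp) ?_ ?_
      · intro x x' h1 h2; simp only [mul_add, map_add, h1, h2]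
      intro i' j' a' ha' b' hb'
      rw [tm_mul a hb ha' b', map_smul, tlift_tm, tlift_tm, tlift_tm]
      simp only [LinearMap.compl₁₂_apply, AlgHom.toLinearMap_apply, LinearMap.mul_apply', map_mul]
      rw [mul_assoc (f a) (g b), ← mul_assoc (g b) (f a'), h i' j a' ha' b hb]
      simp [mul_assoc])

@[simp] lemma gtLift_tm {A B C : Type} [Ring A] [Algebra k A] [Ring B] [Algebra k B] [Ring C]
   [Algebra k C] {𝒜 : ℕ → Submodule k A} {ℬ : ℕ → Submodule k B} [GradedRing 𝒜] [GradedRing ℬ]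
   (f : A →ₐ[k] C) (g : B →ₐ[k] C)
   (h : ∀ i j, ∀ a ∈ 𝒜 i, ∀ b ∈ ℬ j, g b * f a = ((-1 : k) ^ (j * i)) • (f a * g b)) (a : A) (b : B) :
   gtLift f g h (tm 𝒜 ℬ a b) = f a * g b := by
  simp [gtLift]

/-- CDGA map out of a twisted tensor product -/
noncomputable def twLift {e : ℕ} (hz : z ∈ X.grading e) (dz : X.diff z = 0) (hB : GradedComm ℬ)
    (hδ : IsDer ℬ e δ) (Y : CDGAPack k) (f : Hm X Y) (g : B →ₐ[k] Y.carrier)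
    (hg : ∀ j, ∀ b ∈ ℬ j, g b ∈ Y.grading j)
    (hgd : ∀ b, Y.diff (g b) = f.f z * g (δ b)) : Hm (twist X ℬ z δ hz dz hB hδ) Y where
  f := gtLift (𝒜 := X.grading) (ℬ := ℬ) f.f g (fun i j a ha b hb =>
    Y.gcomm.mul_comm j i _ _ (hg j b hb) (f.gr i a ha))
  gr n x hx := by
    refine tgr_ind (𝒜 := X.grading) (ℬ := ℬ) (p := fun x => gtLift (𝒜 := X.grading) (ℬ := ℬ) f.f g _ x ∈ Y.grading n) x hx (by simp) ?_ ?_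
    · intro x y _ _ h1 h2; rw [map_add]; exact Submodule.add_mem _ h1 h2
    · intro i j hij a ha b hb
      rw [gtLift_tm]; exact mul_mem' Y (f.gr i a ha) (hg j b hb) hij
  ch x := by
    refine tm_ind (𝒜 := X.grading) (ℬ := ℬ) (p := fun x => Y.diff (gtLift (𝒜 := X.grading) (ℬ := ℬ) f.f g _ x) =
        gtLift (𝒜 := X.grading) (ℬ := ℬ) f.f g _ (twD X ℬ z δ x)) x (by simp) ?_ ?_
    · intro x y h1 h2; simp only [map_add, h1, h2]
    · intro i j a ha b hb
      rw [twD_tm, map_add, gtLift_tm, gtLift_tm, gtLift_tm, Y.isdiff.leibniz i _ _ (f.gr i a ha),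
        hgd, f.ch, sg_apply _ ha]
      simp [mul_assoc]

lemma twLift_tm {e : ℕ} (hz : z ∈ X.grading e) (dz : X.diff z = 0) (hB : GradedComm ℬ)
    (hδ : IsDer ℬ e δ) (Y : CDGAPack k) (f : Hm X Y) (g : B →ₐ[k] Y.carrier)
    (hg : ∀ j, ∀ b ∈ ℬ j, g b ∈ Y.grading j)
    (hgd : ∀ b, Y.diff (g b) = f.f z * g (δ b)) (a : X.carrier) (b : B) :
    (twLift X ℬ z δ hz dz hB hδ Y f g hg hgd).f (tm X.grading ℬ a b) = f.f a * g b :=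
  gtLift_tm f.f g (fun i j a ha b hb => Y.gcomm.mul_comm j i _ _ (hg j b hb) (f.gr i a ha)) a b

/-- base change map of twisted tensor products -/
noncomputable def twBC {e : ℕ} (hz : z ∈ X.grading e) (dz : X.diff z = 0) (hB : GradedComm ℬ)
    (hδ : IsDer ℬ e δ) (Y : CDGAPack k) (f : Hm X Y) (z' : Y.carrier) (hz' : z' ∈ Y.grading e)
    (dz' : Y.diff z' = 0) (hzz : f.f z = z') :
    Hm (twist X ℬ z δ hz dz hB hδ) (twist Y ℬ z' δ hz' dz' hB hδ) where
  f := gtLift (𝒜 := X.grading) (ℬ := ℬ)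
      (C := GT Y.grading ℬ)
      ((GradedTensorProduct.includeLeft Y.grading ℬ).comp f.f)
      (GradedTensorProduct.includeRight Y.grading ℬ) (fun i j a ha b hb => by
        change tm Y.grading ℬ 1 b * tm Y.grading ℬ (f.f a) 1 =
          ((-1 : k) ^ (j * i)) • (tm Y.grading ℬ (f.f a) 1 * tm Y.grading ℬ 1 b)
        rw [tm_mul 1 hb (f.gr i a ha) 1, tm_one_mul]; simp)
  gr n x hx := by
    refine tgr_ind (𝒜 := X.grading) (ℬ := ℬ) (p := fun x => gtLift (𝒜 := X.grading) (ℬ := ℬ) _ _ _ x ∈ tgr Y.grading ℬ n) x hx (by simp) ?_ ?_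
    · intro x y _ _ h1 h2; rw [map_add]; exact Submodule.add_mem _ h1 h2
    · intro i j hij a ha b hb
      rw [gtLift_tm]
      change tm Y.grading ℬ (f.f a) 1 * tm Y.grading ℬ 1 b ∈ _
      rw [tm_one_mul, mul_one]
      exact tm_mem hij (f.gr i a ha) hb
  ch x := by
    refine tm_ind (𝒜 := X.grading) (ℬ := ℬ) (p := fun x => twD Y ℬ z' δ (gtLift (𝒜 := X.grading) (ℬ := ℬ) _ _ _ x) =
        gtLift (𝒜 := X.grading) (ℬ := ℬ) _ _ _ (twD X ℬ z δ x)) x (by simp) ?_ ?_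
    · intro x y h1 h2; simp only [map_add, h1, h2]
    · intro i j a ha b hb
      rw [twD_tm, map_add, gtLift_tm, gtLift_tm, gtLift_tm]
      change twD Y ℬ z' δ (tm Y.grading ℬ (f.f a) 1 * tm Y.grading ℬ 1 b) =
        tm Y.grading ℬ (f.f _) 1 * tm Y.grading ℬ 1 b + tm Y.grading ℬ (f.f _) 1 * tm Y.grading ℬ 1 _
      simp only [tm_one_mul, mul_one]
      rw [twD_tm, f.ch, map_mul, hzz, sg_f]

lemma twBC_tm {e : ℕ} (hz : z ∈ X.grading e) (dz : X.diff z = 0) (hB : GradedComm ℬ)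
    (hδ : IsDer ℬ e δ) (Y : CDGAPack k) (f : Hm X Y) (z' : Y.carrier) (hz' : z' ∈ Y.grading e)
    (dz' : Y.diff z' = 0) (hzz : f.f z = z') (a : X.carrier) (b : B) :
    (twBC X ℬ z δ hz dz hB hδ Y f z' hz' dz' hzz).f (tm X.grading ℬ a b) = tm Y.grading ℬ (f.f a) b := by
  unfold twBC
  rw [gtLift_tm]
  change tm Y.grading ℬ (f.f a) 1 * tm Y.grading ℬ 1 b = _
  rw [tm_one_mul, mul_one]
end twist

section tens
variable {k : Type} [Field k] 

lemma tens_diff (X Y : CDGAPack k) (a : X.carrier) (b : Y.carrier) :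
    (tens X Y).diff (tm X.grading Y.grading a b) = tm X.grading Y.grading (X.diff a) b +
      tm X.grading Y.grading (sg X.grading a) (Y.diff b) := by
  refine (twD_tm X Y.grading 1 Y.diff a b).trans ?_
  rw [mul_one]

/-- left inclusion -/
noncomputable def inl (X Y : CDGAPack k) : Hm X (tens X Y) :=
  twInl X Y.grading 1 Y.diff (one_mem' X) (d_one X) Y.gcomm (diff_isDer Y) (d_one Y)

lemma inl_f (X Y : CDGAPack k) (a : X.carrier) : (inl X Y).f a = tm X.grading Y.grading a 1 := rfl

/-- right inclusion -/
noncomputable def inr (X Y : CDGAPack k) : Hm Y (tens X Y) where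
  f := GradedTensorProduct.includeRight X.grading Y.grading
  gr i a ha := tm_mem (i := 0) (j := i) (by simp) SetLike.GradedOne.one_mem ha
  ch a := by
    refine (tens_diff X Y 1 a).trans ?_
    rw [d_one, sg_apply _ (one_mem' X)]; simp; rfl

lemma inr_f (X Y : CDGAPack k) (a : Y.carrier) : (inr X Y).f a = tm X.grading Y.grading 1 a := rfl

/-- map out of the tensor product -/
noncomputable def tlft {X Y Z : CDGAPack k} (f : Hm X Z) (g : Hm Y Z) : Hm (tens X Y) Z :=
  twLift X Y.grading 1 Y.diff (one_mem' X) (d_one X) Y.gcomm (diff_isDer Y) Z f g.f g.gr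
    (fun b => by rw [g.ch]; simp)

lemma tlft_tm {X Y Z : CDGAPack k} (f : Hm X Z) (g : Hm Y Z) (a : X.carrier) (b : Y.carrier) :
    (tlft f g).f (tm X.grading Y.grading a b) = f.f a * g.f b :=
  twLift_tm X Y.grading 1 Y.diff (one_mem' X) (d_one X) Y.gcomm (diff_isDer Y) Z f g.f g.gr _ a b

lemma tlft_inl {X Y Z : CDGAPack k} (f : Hm X Z) (g : Hm Y Z) : (tlft f g).comp (inl X Y) = f := by
  apply Hm.ext'; intro a
  rw [Hm.comp_f, inl_f, tlft_tm]; simp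

lemma tlft_inr {X Y Z : CDGAPack k} (f : Hm X Z) (g : Hm Y Z) : (tlft f g).comp (inr X Y) = g := by
  apply Hm.ext'; intro a
  rw [Hm.comp_f, inr_f, tlft_tm]; simp

/-- swap -/
noncomputable def swp (X Y : CDGAPack k) : Hm (tens X Y) (tens Y X) := tlft (inr Y X) (inl Y X)

lemma swp_inl (X Y : CDGAPack k) : (swp X Y).comp (inl X Y) = inr Y X := tlft_inl _ _
lemma swp_inr (X Y : CDGAPack k) : (swp X Y).comp (inr X Y) = inl Y X := tlft_inr _ _

lemma tens_ext {X Y Z : CDGAPack k} {f g : Hm (tens X Y) Z}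
    (h1 : f.comp (inl X Y) = g.comp (inl X Y)) (h2 : f.comp (inr X Y) = g.comp (inr X Y)) : f = g := by
  apply Hm.ext'
  intro x
  refine tm_ind (𝒜 := X.grading) (ℬ := Y.grading) (p := fun x => f.f x = g.f x) x (by simp) ?_ ?_
  · intro x y h1 h2
    rw [map_add, h1, h2, map_add]
  · intro i j a ha b hb
    have e : tm X.grading Y.grading a b = tm X.grading Y.grading a 1 * tm X.grading Y.grading 1 b := by
      rw [tm_one_mul, mul_one]
    have e1 : f.f (tm X.grading Y.grading a 1) = g.f (tm X.grading Y.grading a 1) :=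
      congrArg (fun t : Hm X Z => t.f a) h1
    have e2 : f.f (tm X.grading Y.grading 1 b) = g.f (tm X.grading Y.grading 1 b) :=
      congrArg (fun t : Hm Y Z => t.f b) h2
    rw [e]
    refine (map_mul f.f _ _).trans (Eq.trans ?_ (map_mul g.f _ _).symm)
    rw [e1, e2]

lemma comp_assoc' {X Y Z W : CDGAPack k} (f : Hm X Y) (g : Hm Y Z) (h : Hm Z W) :
    (h.comp g).comp f = h.comp (g.comp f) := rfl

lemma swp_swp (X Y : CDGAPack k) : (swp Y X).comp (swp X Y) = Hm.id _ := by
  apply tens_ext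
  · rw [comp_assoc', swp, swp, tlft_inl, tlft_inr]; rfl
  · rw [comp_assoc', swp, swp, tlft_inr, tlft_inl]; rfl

/-- tensor product of maps -/
noncomputable def tensMap {X Y X' Y' : CDGAPack k} (f : Hm X X') (g : Hm Y Y') : Hm (tens X Y) (tens X' Y') :=
  tlft ((inl X' Y').comp f) ((inr X' Y').comp g)

/-- one sided -/
noncomputable def tensL {X X' : CDGAPack k} (f : Hm X X') (Y : CDGAPack k) : Hm (tens X Y) (tens X' Y) :=
  twBC X Y.grading 1 Y.diff (one_mem' X) (d_one X) Y.gcomm (diff_isDer Y) X' f 1 (one_mem' X') (d_one X')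
    (map_one _)

lemma tensMap_eq {X Y X' Y' : CDGAPack k} (f : Hm X X') (g : Hm Y Y') :
    tensMap f g = (swp Y' X').comp ((tensL g X').comp ((swp X' Y).comp (tensL f Y))) := by
  have hl : ∀ {X X' : CDGAPack k} (f : Hm X X') (Y : CDGAPack k), (tensL f Y).comp (inl X Y) = (inl X' Y).comp f := by
    intro X X' f Y; apply Hm.ext'; intro a; exact twBC_tm X Y.grading 1 Y.diff (one_mem' X) (d_one X) Y.gcomm (diff_isDer Y) X' f 1 (one_mem' X') (d_one X')
      (map_one _) a 1
  have hr : ∀ {X X' : CDGAPack k} (f : Hm X X') (Y : CDGAPack k), (tensL f Y).comp (inr X Y) = (inr X' Y) := by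
    intro X X' f Y; apply Hm.ext'; intro a
    refine (twBC_tm X Y.grading 1 Y.diff (one_mem' X) (d_one X) Y.gcomm (diff_isDer Y) X' f 1 (one_mem' X') (d_one X')
      (map_one _) 1 a).trans ?_
    rw [map_one]; rfl
  apply tens_ext
  · rw [tensMap, tlft_inl, comp_assoc', comp_assoc', comp_assoc', hl, ← comp_assoc' f (inl X' Y) (swp X' Y), swp_inl,
      ← comp_assoc' _ _ (tensL g X'), hr, ← comp_assoc' f, swp_inr]
  · rw [tensMap, tlft_inr, comp_assoc', comp_assoc', comp_assoc', hr, swp_inr, hl, ← comp_assoc' g, swp_inl]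
end tens
end PDCDGA

namespace PDCDGA
open DirectSum TensorProduct

section sqz
variable {k : Type} [Field k] {ι : Type} 

/-- square zero extension -/
abbrev SQ (k : Type) [Field k] (ι : Type) : Type := TrivSqZeroExt k (ι → k)

lemma SQ.ext' {x y : SQ k ι} (h1 : x.fst = y.fst) (h2 : ∀ t, x.snd t = y.snd t) : x = y :=
  TrivSqZeroExt.ext h1 (funext h2)

lemma SQ.snd_mul' (x y : SQ k ι) (t : ι) : (x * y).snd t = x.fst * y.snd t + y.fst * x.snd t := by
  rw [TrivSqZeroExt.snd_mul]; simp

/-- grading -/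
def sqgr (dg : ι → ℕ) (n : ℕ) : Submodule k (SQ k ι) where
  carrier := {x | (n ≠ 0 → x.fst = 0) ∧ ∀ t, dg t ≠ n → x.snd t = 0}
  add_mem' := by
    rintro x y ⟨h1, h2⟩ ⟨h3, h4⟩
    exact ⟨fun h => by simp [h1 h, h3 h], fun t h => by simp [h2 t h, h4 t h]⟩
  zero_mem' := ⟨fun _ => rfl, fun _ _ => rfl⟩
  smul_mem' := by
    rintro c x ⟨h1, h2⟩
    exact ⟨fun h => by simp [h1 h], fun t h => by simp [h2 t h]⟩

lemma mem_sqgr (dg : ι → ℕ) (n : ℕ) (x : SQ k ι) :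
    x ∈ sqgr dg n ↔ (n ≠ 0 → x.fst = 0) ∧ ∀ t, dg t ≠ n → x.snd t = 0 := Iff.rfl

/-- projection -/
noncomputable def sqpr (dg : ι → ℕ) (n : ℕ) : SQ k ι →ₗ[k] SQ k ι where
  toFun x := TrivSqZeroExt.inl (if n = 0 then x.fst else 0) +
    TrivSqZeroExt.inr (fun t => if dg t = n then x.snd t else 0)
  map_add' x y := by
    apply SQ.ext'
    · simp; split_ifs <;> simp
    · intro t; simp; split_ifs <;> simp
  map_smul' c x := by
    apply SQ.ext'
    · simp
    · intro t; simp

lemma sqpr_fst (dg : ι → ℕ) (n : ℕ) (x : SQ k ι) : (sqpr dg n x).fst = if n = 0 then x.fst else 0 := by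
  simp [sqpr]
lemma sqpr_snd (dg : ι → ℕ) (n : ℕ) (x : SQ k ι) (t : ι) :
    (sqpr dg n x).snd t = if dg t = n then x.snd t else 0 := by
  simp [sqpr]

lemma sum_fst {κ : Type} (s : Finset κ) (f : κ → SQ k ι) : (∑ i ∈ s, f i).fst = ∑ i ∈ s, (f i).fst := by
  classical
  induction s using Finset.induction_on with
  | empty => rfl
  | insert a s ha ih => rw [Finset.sum_insert ha, Finset.sum_insert ha, TrivSqZeroExt.fst_add, ih]

lemma sum_snd {κ : Type} (s : Finset κ) (f : κ → SQ k ι) (t : ι) : (∑ i ∈ s, f i).snd t = ∑ i ∈ s, (f i).snd t := by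
  classical
  induction s using Finset.induction_on with
  | empty => rfl
  | insert a s ha ih => rw [Finset.sum_insert ha, Finset.sum_insert ha, TrivSqZeroExt.snd_add, Pi.add_apply, ih]

@[reducible] noncomputable def sqGraded [Finite ι] (dg : ι → ℕ) (hd : ∀ t, 0 < dg t) :
    GradedRing (sqgr (k := k) dg) := by
  refine mkGraded (k := k) (A := SQ k ι) (sqgr dg) (sqpr dg) ?_ ?_ ?_ ?_ ?_
  · rintro i a ⟨h1, h2⟩
    apply SQ.ext'
    · rw [sqpr_fst]; split_ifs with h
      · rfl
      · exact (h1 h).symm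
    · intro t; rw [sqpr_snd]; split_ifs with h
      · rfl
      · exact (h2 t h).symm
  · rintro i j hij a ⟨h1, h2⟩
    apply SQ.ext'
    · rw [sqpr_fst]; split_ifs with h
      · exact h1 (by omega)
      · rfl
    · intro t; rw [sqpr_snd]; split_ifs with h
      · exact h2 t (by omega)
      · rfl
  · rw [eq_top_iff]
    intro x _
    have hfin : (Set.range dg).Finite := Set.finite_range dg
    obtain ⟨N, hN⟩ := hfin.bddAbove
    have : x = ∑ i ∈ Finset.range (N+1), sqpr dg i x := by
      apply SQ.ext'
      · rw [sum_fst]; simp [sqpr_fst]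
      · intro t; rw [sum_snd]; simp only [sqpr_snd]
        rw [Finset.sum_ite_eq, if_pos]
        have := hN ⟨t, rfl⟩
        simp; omega
    rw [this]
    refine Submodule.sum_mem _ fun i _ => Submodule.mem_iSup_of_mem i ?_
    constructor
    · intro h; simp [sqpr_fst, h]
    · intro t h; simp [sqpr_snd, h]
  · exact ⟨fun h => absurd rfl h, fun t h => rfl⟩
  · rintro i j a b ⟨h1, h2⟩ ⟨h3, h4⟩
    constructor
    · intro h
      rw [TrivSqZeroExt.fst_mul]
      rcases Nat.eq_zero_or_pos i with hi | hi
      · rw [h3 (by omega), mul_zero]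
      · rw [h1 (by omega), zero_mul]
    · intro t ht
      rw [SQ.snd_mul']
      have e1 : a.fst * b.snd t = 0 := by
        by_cases hi : i = 0
        · rw [h4 t (by omega), mul_zero]
        · rw [h1 hi, zero_mul]
      have e2 : b.fst * a.snd t = 0 := by
        by_cases hi : j = 0
        · rw [h2 t (by omega), mul_zero]
        · rw [h3 hi, zero_mul]
      rw [e1, e2, add_zero]

lemma sq_deg0 {dg : ι → ℕ} (hd : ∀ t, 0 < dg t) {x : SQ k ι} (hx : x ∈ sqgr dg 0) : x = x.fst • 1 := by
  apply SQ.ext'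
  · simp
  · intro t; rw [hx.2 t (by have := hd t; omega)]; simp

lemma sq_mul_zero {dg : ι → ℕ} {i j : ℕ} (hi : i ≠ 0) (hj : j ≠ 0) {x y : SQ k ι}
    (hx : x ∈ sqgr dg i) (hy : y ∈ sqgr dg j) : x * y = 0 := by
  apply SQ.ext'
  · simp [hx.1 hi]
  · intro t; rw [SQ.snd_mul', hx.1 hi, hy.1 hj]; simp

lemma sq_gcomm (dg : ι → ℕ) (hd : ∀ t, 0 < dg t) : GradedComm (sqgr (k := k) dg) where
  mul_comm i j a b ha hb := by
    by_cases hi : i = 0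
    · subst hi; rw [sq_deg0 hd ha]; simp
    · by_cases hj : j = 0
      · subst hj; rw [sq_deg0 hd hb]; simp
      · rw [sq_mul_zero hi hj ha hb, sq_mul_zero hj hi hb ha]; simp
  odd_sq i hi a ha := by
    have : i ≠ 0 := by rintro rfl; simp at hi
    exact sq_mul_zero this this ha ha

lemma sq_fd [Finite ι] : FiniteDimensional k (SQ k ι) := by
  let F : (k × (ι → k)) →ₗ[k] SQ k ι :=
    { toFun := fun p => TrivSqZeroExt.inl p.1 + TrivSqZeroExt.inr p.2
      map_add' := fun x y => by apply SQ.ext' <;> simp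
      map_smul' := fun c x => by apply SQ.ext' <;> simp }
  exact Module.Finite.of_surjective F (fun x => ⟨(x.fst, x.snd), by apply SQ.ext' <;> simp [F]⟩)
end sqz

section gens
variable (k : Type) [Field k]

/-- Free graded commutative algebra on one generator of degree `q`, packaged with what we need. -/
structure GenD (q : ℕ) where
  B : Type
  [ringI : Ring B]
  [algI : Algebra k B]
  gr : ℕ → Submodule k B
  [gradedI : GradedRing gr]
  gc : GradedComm gr
  δ : B →ₗ[k] B
  der : IsDer gr (q + 1) δ
  v : B
  hv : v ∈ gr q
  δv : δ v = 1
  δ1 : δ 1 = 0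
  deg0 : ∀ b ∈ gr 0, ∃ c : k, b = c • (1 : B)
  low : ∀ i, 0 < i → i < q → gr i = ⊥
  top : ∀ b ∈ gr q, ∃ c : k, b = c • v
  top1 : gr (q + 1) = ⊥
  ft : ∀ i, FiniteDimensional k (gr i)
  lft : ∀ (Y : CDGAPack k) (s : Y.carrier), s ∈ Y.grading q → ∃ g : B →ₐ[k] Y.carrier,
    (∀ j, ∀ b ∈ gr j, g b ∈ Y.grading j) ∧ g v = s ∧ ∀ b, Y.diff (g b) = Y.diff s * g (δ b)

attribute [instance] GenD.ringI GenD.algI GenD.gradedI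

variable {k}

/-- odd generator derivative -/
noncomputable def oddDer : SQ k Unit →ₗ[k] SQ k Unit where
  toFun x := TrivSqZeroExt.inl (x.snd ())
  map_add' x y := by apply SQ.ext' <;> simp
  map_smul' c x := by apply SQ.ext' <;> simp

lemma exists_gen_odd (q : ℕ) (hq : 2 ≤ q) (ho : Odd q) : Nonempty (GenD k q) := by
  have hd : ∀ t : Unit, 0 < (fun _ : Unit => q) t := fun _ => by simp; omega
  letI := sqGraded (k := k) (fun _ : Unit => q) hd
  have hq0 : q ≠ 0 := by omega
  have δf : ∀ x : SQ k Unit, (oddDer x).fst = x.snd () := fun _ => rfl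
  have δs : ∀ (x : SQ k Unit) t, (oddDer x).snd t = 0 := fun _ _ => rfl
  refine ⟨{ B := SQ k Unit, gr := sqgr (fun _ : Unit => q), gc := sq_gcomm _ hd, δ := oddDer,
            der := ?_, v := TrivSqZeroExt.inr (fun _ => 1), hv := ?_, δv := ?_, δ1 := ?_,
            deg0 := ?_, low := ?_, top := ?_, top1 := ?_, ft := ?_, lft := ?_ }⟩
  · refine ⟨?_, ?_, ?_⟩
    · rintro j b ⟨h1, h2⟩
      by_cases hj : j = q
      · left
        refine ⟨0, by omega, fun h => absurd rfl h, fun t _ => rfl⟩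
      · right
        apply SQ.ext'
        · rw [δf, h2 () (fun h => hj h.symm)]; rfl
        · intro t; rfl
    · rintro j b hb b'
      have s : (-1 : k) ^ ((q + 1 + 1) * j) = (-1 : k) ^ j := by
        rw [pow_mul, (by simpa using ho.add_one.add_one : Odd (q + 1 + 1)).neg_one_pow]
      rw [s]
      by_cases hj : j = 0
      · subst hj; rw [sq_deg0 hd hb]
        apply SQ.ext'
        · simp [δf]
        · intro t; simp [δs, δf, SQ.snd_mul']
      · have hb1 := hb.1 hj
        apply SQ.ext'
        · simp [δf, SQ.snd_mul', hb1, mul_comm]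
        · rintro ⟨⟩
          rw [δs, TrivSqZeroExt.snd_add, Pi.add_apply, SQ.snd_mul', δf, δs, TrivSqZeroExt.snd_smul,
            Pi.smul_apply, SQ.snd_mul', δf, hb1]
          by_cases hjq : j = q
          · subst hjq; rw [ho.neg_one_pow]; simp; ring
          · rw [hb.2 () (fun h => hjq h.symm)]; simp
    · right; intro b; apply SQ.ext'
      · rw [δf, δs]; rfl
      · intro t; rfl
  · exact ⟨fun _ => rfl, fun t h => absurd rfl h⟩
  · rfl
  · apply SQ.ext'
    · rfl
    · intro t; rfl
  · intro b hb; exact ⟨_, sq_deg0 hd hb⟩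
  · intro i hi hiq
    rw [eq_bot_iff]; rintro b ⟨h1, h2⟩
    apply SQ.ext' (h1 (by omega))
    intro t; exact h2 t (by simp; omega)
  · rintro b ⟨h1, h2⟩
    refine ⟨b.snd (), SQ.ext' ?_ ?_⟩
    · simp [h1 hq0]
    · rintro ⟨⟩; simp
  · rw [eq_bot_iff]; rintro b ⟨h1, h2⟩
    apply SQ.ext' (h1 (by omega))
    intro t; exact h2 t (by simp)
  · intro i
    have := sq_fd (k := k) (ι := Unit)
    infer_instance
  · intro Y s hs
    have hss : s * s = 0 := Y.gcomm.odd_sq q ho s hs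
    let g : SQ k Unit →ₐ[k] Y.carrier := AlgHom.ofLinearMap
      { toFun := fun x => x.fst • (1 : Y.carrier) + x.snd () • s
        map_add' := fun x y => by simp [add_smul]; abel
        map_smul' := fun c x => by simp [mul_smul, smul_add] }
      (by simp)
      (by
        intro x y
        simp only [LinearMap.coe_mk, AddHom.coe_mk, TrivSqZeroExt.fst_mul, SQ.snd_mul', add_mul, mul_add,
          smul_mul_assoc, mul_smul_comm, hss, smul_zero, one_mul, mul_one, add_zero, smul_smul, add_smul]
        module)
    have gd : ∀ x, g x = x.fst • (1 : Y.carrier) + x.snd () • s := fun _ => rfl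
    refine ⟨g, ?_, ?_, ?_⟩
    · rintro j b ⟨h1, h2⟩
      rw [gd]
      by_cases hj : j = 0
      · subst hj; rw [h2 () hq0, zero_smul, add_zero]; exact Submodule.smul_mem _ _ (one_mem' Y)
      · rw [h1 hj]
        by_cases hjq : j = q
        · subst hjq; simpa using Submodule.smul_mem _ _ hs
        · rw [h2 () (fun h => hjq h.symm)]; simp
    · rw [gd]; simp
    · intro b; rw [gd, gd, δf, δs, map_add, map_smul, map_smul, d_one]; simp

/-- grading on polynomials -/
noncomputable def pgr (q n : ℕ) : Submodule k (Polynomial k) :=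
  Submodule.span k {p | ∃ m, q * m = n ∧ p = Polynomial.X ^ m}

lemma mem_pgr {q n : ℕ} (hq : 0 < q) {p : Polynomial k} (hp : p ∈ pgr q n) :
    p = 0 ∨ ∃ m c, q * m = n ∧ p = Polynomial.C c * Polynomial.X ^ m := by
  refine Submodule.span_induction (p := fun p _ => p = 0 ∨ ∃ m c, q * m = n ∧ p = Polynomial.C c * Polynomial.X ^ m)
    ?_ ?_ ?_ ?_ hp
  · rintro _ ⟨m, h, rfl⟩; right; exact ⟨m, 1, h, by simp⟩
  · left; rfl
  · rintro x y _ _ (rfl | ⟨m, c, h, rfl⟩) (rfl | ⟨m', c', h', rfl⟩)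
    · left; simp
    · right; exact ⟨m', c', h', by simp⟩
    · right; exact ⟨m, c, h, by simp⟩
    · right
      have : m = m' := Nat.eq_of_mul_eq_mul_left hq (h.trans h'.symm)
      subst this
      exact ⟨m, c + c', h, by simp [add_mul]⟩
  · rintro a x _ (rfl | ⟨m, c, h, rfl⟩)
    · left; simp
    · right; exact ⟨m, a * c, h, by rw [Polynomial.smul_eq_C_mul]; simp [mul_assoc]⟩

lemma mon_mem_pgr {q n m : ℕ} (c : k) (h : q * m = n) :
    Polynomial.C c * Polynomial.X ^ m ∈ pgr (k := k) q n := by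
  rw [← Polynomial.smul_eq_C_mul]
  exact Submodule.smul_mem _ _ (Submodule.subset_span ⟨m, h, rfl⟩)

/-- projection -/
noncomputable def ppr (q n : ℕ) : Polynomial k →ₗ[k] Polynomial k :=
  if q ∣ n then (Polynomial.monomial (n / q)) ∘ₗ Polynomial.lcoeff k (n / q) else 0

lemma ppr_mon {q n m : ℕ} (hq : 0 < q) (c : k) :
    ppr q n (Polynomial.C c * Polynomial.X ^ m) = if q * m = n then Polynomial.C c * Polynomial.X ^ m else 0 := by
  unfold ppr
  split_ifs with h1 h2 h2
  · subst h2
    rw [Nat.mul_div_cancel_left _ hq]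
    simp [Polynomial.C_mul_X_pow_eq_monomial]
  · obtain ⟨r, rfl⟩ := h1
    rw [Nat.mul_div_cancel_left _ hq]
    have : r ≠ m := by rintro rfl; exact h2 rfl
    simp [Polynomial.coeff_X_pow, this]
  · exact absurd ⟨m, h2.symm⟩ h1
  · simp

@[reducible] noncomputable def pGraded (q : ℕ) (hq : 0 < q) : GradedRing (pgr (k := k) q) := by
  refine mkGraded (k := k) (A := Polynomial k) (pgr q) (ppr q) ?_ ?_ ?_ ?_ ?_
  · intro i a ha
    rcases mem_pgr hq ha with rfl | ⟨m, c, h, rfl⟩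
    · simp
    · rw [ppr_mon hq, if_pos h]
  · intro i j hij a ha
    rcases mem_pgr hq ha with rfl | ⟨m, c, h, rfl⟩
    · simp
    · rw [ppr_mon hq, if_neg (by omega)]
  · rw [eq_top_iff]
    intro p _
    rw [p.as_sum_range_C_mul_X_pow]
    exact Submodule.sum_mem _ fun i _ => Submodule.mem_iSup_of_mem (q * i) (mon_mem_pgr _ rfl)
  · have := mon_mem_pgr (q := q) (n := 0) (m := 0) (1 : k) rfl
    simpa using this
  · intro i j a b ha hb
    rcases mem_pgr hq ha with rfl | ⟨m, c, h, rfl⟩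
    · simp
    rcases mem_pgr hq hb with rfl | ⟨m', c', h', rfl⟩
    · simp
    have : Polynomial.C c * Polynomial.X ^ m * (Polynomial.C c' * Polynomial.X ^ m') =
      Polynomial.C (c * c') * Polynomial.X ^ (m + m') := by rw [map_mul]; ring
    rw [this]
    exact mon_mem_pgr _ (by rw [mul_add]; omega)

lemma pow_d (Y : CDGAPack k) {q : ℕ} (he : Even q) (s : Y.carrier) (hs : s ∈ Y.grading q) (m : ℕ) :
    Y.diff (s ^ (m + 1)) = ((m + 1 : ℕ) : k) • (Y.diff s * s ^ m) := by
  induction m with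
  | zero => simp
  | succ m ih =>
    have hsm : s ^ (m + 1) ∈ Y.grading ((m + 1) • q) := SetLike.pow_mem_graded (m+1) hs
    have hc : s ^ (m + 1) * Y.diff s = Y.diff s * s ^ (m + 1) := by
      rw [Y.gcomm.mul_comm _ _ _ _ hsm (Y.isdiff.grade q s hs)]
      have : Even ((m + 1) • q * (q + 1)) := by
        simp [Nat.even_mul, he]
      rw [this.neg_one_pow, one_smul]
    rw [pow_succ, Y.isdiff.leibniz _ _ s hsm, ih, hc]
    have : Even ((m + 1) • q) := by simp [Nat.even_mul, he]
    rw [this.neg_one_pow, one_smul, smul_mul_assoc, mul_assoc, ← pow_succ]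
    push_cast
    module

lemma exists_gen_even (q : ℕ) (hq : 2 ≤ q) (he : Even q) : Nonempty (GenD k q) := by
  have hq0 : 0 < q := by omega
  letI := pGraded (k := k) q hq0
  have hev : ∀ i, ∀ a ∈ pgr (k := k) q i, a = 0 ∨ Even i := by
    intro i a ha
    rcases mem_pgr hq0 ha with rfl | ⟨m, c, h, rfl⟩
    · exact Or.inl rfl
    · right; rw [← h]; exact he.mul_right m
  refine ⟨{ B := Polynomial k, gr := pgr q, gc := ?_, δ := Polynomial.derivative,
            der := ?_, v := Polynomial.X, hv := ?_, δv := ?_, δ1 := ?_,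
            deg0 := ?_, low := ?_, top := ?_, top1 := ?_, ft := ?_, lft := ?_ }⟩
  · refine ⟨?_, ?_⟩
    · intro i j a b ha hb
      rcases hev i a ha with rfl | h
      · simp
      · rw [(h.mul_right j).neg_one_pow, one_smul, mul_comm]
    · intro i hi a ha
      rcases hev i a ha with rfl | h
      · simp
      · exact absurd h (by simpa using hi)
  · refine ⟨?_, ?_, ?_⟩
    · intro j b hb
      rcases mem_pgr hq0 hb with rfl | ⟨m, c, h, rfl⟩
      · right; simp
      · rcases m with _ | m
        · right; simp
        · left
          refine ⟨q * m, by rw [← h]; ring, ?_⟩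
          rw [Polynomial.derivative_C_mul_X_pow]
          exact mon_mem_pgr _ rfl
    · intro j b hb b'
      have : Even ((q + 1 + 1) * j) := by
        have : Even (q + 1 + 1) := by simpa [parity_simps] using he
        exact this.mul_right j
      rw [this.neg_one_pow, one_smul, Polynomial.derivative_mul]
    · left; exact he.add_one
  · have := mon_mem_pgr (q := q) (n := q) (m := 1) (1 : k) (by simp)
    simpa using this
  · simp
  · simp
  · intro b hb
    rcases mem_pgr hq0 hb with rfl | ⟨m, c, h, rfl⟩
    · exact ⟨0, by simp⟩
    · have : m = 0 := by
        rcases Nat.mul_eq_zero.mp h with h | h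
        · omega
        · exact h
      subst this
      exact ⟨c, by simp [Polynomial.smul_eq_C_mul]⟩
  · intro i h1 h2
    rw [eq_bot_iff]; intro b hb
    rcases mem_pgr hq0 hb with rfl | ⟨m, c, h, rfl⟩
    · simp
    · rcases m with _ | m
      · simp at h; omega
      · have := Nat.le_mul_of_pos_right q (Nat.succ_pos m); simp at *; omega
  · intro b hb
    rcases mem_pgr hq0 hb with rfl | ⟨m, c, h, rfl⟩
    · exact ⟨0, by simp⟩
    · have : m = 1 := Nat.eq_of_mul_eq_mul_left hq0 (by omega)
      subst this
      exact ⟨c, by simp [Polynomial.smul_eq_C_mul]⟩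
  · rw [eq_bot_iff]; intro b hb
    rcases mem_pgr hq0 hb with rfl | ⟨m, c, h, rfl⟩
    · simp
    · exfalso
      rcases m with _ | _ | m
      · simp at h
      · simp at h
      · have : q * (m + 1 + 1) = q * m + q + q := by ring
        omega
  · intro i
    apply FiniteDimensional.span_of_finite
    apply Set.Subsingleton.finite
    rintro _ ⟨m, h, rfl⟩ _ ⟨m', h', rfl⟩
    rw [Nat.eq_of_mul_eq_mul_left hq0 (h.trans h'.symm)]
  · intro Y s hs
    refine ⟨Polynomial.aeval s, ?_, by simp, ?_⟩
    · intro j b hb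
      rcases mem_pgr hq0 hb with rfl | ⟨m, c, h, rfl⟩
      · simp
      · have := SetLike.pow_mem_graded m hs
        rw [map_mul, Polynomial.aeval_C, map_pow, Polynomial.aeval_X, ← Algebra.smul_def]
        apply Submodule.smul_mem
        rw [← h, mul_comm]; exact this
    · intro b
      induction b using Polynomial.induction_on' with
      | add p q hp hq => simp [hp, hq, mul_add]
      | monomial m c =>
        rw [Polynomial.derivative_monomial, ← Polynomial.C_mul_X_pow_eq_monomial, ← Polynomial.C_mul_X_pow_eq_monomial]
        rw [← Polynomial.smul_eq_C_mul, ← Polynomial.smul_eq_C_mul]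
        simp only [map_pow, Polynomial.aeval_X, map_smul, mul_smul_comm]
        rcases m with _ | m
        · simp [d_one]
        · rw [pow_d Y he s hs, smul_smul]
          simp

lemma exists_gen (q : ℕ) (hq : 2 ≤ q) : Nonempty (GenD k q) := by
  rcases Nat.even_or_odd q with h | h
  · exact exists_gen_even q hq h
  · exact exists_gen_odd q hq h

/-- a chosen generator -/
noncomputable def gen (k : Type) [Field k] (q : ℕ) (hq : 2 ≤ q) : GenD k q := Classical.choice (exists_gen q hq)
end gens
end PDCDGA

namespace PDCDGA
open DirectSum TensorProduct

section lo
variable {k : Type} [Field k] {A : Type} [Ring A] [Algebra k A] (𝒜 : ℕ → Submodule k A) [GradedRing 𝒜]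

/-- elements of degree `< m` -/
noncomputable def lo (m : ℕ) : Submodule k A := ⨅ i : {i : ℕ // m ≤ i}, LinearMap.ker (pr 𝒜 i.1)

lemma mem_lo {m : ℕ} {a : A} : a ∈ lo 𝒜 m ↔ ∀ i, m ≤ i → pr 𝒜 i a = 0 := by
  unfold lo
  rw [Submodule.mem_iInf]
  exact ⟨fun h i hi => h ⟨i, hi⟩, fun h i => h i.1 i.2⟩

lemma lo_mono {m m' : ℕ} (h : m ≤ m') : lo 𝒜 m ≤ lo 𝒜 m' := by
  intro a ha
  rw [mem_lo] at ha ⊢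
  exact fun i hi => ha i (h.trans hi)

lemma lo_zero {a : A} (ha : a ∈ lo 𝒜 0) : a = 0 := by
  rw [mem_lo] at ha
  obtain ⟨N, h, _⟩ := sum_pr 𝒜 a
  rw [h]; exact Finset.sum_eq_zero fun i _ => ha i (Nat.zero_le _)

lemma hom_lo {i m : ℕ} (h : i < m) {a : A} (ha : a ∈ 𝒜 i) : a ∈ lo 𝒜 m := by
  rw [mem_lo]; intro j hj; exact pr_ne 𝒜 ha (by omega)

/-- truncation -/
noncomputable def tr (m : ℕ) : A →ₗ[k] A := ∑ i ∈ Finset.range m, pr 𝒜 i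

lemma tr_mem (m : ℕ) (a : A) : tr 𝒜 m a ∈ lo 𝒜 m := by
  rw [tr, LinearMap.sum_apply]
  refine Submodule.sum_mem _ fun i hi => ?_
  exact hom_lo 𝒜 (Finset.mem_range.1 hi) (pr_mem 𝒜 i a)

lemma tr_lo {m : ℕ} {a : A} (ha : a ∈ lo 𝒜 m) : tr 𝒜 m a = a := by
  rw [mem_lo] at ha
  rw [tr, LinearMap.sum_apply]
  obtain ⟨N, h, h'⟩ := sum_pr 𝒜 a
  conv_rhs => rw [h]
  rcases le_total m N with hm | hm
  · refine Finset.sum_subset (Finset.range_mono hm) fun i _ hi => ha i (by simpa using hi)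
  · symm
    refine Finset.sum_subset (Finset.range_mono hm) fun i _ hi => h' i (by simpa using hi)

lemma exists_lo (a : A) : ∃ m, a ∈ lo 𝒜 m := by
  obtain ⟨N, h, h'⟩ := sum_pr 𝒜 a
  exact ⟨N, (mem_lo 𝒜).2 h'⟩
end lo

section eqs
variable {k : Type} [Field k]

lemma tr_d (X : CDGAPack k) (m : ℕ) (a : X.carrier) :
    tr X.grading (m+1) (X.diff a) = X.diff (tr X.grading m a) := by
  simp only [tr, LinearMap.sum_apply, map_sum]
  rw [Finset.sum_range_succ', pr_d_zero, add_zero]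
  exact Finset.sum_congr rfl fun i _ => pr_d X i a

lemma tr_d' (X : CDGAPack k) (m : ℕ) (a : X.carrier) :
    tr X.grading m (X.diff a) = X.diff (tr X.grading (m-1) a) := by
  cases m with
  | zero => simp [tr]
  | succ m => exact tr_d X m a

lemma tr_f {X Y : CDGAPack k} (f : Hm X Y) (m : ℕ) (a : X.carrier) :
    tr Y.grading m (f.f a) = f.f (tr X.grading m a) := by
  simp only [tr, LinearMap.sum_apply, map_sum]
  exact Finset.sum_congr rfl fun i _ => pr_f f i a

lemma lo_f {X Y : CDGAPack k} (f : Hm X Y) {m : ℕ} {a : X.carrier} (ha : a ∈ lo X.grading m) :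
    f.f a ∈ lo Y.grading m := by
  rw [← tr_lo _ ha, ← tr_f]; exact tr_mem _ _ _

lemma lo_d (X : CDGAPack k) {m : ℕ} {a : X.carrier} (ha : a ∈ lo X.grading m) :
    X.diff a ∈ lo X.grading (m+1) := by
  rw [← tr_lo _ ha, ← tr_d]; exact tr_mem _ _ _

lemma lo_d' (X : CDGAPack k) {m : ℕ} {a : X.carrier} (ha : a ∈ lo X.grading (m-1)) :
    X.diff a ∈ lo X.grading m := by
  rw [← tr_lo _ ha, ← tr_d']; exact tr_mem _ _ _

/-- `f` is bijective on cohomology in degrees `< M` and injective in degree `M`. -/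
def Eqv {X Y : CDGAPack k} (f : Hm X Y) (M : ℕ) : Prop :=
  ∀ a x, a ∈ lo X.grading (M+1) → x ∈ lo Y.grading M → X.diff a = 0 → f.f a = Y.diff x →
    ∃ a' x', a' ∈ lo X.grading M ∧ x' ∈ lo Y.grading (M-1) ∧ a = X.diff a' ∧ x = f.f a' + Y.diff x'

lemma Eqv.mk {X Y : CDGAPack k} {f : Hm X Y} {M : ℕ}
    (h : ∀ a x, a ∈ lo X.grading (M+1) → x ∈ lo Y.grading M → X.diff a = 0 → f.f a = Y.diff x →
    ∃ a' x', a = X.diff a' ∧ x = f.f a' + Y.diff x') : Eqv f M := by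
  intro a x ha hx hd hf
  obtain ⟨a', x', h1, h2⟩ := h a x ha hx hd hf
  refine ⟨tr _ M a', tr _ (M-1) x', tr_mem _ _ _, tr_mem _ _ _, ?_, ?_⟩
  · rw [← tr_d, ← h1, tr_lo _ ha]
  · rw [← tr_d', ← tr_f, ← map_add, ← h2, tr_lo _ hx]

lemma Eqv.mono {X Y : CDGAPack k} {f : Hm X Y} {M M' : ℕ} (h : Eqv f M) (hM : M' ≤ M) : Eqv f M' := by
  apply Eqv.mk
  intro a x ha hx hd hf
  obtain ⟨a', x', _, _, h1, h2⟩ := h a x (lo_mono _ (by omega) ha) (lo_mono _ hM hx) hd hf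
  exact ⟨a', x', h1, h2⟩

lemma eqv_of_qi {X Y : CDGAPack k} (f : Hm X Y) (h : IsQuasiIso X.diff Y.diff f.f) (M : ℕ) : Eqv f M := by
  apply Eqv.mk
  intro a x ha hx hd hf
  obtain ⟨a', rfl⟩ := h.1 a hd ⟨x, hf⟩
  obtain ⟨b, y, hb, e⟩ := h.2 (x - f.f a') (by rw [map_sub, ← hf, f.ch, sub_self])
  refine ⟨a' + b, y, by rw [map_add, hb, add_zero], ?_⟩
  rw [map_add, add_assoc, ← e]; abel

lemma eqv_iso {X Y : CDGAPack k} (f : Hm X Y) (g : Hm Y X) (h1 : g.comp f = Hm.id X)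
    (h2 : f.comp g = Hm.id Y) (M : ℕ) : Eqv f M := by
  apply Eqv.mk
  have e1 : ∀ a, g.f (f.f a) = a := fun a => congrArg (fun t : Hm X X => t.f a) h1
  have e2 : ∀ a, f.f (g.f a) = a := fun a => congrArg (fun t : Hm Y Y => t.f a) h2
  intro a x ha hx hd hf
  refine ⟨g.f x, 0, ?_, by rw [e2]; simp⟩
  rw [g.ch, ← hf, e1]

lemma Eqv.comp {X Y Z : CDGAPack k} {g : Hm Y Z} {f : Hm X Y} {M : ℕ} (hg : Eqv g M) (hf : Eqv f M) :
    Eqv (g.comp f) M := by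
  apply Eqv.mk
  intro a x ha hx hd he
  obtain ⟨y, x', hy, _, h1, h2⟩ := hg (f.f a) x (lo_f f ha) hx (by rw [f.ch, hd, map_zero]) he
  obtain ⟨a', y', _, _, h3, h4⟩ := hf a y ha hy hd h1
  refine ⟨a', g.f y' + x', h3, ?_⟩
  rw [h2, h4, map_add, map_add, g.ch, Hm.comp_f, add_assoc]

lemma Eqv.alpha {X Y Z : CDGAPack k} {g : Hm Y Z} {f : Hm X Y} {M : ℕ} (hg : Eqv g M)
    (hgf : Eqv (g.comp f) M) : Eqv f M := by
  apply Eqv.mk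
  intro a x ha hx hd he
  obtain ⟨a', x', ha', hx', h1, h2⟩ := hgf a (g.f x) ha (lo_f g hx) hd
    (by rw [Hm.comp_f, he, g.ch])
  obtain ⟨y, _, _, _, h3, _⟩ := hg (x - f.f a') x' (lo_mono _ (by omega) (Submodule.sub_mem _ hx (lo_f f ha')))
    (lo_mono _ (by omega) hx') (by rw [map_sub, ← he, f.ch, h1, sub_self]) (by rw [map_sub, h2, Hm.comp_f]; abel)
  exact ⟨a', y, h1, by rw [← h3]; abel⟩

lemma Eqv.beta {X Y Z : CDGAPack k} {g : Hm Y Z} {f : Hm X Y} {M : ℕ} (hf : Eqv f (M+1))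
    (hgf : Eqv (g.comp f) (M+1)) : Eqv g M := by
  apply Eqv.mk
  intro b y hb hy hd he
  obtain ⟨a', x', ha', hx', h1, h2⟩ := hf 0 b (Submodule.zero_mem _) hb (map_zero _) (by rw [hd, map_zero])
  obtain ⟨a'', x'', _, _, h3, h4⟩ := hgf a' (y - g.f x') (lo_mono _ (by omega) ha')
    (lo_mono _ (by omega) (Submodule.sub_mem _ hy (lo_f g hx'))) h1.symm
    (by rw [map_sub, ← he, g.ch, Hm.comp_f, h2, map_add]; abel)
  refine ⟨f.f a'' + x', x'', ?_, ?_⟩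
  · rw [map_add, f.ch, ← h3, h2]
  · rw [map_add, add_right_comm, ← Hm.comp_f, ← h4]; abel
end eqs

section bc
variable {k : Type} [Field k] 

lemma hbasis {B : Type} [Ring B] [Algebra k B] (ℬ : ℕ → Submodule k B) [GradedRing ℬ] :
    ∃ (ι : Type) (b : Module.Basis ι k B) (dg : ι → ℕ), (∀ t, b t ∈ ℬ (dg t)) ∧
      ∀ j, ∀ c ∈ ℬ j, ∀ t, dg t ≠ j → b.repr c t = 0 := by
  have hI := DirectSum.Decomposition.isInternal ℬ
  let v := fun i => Module.Basis.ofVectorSpace k (ℬ i)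
  refine ⟨_, hI.collectedBasis v, fun t => t.1, fun t => hI.collectedBasis_mem v t, ?_⟩
  rintro j c hc ⟨i, t⟩ h
  exact hI.collectedBasis_repr_of_mem_ne v (Ne.symm h) hc

section
variable {A B : Type} [Ring A] [Algebra k A] [Ring B] [Algebra k B] (𝒜 : ℕ → Submodule k A) (ℬ : ℕ → Submodule k B)
  [GradedRing 𝒜] [GradedRing ℬ] {ι : Type} (b : Module.Basis ι k B)

/-- coordinates -/
noncomputable def co (t : ι) : GT 𝒜 ℬ →ₗ[k] A :=
  tlift (LinearMap.mk₂ k (fun a c => b.repr c t • a) (by intros; simp) (by intros; rw [smul_comm])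
    (by intros; simp [add_smul]) (by intros; simp [mul_smul]))

lemma co_tm (t : ι) (a : A) (c : B) : co 𝒜 ℬ b t (tm 𝒜 ℬ a c) = b.repr c t • a := by
  simp [co]

lemma co_sum (x : GT 𝒜 ℬ) : ∃ T : Finset ι, ∀ T' : Finset ι, T ⊆ T' → 
    x = ∑ t ∈ T', tm 𝒜 ℬ (co 𝒜 ℬ b t x) (b t) := by
  classical
  refine tm_ind (𝒜 := 𝒜) (ℬ := ℬ) (p := fun x => ∃ T : Finset ι, ∀ T' : Finset ι, T ⊆ T' → 
    x = ∑ t ∈ T', tm 𝒜 ℬ (co 𝒜 ℬ b t x) (b t)) x ⟨∅, by simp⟩ ?_ ?_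
  · rintro x y ⟨T, h⟩ ⟨T2, h2⟩
    refine ⟨T ∪ T2, fun T' hT => ?_⟩
    simp only [map_add, tm_add_left, Finset.sum_add_distrib]
    rw [← h T' (Finset.union_subset_left hT), ← h2 T' (Finset.union_subset_right hT)]
  · intro i j a ha c hc
    refine ⟨(b.repr c).support, fun T' hT => ?_⟩
    have : c = ∑ t ∈ T', b.repr c t • b t := by
      conv_lhs => rw [← b.linearCombination_repr c, Finsupp.linearCombination_apply, Finsupp.sum]
      exact Finset.sum_subset hT fun t _ ht => by
        rw [Finsupp.notMem_support_iff.1 ht, zero_smul]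
    have e : tm 𝒜 ℬ a c = (tmL 𝒜 ℬ a) c := rfl
    conv_lhs => rw [e, this, map_sum]
    refine Finset.sum_congr rfl fun t _ => ?_
    rw [co_tm, tm_smul_left, map_smul]; rfl

lemma co_zero {x : GT 𝒜 ℬ} (h : ∀ t, co 𝒜 ℬ b t x = 0) : x = 0 := by
  obtain ⟨T, hT⟩ := co_sum 𝒜 ℬ b x
  rw [hT T subset_rfl]
  exact Finset.sum_eq_zero fun t _ => by rw [h]; simp

variable {dg : ι → ℕ} (hb : ∀ t, b t ∈ ℬ (dg t)) (hb' : ∀ j, ∀ c ∈ ℬ j, ∀ t, dg t ≠ j → b.repr c t = 0)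
include hb' in
lemma co_pr (t : ι) (i : ℕ) (x : GT 𝒜 ℬ) : pr 𝒜 i (co 𝒜 ℬ b t x) = co 𝒜 ℬ b t (pr (tgr 𝒜 ℬ) (i + dg t) x) := by
  refine tm_ind (𝒜 := 𝒜) (ℬ := ℬ) (p := fun x => pr 𝒜 i (co 𝒜 ℬ b t x) = co 𝒜 ℬ b t (pr (tgr 𝒜 ℬ) (i + dg t) x))
    x (by rw [map_zero, map_zero, map_zero, map_zero]) ?_ ?_
  · intro x y h1 h2
    rw [map_add, map_add, h1, h2, map_add, map_add]
  · intro i' j a ha c hc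
    rw [co_tm, map_smul]
    by_cases h : dg t = j
    · subst h
      by_cases h2 : i' = i
      · subst h2
        rw [pr_same _ ha, pr_same _ (tm_mem rfl ha hc), co_tm]
      · rw [pr_ne _ ha h2, pr_ne _ (tm_mem rfl ha hc) (by omega)]; simp
    · rw [hb' j c hc t h, zero_smul]
      by_cases h2 : i' + j = i + dg t
      · rw [pr_same _ (tm_mem h2 ha hc), co_tm, hb' j c hc t h, zero_smul]
      · rw [pr_ne _ (tm_mem rfl ha hc) h2]; simp

include hb' in
lemma co_lo {M : ℕ} {x : GT 𝒜 ℬ} (hx : x ∈ lo (tgr 𝒜 ℬ) M) (t : ι) : co 𝒜 ℬ b t x ∈ lo 𝒜 (M - dg t) := by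
  rw [mem_lo] at hx ⊢
  intro i hi
  rw [co_pr 𝒜 ℬ b hb', hx _ (by omega), map_zero]

lemma tm_lo {M j : ℕ} {a : A} {c : B} (ha : a ∈ lo 𝒜 (M - j)) (hc : c ∈ ℬ j) :
    tm 𝒜 ℬ a c ∈ lo (tgr 𝒜 ℬ) M := by
  obtain ⟨N, h, h'⟩ := sum_pr 𝒜 a
  have e : tm 𝒜 ℬ a c = (tmL 𝒜 ℬ).flip c a := rfl
  rw [e, h, map_sum]
  refine Submodule.sum_mem _ fun i _ => ?_
  change tm 𝒜 ℬ _ c ∈ _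
  rw [mem_lo] at ha
  by_cases hi : M - j ≤ i
  · rw [ha i hi]; simp
  · exact hom_lo _ (by omega) (tm_mem rfl (pr_mem 𝒜 i a) hc)
end

variable (X : CDGAPack k) {B : Type} [Ring B] [Algebra k B] (ℬ : ℕ → Submodule k B) [GradedRing ℬ]
  (z : X.carrier) (δ : B →ₗ[k] B)

lemma co_D {ι : Type} (b : Module.Basis ι k B) (ρ : ι → ℕ) (r : ℕ) (t : ι)
    (hρ : ∀ s, ρ s ≤ r → b.repr (δ (b s)) t = 0)
    (x : GT X.grading ℬ) (hx : ∀ s, r < ρ s → co X.grading ℬ b s x = 0) :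
    co X.grading ℬ b t (twD X ℬ z δ x) = X.diff (co X.grading ℬ b t x) := by
  obtain ⟨T, hT⟩ := co_sum X.grading ℬ b x
  have hT := hT T subset_rfl
  have e : ∀ s, co X.grading ℬ b t (twD X ℬ z δ (tm X.grading ℬ (co X.grading ℬ b s x) (b s))) =
     X.diff (co X.grading ℬ b t (tm X.grading ℬ (co X.grading ℬ b s x) (b s))) := by
    intro s
    by_cases h : r < ρ s
    · rw [hx s h]; simp
    · rw [twD_tm, map_add, co_tm, co_tm, co_tm, hρ s (by omega)]; simp
  conv_lhs => rw [hT, map_sum, map_sum, Finset.sum_congr rfl (fun s _ => e s), ← map_sum, ← map_sum, ← hT]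

theorem eqv_bc {e : ℕ} (he : e ≠ 1) (hz : z ∈ X.grading e) (dz : X.diff z = 0) (hB : GradedComm ℬ)
    (hδ : IsDer ℬ e δ) (Y : CDGAPack k) (f : Hm X Y) (z' : Y.carrier) (hz' : z' ∈ Y.grading e)
    (dz' : Y.diff z' = 0) (hzz : f.f z = z') (M : ℕ) (hf : Eqv f M) :
    Eqv (twBC X ℬ z δ hz dz hB hδ Y f z' hz' dz' hzz) M := by
  classical
  set F := twBC X ℬ z δ hz dz hB hδ Y f z' hz' dz' hzz with hF
  obtain ⟨ι, b, dg, hb, hb'⟩ := hbasis ℬ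
  have hFc : ∀ t x, co Y.grading ℬ b t (F.f x) = f.f (co X.grading ℬ b t x) := by
    intro t x
    refine tm_ind (𝒜 := X.grading) (ℬ := ℬ) (p := fun x => co Y.grading ℬ b t (F.f x) = f.f (co X.grading ℬ b t x)) x (by simp) ?_ ?_
    · intro x y h1 h2; rw [map_add, map_add, h1, h2, map_add, map_add]
    · intro i j a ha c hc
      rw [hF, twBC_tm, co_tm, co_tm, map_smul]
  obtain ⟨ρ, hρ, R, hR⟩ : ∃ ρ : ι → ℕ, (∀ s t, dg t ≤ M + 1 → ρ s ≤ ρ t → b.repr (δ (b s)) t = 0) ∧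
      ∃ R, ∀ t, dg t ≤ M + 1 → ρ t < R := by
    have key : ∀ s t, dg t + e ≠ dg s + 1 → b.repr (δ (b s)) t = 0 := by
      intro s t h
      rcases hδ.deg (dg s) (b s) (hb s) with ⟨m, hm, h2⟩ | h2
      · exact hb' m _ h2 t (by omega)
      · rw [h2]; simp
    by_cases h0 : e = 0
    · refine ⟨fun t => M + 1 - dg t, fun s t h1 h2 => key s t ?_, M + 2, fun t _ => ?_⟩
      · dsimp only at h2
        omega
      · dsimp only; omega
    · exact ⟨dg, fun s t h1 h2 => key s t (by omega), M + 2, fun t h => by omega⟩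
  have main : ∀ r, ∀ a x, a ∈ lo (tgr X.grading ℬ) (M+1) → x ∈ lo (tgr Y.grading ℬ) M →
      twD X ℬ z δ a = 0 → F.f a = twD Y ℬ z' δ x →
      (∀ t, r ≤ ρ t → co X.grading ℬ b t a = 0) → (∀ t, r ≤ ρ t → co Y.grading ℬ b t x = 0) →
      ∃ a' x', a = twD X ℬ z δ a' ∧ x = F.f a' + twD Y ℬ z' δ x' := by
    intro r
    induction r with
    | zero =>
      intro a x _ _ _ _ ha hx
      have h1 := co_zero X.grading ℬ b (fun t => ha t (Nat.zero_le _))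
      have h2 := co_zero Y.grading ℬ b (fun t => hx t (Nat.zero_le _))
      exact ⟨0, 0, by rw [h1, map_zero], by rw [h2, map_zero, map_zero, add_zero]⟩
    | succ r ih =>
      intro a x ha hx hd he hca hcx
      have hlo : ∀ t, ∃ p q, p ∈ lo X.grading (M - dg t) ∧ q ∈ lo Y.grading (M - dg t - 1) ∧
          (ρ t = r → co X.grading ℬ b t a = X.diff p ∧ co Y.grading ℬ b t x = f.f p + Y.diff q) := by
        intro t
        by_cases hρt : ρ t = r
        swap
        · exact ⟨0, 0, Submodule.zero_mem _, Submodule.zero_mem _, fun h => absurd h hρt⟩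
        have h1 := co_lo X.grading ℬ b hb' ha t
        have h2 := co_lo Y.grading ℬ b hb' hx t
        by_cases ht : dg t ≤ M + 1
        · have h3 := co_D X ℬ z δ b ρ r t (fun s hs => hρ s t ht (by omega)) a (fun s hs => hca s (by omega))
          have h4 := co_D Y ℬ z' δ b ρ r t (fun s hs => hρ s t ht (by omega)) x (fun s hs => hcx s (by omega))
          rw [hd, map_zero] at h3
          rw [← he, hFc] at h4
          obtain ⟨p, q, hp, hq, e1, e2⟩ := (hf.mono (Nat.sub_le M (dg t))) _ _ (lo_mono _ (by omega) h1) h2 h3.symm h4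
          exact ⟨p, q, hp, hq, fun _ => ⟨e1, e2⟩⟩
        · rw [show M + 1 - dg t = 0 by omega] at h1
          rw [show M - dg t = 0 by omega] at h2
          refine ⟨0, 0, Submodule.zero_mem _, Submodule.zero_mem _, fun _ => ?_⟩
          rw [lo_zero _ h1, lo_zero _ h2]; simp
      choose p q hp hq hpq using hlo
      obtain ⟨T1, hT1⟩ := co_sum X.grading ℬ b a
      obtain ⟨T2, hT2⟩ := co_sum Y.grading ℬ b x
      have cz : ∀ t, t ∉ T1 ∪ T2 → co X.grading ℬ b t a = 0 ∧ co Y.grading ℬ b t x = 0 := by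
        intro t ht
        simp only [Finset.mem_union, not_or] at ht
        constructor
        · rw [hT1 T1 subset_rfl, map_sum]
          refine Finset.sum_eq_zero fun s hs => ?_
          rw [co_tm, b.repr_self, Finsupp.single_eq_of_ne (by rintro rfl; exact ht.1 hs), zero_smul]
        · rw [hT2 T2 subset_rfl, map_sum]
          refine Finset.sum_eq_zero fun s hs => ?_
          rw [co_tm, b.repr_self, Finsupp.single_eq_of_ne (by rintro rfl; exact ht.2 hs), zero_smul]
      set T := (T1 ∪ T2).filter (fun t => ρ t = r) with hT
      have cs : ∀ (Z : CDGAPack k) (w : ι → Z.carrier) (t : ι), co Z.grading ℬ b t (∑ s ∈ T, tm Z.grading ℬ (w s) (b s)) =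
          if t ∈ T then w t else 0 := by
        intro Z w t
        rw [map_sum]
        split_ifs with h
        · rw [Finset.sum_eq_single t]
          · rw [co_tm, b.repr_self]; simp
          · intro s _ hs; rw [co_tm, b.repr_self, Finsupp.single_eq_of_ne (Ne.symm hs), zero_smul]
          · exact fun h' => absurd h h'
        · refine Finset.sum_eq_zero fun s hs => ?_
          rw [co_tm, b.repr_self, Finsupp.single_eq_of_ne (by rintro rfl; exact h hs), zero_smul]
      set u := ∑ s ∈ T, tm X.grading ℬ (p s) (b s) with hu
      set v := ∑ s ∈ T, tm Y.grading ℬ (q s) (b s) with hv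
      have ul : u ∈ lo (tgr X.grading ℬ) M := Submodule.sum_mem _ fun s _ => tm_lo _ _ (hp s) (hb s)
      have vl : v ∈ lo (tgr Y.grading ℬ) (M-1) := Submodule.sum_mem _ fun s _ => 
        tm_lo _ _ (lo_mono _ (by omega) (hq s)) (hb s)
      have lD := lo_d (twist X ℬ z δ hz dz hB hδ) ul
      have lD2 := lo_d' (twist Y ℬ z' δ hz' dz' hB hδ) vl
      have lF := lo_f F ul
      have al : a - twD X ℬ z δ u ∈ lo (tgr X.grading ℬ) (M+1) := Submodule.sub_mem _ ha lD
      have xl : x - F.f u - twD Y ℬ z' δ v ∈ lo (tgr Y.grading ℬ) M :=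
        Submodule.sub_mem _ (Submodule.sub_mem _ hx lF) lD2
      have dX := (twist X ℬ z δ hz dz hB hδ).isdiff.d_sq
      have dY := (twist Y ℬ z' δ hz' dz' hB hδ).isdiff.d_sq
      have Fch := F.ch
      dsimp only at dX dY Fch
      have uc : ∀ s, r < ρ s → co X.grading ℬ b s u = 0 := by
        intro s hs
        rw [cs X p s, if_neg]
        rw [hT, Finset.mem_filter]; omega
      have vc : ∀ s, r < ρ s → co Y.grading ℬ b s v = 0 := by
        intro s hs
        rw [cs Y q s, if_neg]
        rw [hT, Finset.mem_filter]; omega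
      obtain ⟨a', x', e1, e2⟩ := ih _ _ al xl (by rw [map_sub, hd, dX, sub_self])
        (by rw [map_sub, map_sub, map_sub, dY, ← he, Fch, sub_zero]) (by
          intro t ht
          by_cases htM : dg t ≤ M + 1
          · rw [map_sub, co_D X ℬ z δ b ρ r t (fun s hs => hρ s t htM (by omega)) u uc, cs X p t]
            rcases ht.eq_or_lt with h | h
            · by_cases hm : t ∈ T1 ∪ T2
              · rw [if_pos (by rw [hT, Finset.mem_filter]; exact ⟨hm, h.symm⟩), (hpq t h.symm).1, sub_self]
              · rw [(cz t hm).1, if_neg (by rw [hT, Finset.mem_filter]; tauto)]; simp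
            · rw [hca t h, if_neg (by rw [hT, Finset.mem_filter]; omega)]; simp
          · have := co_lo X.grading ℬ b hb' al t
            rw [show M + 1 - dg t = 0 by omega] at this
            exact lo_zero _ this) (by
          intro t ht
          by_cases htM : dg t ≤ M + 1
          · rw [map_sub, map_sub, co_D Y ℬ z' δ b ρ r t (fun s hs => hρ s t htM (by omega)) v vc, cs Y q t, hFc, cs X p t]
            rcases ht.eq_or_lt with h | h
            · by_cases hm : t ∈ T1 ∪ T2
              · rw [if_pos (by rw [hT, Finset.mem_filter]; exact ⟨hm, h.symm⟩), 
                 if_pos (by rw [hT, Finset.mem_filter]; exact ⟨hm, h.symm⟩), (hpq t h.symm).2]; abel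
              · rw [(cz t hm).2, if_neg (by rw [hT, Finset.mem_filter]; tauto), if_neg (by rw [hT, Finset.mem_filter]; tauto)]; simp
            · rw [hcx t h, if_neg (by rw [hT, Finset.mem_filter]; omega), if_neg (by rw [hT, Finset.mem_filter]; omega)]; simp
          · have := co_lo Y.grading ℬ b hb' xl t
            rw [show M - dg t = 0 by omega] at this
            exact lo_zero _ this)
      refine ⟨a' + u, x' + v, ?_, ?_⟩
      · rw [map_add, ← e1]; abel
      · rw [map_add, map_add, add_add_add_comm, ← e2]; abel
  apply Eqv.mk
  intro a x ha hx hd he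
  have big : ∀ t, R ≤ ρ t → M + 1 < dg t := fun t ht => by
    by_contra h
    have := hR t (by omega)
    omega
  refine main R a x ha hx hd he (fun t ht => ?_) (fun t ht => ?_)
  · have := co_lo X.grading ℬ b hb' ha t
    rw [show M + 1 - dg t = 0 by have := big t ht; omega] at this
    exact lo_zero _ this
  · have := co_lo Y.grading ℬ b hb' hx t
    rw [show M - dg t = 0 by have := big t ht; omega] at this
    exact lo_zero _ this

lemma eqv_tensL {X X' : CDGAPack k} (f : Hm X X') (Y : CDGAPack k) {M : ℕ} (hf : Eqv f M) : Eqv (tensL f Y) M :=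
  eqv_bc X Y.grading 1 Y.diff (by norm_num) (one_mem' X) (d_one X) Y.gcomm (diff_isDer Y) X' f 1 (one_mem' X') (d_one X')
    (map_one _) M hf

lemma eqv_swp (X Y : CDGAPack k) (M : ℕ) : Eqv (swp X Y) M := eqv_iso _ _ (swp_swp X Y) (swp_swp Y X) M

lemma eqv_tensMap {X Y X' Y' : CDGAPack k} {f : Hm X X'} {g : Hm Y Y'} {M : ℕ} (hf : Eqv f M) (hg : Eqv g M) :
    Eqv (tensMap f g) M := by
  rw [tensMap_eq]
  exact (eqv_swp _ _ M).comp ((eqv_tensL g _ hg).comp ((eqv_swp _ _ M).comp (eqv_tensL f _ hf)))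
end bc
end PDCDGA

namespace PDCDGA
open DirectSum TensorProduct

section unitpack
variable (k : Type) [Field k]

/-- the ground field as a CDGA -/
@[reducible] noncomputable def K0 : CDGAPack k :=
  letI := sqGraded (k := k) (fun _ : Empty => 1) (fun _ => Nat.one_pos)
  { carrier := SQ k Empty
    grading := sqgr (fun _ : Empty => 1)
    diff := 0
    gcomm := sq_gcomm _ (fun _ => Nat.one_pos)
    isdiff := ⟨fun i a _ => Submodule.zero_mem _, fun _ => rfl, fun i a b _ => by simp⟩ }

variable {k}
lemma K0_eq (a : (K0 k).carrier) : a = (TrivSqZeroExt.fst a : k) • (1 : (K0 k).carrier) := by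
  apply SQ.ext'
  · simp
  · intro t; exact t.elim

/-- unit map -/
noncomputable def K0u (X : CDGAPack k) : Hm (K0 k) X where
  f := (Algebra.ofId k X.carrier).comp (TrivSqZeroExt.fstHom k k (Empty → k))
  gr i a ha := by
    by_cases hi : i = 0
    · subst hi
      rw [K0_eq a, map_smul, map_one]
      exact Submodule.smul_mem _ _ (one_mem' X)
    · have : a = 0 := by
        rw [K0_eq a, ha.1 hi, zero_smul]
      rw [this, map_zero]; exact Submodule.zero_mem _
  ch a := by
    rw [K0_eq a, map_smul, map_one, map_smul, d_one]; simp

lemma GenD.nontriv {q : ℕ} (G : GenD k q) : Nontrivial G.B := by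
  obtain ⟨g, -⟩ := G.lft (K0 k) 0 (Submodule.zero_mem _)
  exact g.toRingHom.domain_nontrivial
end unitpack

section good
variable {k : Type} [Field k]

lemma tgr_ft {A B : Type} [Ring A] [Algebra k A] [Ring B] [Algebra k B] (𝒜 : ℕ → Submodule k A) (ℬ : ℕ → Submodule k B)
  [GradedRing 𝒜] [GradedRing ℬ] (hA : ∀ i, FiniteDimensional k (𝒜 i)) (hB : ∀ i, FiniteDimensional k (ℬ i)) (n : ℕ) :
    FiniteDimensional k (tgr 𝒜 ℬ n) := by
  have h1 : (⨆ p ∈ Finset.HasAntidiagonal.antidiagonal n, Submodule.map₂ (tmL 𝒜 ℬ) (𝒜 p.1) (ℬ p.2)).FG := by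
    apply Submodule.fg_biSup
    intro p _
    exact Submodule.FG.map₂ _ (Module.Finite.iff_fg.1 (hA _)) (Module.Finite.iff_fg.1 (hB _))
  have h2 := Module.Finite.iff_fg.2 h1
  refine Submodule.finiteDimensional_of_le (S₂ := ⨆ p ∈ Finset.HasAntidiagonal.antidiagonal n, Submodule.map₂ (tmL 𝒜 ℬ) (𝒜 p.1) (ℬ p.2)) ?_
  refine Submodule.span_le.2 ?_
  rintro x ⟨i, j, h, a, ha, b, hb, rfl⟩
  refine Submodule.mem_iSup_of_mem (i, j) (Submodule.mem_iSup_of_mem (by simpa using h) ?_)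
  exact Submodule.apply_mem_map₂ (tmL 𝒜 ℬ) ha hb

lemma tm_inj {A B : Type} [Ring A] [Algebra k A] [Ring B] [Algebra k B] (𝒜 : ℕ → Submodule k A) (ℬ : ℕ → Submodule k B)
  [GradedRing 𝒜] [GradedRing ℬ] [Nontrivial B] {a : A} {b : B} {j : ℕ} (hj : j ≠ 0) (hb : b ∈ ℬ j)
  (h : tm 𝒜 ℬ a 1 + tm 𝒜 ℬ 1 b = 0) : a = 0 := by
  obtain ⟨f, hf⟩ : ∃ f : Module.Dual k B, f 1 ≠ 0 := by
    by_contra hc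
    push Not at hc
    exact one_ne_zero ((Module.forall_dual_apply_eq_zero_iff k (1 : B)).1 hc)
  let L : GT 𝒜 ℬ →ₗ[k] A := tlift (LinearMap.mk₂ k (fun a c => f (pr ℬ 0 c) • a) (by intros; rw [smul_add])
    (by intros; rw [smul_comm])
    (by intros; rw [map_add, map_add, add_smul]) (by intros; rw [map_smul, map_smul, smul_assoc]))
  have hL : ∀ a c, L (tm 𝒜 ℬ a c) = f (pr ℬ 0 c) • a := fun a c => by simp [L]
  have := congrArg L h
  rw [map_add, hL, hL, map_zero, pr_same ℬ (SetLike.GradedOne.one_mem : (1 : B) ∈ ℬ 0), pr_ne ℬ hb hj] at this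
  simpa [hf] using this

lemma tm_inj' {A B : Type} [Ring A] [Algebra k A] [Ring B] [Algebra k B] (𝒜 : ℕ → Submodule k A) (ℬ : ℕ → Submodule k B)
  [GradedRing 𝒜] [GradedRing ℬ] [Nontrivial A] {b : B} (h : tm 𝒜 ℬ 1 b = 0) : b = 0 := by
  obtain ⟨f, hf⟩ : ∃ f : Module.Dual k A, f 1 ≠ 0 := by
    by_contra hc
    push Not at hc
    exact one_ne_zero ((Module.forall_dual_apply_eq_zero_iff k (1 : A)).1 hc)
  let L : GT 𝒜 ℬ →ₗ[k] B := tlift (LinearMap.mk₂ k (fun a c => f a • c)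
    (by intros; rw [map_add, add_smul]) (by intros; rw [map_smul, smul_assoc]) (by intros; rw [smul_add])
    (by intros; rw [smul_comm]))
  have hL : ∀ a c, L (tm 𝒜 ℬ a c) = f a • c := fun a c => by simp [L]
  have := congrArg L h
  rw [hL, map_zero] at this
  simpa [hf] using this

lemma tm_inj1 {A B : Type} [Ring A] [Algebra k A] [Ring B] [Algebra k B] (𝒜 : ℕ → Submodule k A) (ℬ : ℕ → Submodule k B)
  [GradedRing 𝒜] [GradedRing ℬ] [Nontrivial B] {a : A} (h : tm 𝒜 ℬ a 1 = 0) : a = 0 :=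
  tm_inj 𝒜 ℬ (j := 1) (b := 0) (by norm_num) (Submodule.zero_mem _) (by rw [h]; simp)

/-- connected, simply connected, finite type -/
structure Good (R : CDGAPack k) : Prop where
  z0 : ∀ a ∈ R.grading 0, ∃ c : k, a = c • (1 : R.carrier)
  z1 : R.grading 1 = ⊥
  ft : ∀ i, FiniteDimensional k (R.grading i)


/-- low degree cohomology conditions -/
structure HC (D : CDGAPack k) (N : ℕ) : Prop where
  nt : (1 : D.carrier) ≠ 0
  h0 : ∀ a ∈ D.grading 0, D.diff a = 0 → ∃ c : k, a = c • (1 : D.carrier)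
  h12 : ∀ i, 1 ≤ i → i ≤ 2 → ∀ a ∈ D.grading i, D.diff a = 0 → ∃ b, a = D.diff b
  hf : ∀ i, i ≤ N → ((LinearMap.ker D.diff ⊓ D.grading i).map (LinearMap.range D.diff).mkQ).FG

lemma exact_deg0 (D : CDGAPack k) {a b : D.carrier} (ha : a ∈ D.grading 0) (h : a = D.diff b) : a = 0 := by
  rw [← pr_same _ ha, h, pr_d_zero]

lemma Eqv.surj {X Y : CDGAPack k} {f : Hm X Y} {M i : ℕ} (h : Eqv f M) (hi : i < M) {x : Y.carrier}
    (hx : x ∈ Y.grading i) (dx : Y.diff x = 0) :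
    ∃ a y, a ∈ X.grading i ∧ X.diff a = 0 ∧ x = f.f a + Y.diff y := by
  obtain ⟨a, y, _, _, h1, h2⟩ := h 0 x (Submodule.zero_mem _) (hom_lo _ hi hx) (map_zero _) (by rw [dx, map_zero])
  have h3 := congrArg (tr Y.grading (i+1)) h2
  have h4 := congrArg (pr Y.grading i) h2
  rw [pr_same _ hx, map_add, pr_f] at h4
  have h5 : ∃ y', pr Y.grading i (Y.diff y) = Y.diff y' := by
    cases i with
    | zero => exact ⟨0, by rw [pr_d_zero, map_zero]⟩
    | succ i => exact ⟨_, pr_d Y i y⟩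
  obtain ⟨y', hy'⟩ := h5
  refine ⟨pr X.grading i a, y', pr_mem _ _ _, ?_, by rw [h4, hy']⟩
  rw [← pr_d, ← h1, map_zero]

lemma Eqv.inj {X Y : CDGAPack k} {f : Hm X Y} {M i : ℕ} (h : Eqv f M) (hi : i ≤ M) {a : X.carrier} {x : Y.carrier}
    (ha : a ∈ X.grading i) (da : X.diff a = 0) (hx : f.f a = Y.diff x) : ∃ b, a = X.diff b := by
  have : ∃ x', x' ∈ lo Y.grading M ∧ f.f a = Y.diff x' := by
    refine ⟨tr Y.grading M x, tr_mem _ _ _, ?_⟩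
    rw [← tr_d, ← hx, tr_f, tr_lo _ (hom_lo _ (by omega) ha)]
  obtain ⟨x', hx', e⟩ := this
  obtain ⟨b, _, _, _, h1, _⟩ := h a x' (hom_lo _ (by omega) ha) hx' da e
  exact ⟨b, h1⟩

lemma HC.fwd {X Y : CDGAPack k} {f : Hm X Y} {M N : ℕ} (h : Eqv f M) (hN : N < M) (h3 : 3 ≤ M) (hX : HC X N) : HC Y N where
  nt := by
    intro h1
    obtain ⟨b, hb⟩ := h.inj (Nat.zero_le _) (one_mem' X) (d_one X) (x := 0) (by rw [map_one, h1, map_zero])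
    exact hX.nt (exact_deg0 X (one_mem' X) hb)
  h0 a ha da := by
    obtain ⟨b, y, hb, db, e⟩ := h.surj (by omega) ha da
    obtain ⟨c, rfl⟩ := hX.h0 b hb db
    refine ⟨c, ?_⟩
    have : a - c • 1 = Y.diff y := by rw [e, map_smul, map_one]; abel
    exact sub_eq_zero.1 (exact_deg0 Y (Submodule.sub_mem _ ha (Submodule.smul_mem _ _ (one_mem' Y))) this)
  h12 i h1 h2 a ha da := by
    obtain ⟨b, y, hb, db, e⟩ := h.surj (by omega) ha da
    obtain ⟨c, rfl⟩ := hX.h12 i h1 h2 b hb db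
    exact ⟨f.f c + y, by rw [e, map_add, f.ch]⟩
  hf i hi := by
    have h1 := hX.hf i hi
    let g := Submodule.mapQ (LinearMap.range X.diff) (LinearMap.range Y.diff) f.f.toLinearMap (by
      rintro _ ⟨a, rfl⟩; exact ⟨f.f a, f.ch a⟩)
    have h2 := h1.map g
    have := Module.Finite.iff_fg.2 h2
    refine Submodule.FG.of_le_of_isNoetherian (T := Submodule.map g ((LinearMap.ker X.diff ⊓ X.grading i).map (LinearMap.range X.diff).mkQ)) ?_
    rintro _ ⟨x, ⟨dx, hx⟩, rfl⟩
    obtain ⟨a, y, ha, da, e⟩ := h.surj (by omega) hx dx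
    refine ⟨_, ⟨a, ⟨da, ha⟩, rfl⟩, ?_⟩
    change Submodule.Quotient.mk (f.f a) = Submodule.Quotient.mk x
    rw [Submodule.Quotient.eq, e]
    exact ⟨-y, by rw [map_neg]; abel⟩

lemma HC.bwd {X Y : CDGAPack k} {f : Hm X Y} {M N : ℕ} (h : Eqv f M) (hN : N < M) (h3 : 3 ≤ M) (hY : HC Y N) : HC X N where
  nt h1 := hY.nt (by rw [← map_one f.f, h1, map_zero])
  h0 a ha da := by
    obtain ⟨c, hc⟩ := hY.h0 (f.f a) (f.gr _ _ ha) (by rw [f.ch, da, map_zero])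
    refine ⟨c, ?_⟩
    have hm := Submodule.sub_mem _ ha (Submodule.smul_mem _ c (one_mem' X))
    obtain ⟨b, hb⟩ := h.inj (Nat.zero_le _) hm (by rw [map_sub, da, map_smul, d_one]; simp) (x := 0)
      (by rw [map_sub, hc, map_smul, map_one]; simp)
    exact sub_eq_zero.1 (exact_deg0 X hm hb)
  h12 i h1 h2 a ha da := by
    obtain ⟨c, hc⟩ := hY.h12 i h1 h2 (f.f a) (f.gr _ _ ha) (by rw [f.ch, da, map_zero])
    exact h.inj (by omega) ha da hc
  hf i hi := by
    let g := Submodule.mapQ (LinearMap.range X.diff) (LinearMap.range Y.diff) f.f.toLinearMap (by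
      rintro _ ⟨a, rfl⟩; exact ⟨f.f a, f.ch a⟩)
    apply Submodule.fg_of_fg_map_of_fg_inf_ker g
    · have := Module.Finite.iff_fg.2 (hY.hf i hi)
      refine Submodule.FG.of_le_of_isNoetherian (T := Submodule.map (LinearMap.range Y.diff).mkQ (LinearMap.ker Y.diff ⊓ Y.grading i)) ?_
      rintro _ ⟨_, ⟨a, ⟨da, ha⟩, rfl⟩, rfl⟩
      refine ⟨f.f a, ⟨?_, f.gr _ _ ha⟩, rfl⟩
      have da : X.diff a = 0 := da
      change Y.diff (f.f a) = 0
      rw [f.ch, da, map_zero]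
    · convert Submodule.fg_bot
      rw [eq_bot_iff]
      rintro _ ⟨⟨a, ⟨da, ha⟩, rfl⟩, hg⟩
      have hg : (Submodule.Quotient.mk (f.f a) : Y.carrier ⧸ LinearMap.range Y.diff) = 0 := hg
      rw [Submodule.Quotient.mk_eq_zero] at hg
      obtain ⟨x, hx⟩ := hg
      obtain ⟨b, hb⟩ := h.inj (by omega) ha da hx.symm
      change (Submodule.Quotient.mk a : X.carrier ⧸ LinearMap.range X.diff) = 0
      rw [Submodule.Quotient.mk_eq_zero]
      exact ⟨b, hb.symm⟩

lemma lo_succ {A : Type} [Ring A] [Algebra k A] (𝒜 : ℕ → Submodule k A) [GradedRing 𝒜] {m : ℕ} {a : A}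
    (ha : a ∈ lo 𝒜 (m+1)) : ∃ a' b, a' ∈ lo 𝒜 m ∧ b ∈ 𝒜 m ∧ a = a' + b := by
  refine ⟨tr 𝒜 m a, pr 𝒜 m a, tr_mem _ _ _, pr_mem _ _ _, ?_⟩
  conv_lhs => rw [← tr_lo 𝒜 ha, tr, Finset.sum_range_succ]
  rfl

lemma d_split (X : CDGAPack k) {m : ℕ} {a b : X.carrier} (ha : a ∈ lo X.grading m) (hb : b ∈ X.grading m)
    (h : X.diff (a + b) = 0) : X.diff a = 0 ∧ X.diff b = 0 := by
  have h1 := pr_d X m (a + b)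
  rw [h, map_zero, map_add, pr_same _ hb, (mem_lo _).1 ha m le_rfl, zero_add] at h1
  rw [map_add, ← h1, add_zero] at h
  exact ⟨h, h1.symm⟩

lemma eqv_two {W D : CDGAPack k} (μ : Hm W D) (h0 : ∀ a ∈ W.grading 0, ∃ c : k, a = c • (1 : W.carrier))
    (h1 : W.grading 1 = ⊥) (h2 : ∀ a ∈ W.grading 2, W.diff a = 0 → a = 0) {N : ℕ} (hD : HC D N) : Eqv μ 2 := by
  apply Eqv.mk
  intro a x ha hx da he
  obtain ⟨u, a2, hu, ha2, e1⟩ := lo_succ _ ha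
  rw [e1] at da
  obtain ⟨du, da2⟩ := d_split W hu ha2 da
  obtain rfl := h2 a2 ha2 da2
  obtain ⟨w, a1, hw, ha1, e2⟩ := lo_succ _ hu
  obtain rfl : a1 = 0 := by rw [h1] at ha1; exact ha1
  obtain ⟨w', a0, hw', ha0, e3⟩ := lo_succ _ hw
  obtain rfl := lo_zero _ hw'
  obtain ⟨c, rfl⟩ := h0 a0 ha0
  subst e3 e2 e1
  simp only [zero_add, add_zero, map_smul, map_one] at he ⊢
  have hc := exact_deg0 D (Submodule.smul_mem _ c (one_mem' D)) he
  have hc0 : c = 0 := by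
    by_contra h
    exact hD.nt ((smul_eq_zero.1 hc).resolve_left h)
  subst hc0
  rw [zero_smul] at he
  obtain ⟨u, x1, hu, hx1, e1⟩ := lo_succ _ hx
  rw [e1] at he
  obtain ⟨du, dx1⟩ := d_split D hu hx1 he.symm
  obtain ⟨w, x0, hw, hx0, e2⟩ := lo_succ _ hu
  obtain rfl := lo_zero _ hw
  obtain ⟨y, rfl⟩ := hD.h12 1 le_rfl (by norm_num) x1 hx1 dx1
  rw [e2, zero_add] at du
  obtain ⟨c, rfl⟩ := hD.h0 x0 hx0 du
  subst e2 e1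
  exact ⟨c • 1, y, by rw [map_smul, d_one]; simp, by simp⟩

lemma tens_low {X Y : CDGAPack k} (hX : Good X) (hY : Good Y) (nX : (1 : X.carrier) ≠ 0) (nY : (1 : Y.carrier) ≠ 0)
    (zX : ∀ a ∈ X.grading 2, X.diff a = 0 → a = 0) (zY : ∀ a ∈ Y.grading 2, Y.diff a = 0 → a = 0) :
    Good (tens X Y) ∧ ∀ a ∈ (tens X Y).grading 2, (tens X Y).diff a = 0 → a = 0 := by
  have : Nontrivial X.carrier := nontrivial_of_ne _ _ nX
  have : Nontrivial Y.carrier := nontrivial_of_ne _ _ nY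
  refine ⟨⟨?_, ?_, tgr_ft _ _ hX.ft hY.ft⟩, ?_⟩
  · intro x hx
    refine tgr_ind (𝒜 := X.grading) (ℬ := Y.grading) (p := fun x => ∃ c : k, x = c • (1 : (tens X Y).carrier)) x hx ⟨0, by simp⟩ ?_ ?_
    · rintro x y _ _ ⟨c, rfl⟩ ⟨c', rfl⟩; exact ⟨c + c', by rw [add_smul]⟩
    · intro i j hij a ha b hb
      obtain rfl : i = 0 := by omega
      obtain rfl : j = 0 := by omega
      obtain ⟨c, rfl⟩ := hX.z0 a ha
      obtain ⟨c', rfl⟩ := hY.z0 b hb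
      exact ⟨c * c', by rw [tm_smul_left, tm_smul_right, smul_smul, tm_one]⟩
  · rw [eq_bot_iff]
    intro x hx
    refine tgr_ind (𝒜 := X.grading) (ℬ := Y.grading) (p := fun x => x ∈ (⊥ : Submodule k _)) x hx (Submodule.zero_mem _) 
      (fun x y _ _ h1 h2 => Submodule.add_mem _ h1 h2) ?_
    intro i j hij a ha b hb
    rw [Submodule.mem_bot]
    by_cases hi : i = 1
    · subst hi
      rw [hX.z1] at ha
      rw [(Submodule.mem_bot k).1 ha]; simp
    · obtain rfl : j = 1 := by omega
      rw [hY.z1] at hb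
      rw [(Submodule.mem_bot k).1 hb]; simp
  · intro x hx dx
    obtain ⟨a, ha, b, hb, rfl⟩ : ∃ a ∈ X.grading 2, ∃ b ∈ Y.grading 2, x = tm X.grading Y.grading a 1 + tm X.grading Y.grading 1 b := by
      refine tgr_ind (𝒜 := X.grading) (ℬ := Y.grading) (p := fun x => ∃ a ∈ X.grading 2, ∃ b ∈ Y.grading 2, 
        x = tm X.grading Y.grading a 1 + tm X.grading Y.grading 1 b) x hx 
        ⟨0, Submodule.zero_mem _, 0, Submodule.zero_mem _, by simp⟩ ?_ ?_
      · rintro x y _ _ ⟨a, ha, b, hb, rfl⟩ ⟨a', ha', b', hb', rfl⟩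
        refine ⟨a + a', Submodule.add_mem _ ha ha', b + b', Submodule.add_mem _ hb hb', ?_⟩
        rw [tm_add_left, tm_add_right]; abel
      · intro i j hij a ha b hb
        obtain h | h | h : i = 0 ∨ i = 1 ∨ i = 2 := by omega
        · subst h
          obtain rfl : j = 2 := by omega
          obtain ⟨c, rfl⟩ := hX.z0 a ha
          exact ⟨0, Submodule.zero_mem _, c • b, Submodule.smul_mem _ _ hb, by simp⟩
        · subst h
          rw [hX.z1] at ha
          rw [(Submodule.mem_bot k).1 ha]
          exact ⟨0, Submodule.zero_mem _, 0, Submodule.zero_mem _, by simp⟩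
        · subst h
          obtain rfl : j = 0 := by omega
          obtain ⟨c, rfl⟩ := hY.z0 b hb
          exact ⟨c • a, Submodule.smul_mem _ _ ha, 0, Submodule.zero_mem _, by simp⟩
    have e : tm X.grading Y.grading (X.diff a) 1 + tm X.grading Y.grading 1 (Y.diff b) = 0 := by
      have := tens_diff X Y
      rw [map_add, this, this, d_one, d_one, sg_apply _ (one_mem' X)] at dx
      simpa using dx
    have ea := tm_inj _ _ (j := 3) (by norm_num) (Y.isdiff.grade _ _ hb) e
    rw [ea, tm_zero_left, zero_add] at e
    have eb := tm_inj' _ _ e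
    rw [zX a ha ea, zY b hb eb]; simp
end good
end PDCDGA

namespace PDCDGA
open DirectSum TensorProduct

section att
variable {k : Type} [Field k]

/-- attach a generator `v` of degree `q` with `dv = z` -/
@[reducible] noncomputable def att (R : CDGAPack k) {q : ℕ} (hq : 2 ≤ q) (z : R.carrier) (hz : z ∈ R.grading (q+1))
    (dz : R.diff z = 0) : CDGAPack k :=
  twist R (gen k q hq).gr z (gen k q hq).δ hz dz (gen k q hq).gc (gen k q hq).der

/-- inclusion -/
noncomputable def attIn (R : CDGAPack k) {q : ℕ} (hq : 2 ≤ q) (z : R.carrier) (hz : z ∈ R.grading (q+1))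
    (dz : R.diff z = 0) : Hm R (att R hq z hz dz) :=
  twInl R (gen k q hq).gr z (gen k q hq).δ hz dz (gen k q hq).gc (gen k q hq).der (gen k q hq).δ1

lemma attIn_f (R : CDGAPack k) {q : ℕ} (hq : 2 ≤ q) (z : R.carrier) (hz : z ∈ R.grading (q+1))
    (dz : R.diff z = 0) (a : R.carrier) : (attIn R hq z hz dz).f a = tm R.grading (gen k q hq).gr a 1 := rfl

lemma exists_attMap (R : CDGAPack k) {q : ℕ} (hq : 2 ≤ q) (z : R.carrier) (hz : z ∈ R.grading (q+1))
    (dz : R.diff z = 0) (D : CDGAPack k) (φ : Hm R D) (s : D.carrier) (hs : s ∈ D.grading q) (e : φ.f z = D.diff s) :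
    ∃ ψ : Hm (att R hq z hz dz) D, ψ.comp (attIn R hq z hz dz) = φ ∧ 
      ψ.f (tm R.grading (gen k q hq).gr 1 (gen k q hq).v) = s := by
  obtain ⟨g, hg, gv, gd⟩ := (gen k q hq).lft D s hs
  refine ⟨twLift R (gen k q hq).gr z (gen k q hq).δ hz dz (gen k q hq).gc (gen k q hq).der D φ g hg
    (fun b => by rw [gd, e]), ?_, ?_⟩
  · apply Hm.ext'; intro a
    rw [Hm.comp_f, attIn_f, twLift_tm]; simp
  · rw [twLift_tm, gv]; simp

lemma att_inj {R : CDGAPack k} {q : ℕ} (hq : 2 ≤ q) {a : R.carrier}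
     (h : tm R.grading (gen k q hq).gr a 1 = 0) : a = 0 :=
  have := (gen k q hq).nontriv
  tm_inj1 _ _ h

lemma att_dv (R : CDGAPack k) {q : ℕ} (hq : 2 ≤ q) (z : R.carrier) (hz : z ∈ R.grading (q+1))
    (dz : R.diff z = 0) : (att R hq z hz dz).diff (tm R.grading (gen k q hq).gr 1 (gen k q hq).v) = 
      tm R.grading (gen k q hq).gr z 1 := by
  refine (twD_tm R (gen k q hq).gr z (gen k q hq).δ 1 _).trans ?_
  rw [d_one, sg_apply _ (one_mem' R), (gen k q hq).δv]; simp

lemma att_d (R : CDGAPack k) {q : ℕ} (hq : 2 ≤ q) (z : R.carrier) (hz : z ∈ R.grading (q+1))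
    (dz : R.diff z = 0) (a : R.carrier) : (att R hq z hz dz).diff (tm R.grading (gen k q hq).gr a 1) = 
      tm R.grading (gen k q hq).gr (R.diff a) 1 := (attIn R hq z hz dz).ch a

lemma att_low {R : CDGAPack k} (hR : Good R) {q : ℕ} (hq : 2 ≤ q) {n : ℕ} (hn : n ≤ q + 1) {x}
    (hx : x ∈ tgr R.grading (gen k q hq).gr n) : ∃ a ∈ R.grading n, ∃ c : k, (n ≠ q → c = 0) ∧
      x = tm R.grading (gen k q hq).gr a 1 + c • tm R.grading (gen k q hq).gr 1 (gen k q hq).v := by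
  refine tgr_ind (𝒜 := R.grading) (ℬ := (gen k q hq).gr) (p := fun x => ∃ a ∈ R.grading n, ∃ c : k, (n ≠ q → c = 0) ∧
      x = tm R.grading (gen k q hq).gr a 1 + c • tm R.grading (gen k q hq).gr 1 (gen k q hq).v) x hx 
      ⟨0, Submodule.zero_mem _, 0, fun _ => rfl, by simp⟩ ?_ ?_
  · rintro x y _ _ ⟨a, ha, c, hc, rfl⟩ ⟨a', ha', c', hc', rfl⟩
    refine ⟨a + a', Submodule.add_mem _ ha ha', c + c', fun h => by rw [hc h, hc' h, add_zero], ?_⟩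
    rw [tm_add_left, add_smul]; abel
  · intro i j hij a ha b hb
    by_cases hj : j = 0
    · subst hj
      obtain ⟨c, rfl⟩ := (gen k q hq).deg0 b hb
      exact ⟨c • a, Submodule.smul_mem _ _ (by simpa using hij ▸ ha), 0, fun _ => rfl, by simp⟩
    by_cases hjq : j = q
    · subst hjq
      obtain ⟨c, rfl⟩ := (gen k j hq).top b hb
      by_cases hi : i = 0
      · subst hi
        obtain ⟨c', rfl⟩ := hR.z0 a ha
        exact ⟨0, Submodule.zero_mem _, c * c', fun h => absurd (by omega) h, by simp [smul_smul]⟩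
      · obtain rfl : i = 1 := by omega
        rw [hR.z1] at ha
        rw [(Submodule.mem_bot k).1 ha]
        exact ⟨0, Submodule.zero_mem _, 0, fun _ => rfl, by simp⟩
    have : b = 0 := by
      by_cases h1 : j = q + 1
      · subst h1; rw [(gen k q hq).top1] at hb; exact hb
      · rw [(gen k q hq).low j (by omega) (by omega)] at hb; exact hb
    subst this
    exact ⟨0, Submodule.zero_mem _, 0, fun _ => rfl, by simp⟩

lemma att_lo {R : CDGAPack k} (hR : Good R) {q : ℕ} (hq : 2 ≤ q) {n : ℕ} (hn : n ≤ q + 2) {x}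
    (hx : x ∈ lo (tgr R.grading (gen k q hq).gr) n) : ∃ a ∈ lo R.grading n, ∃ c : k, 
      x = tm R.grading (gen k q hq).gr a 1 + c • tm R.grading (gen k q hq).gr 1 (gen k q hq).v := by
  induction n generalizing x with
  | zero => 
    obtain rfl := lo_zero _ hx
    exact ⟨0, Submodule.zero_mem _, 0, by simp⟩
  | succ n ih =>
    obtain ⟨y, b, hy, hb, rfl⟩ := lo_succ _ hx
    obtain ⟨a, ha, c, rfl⟩ := ih (by omega) hy
    obtain ⟨a', ha', c', _, rfl⟩ := att_low hR hq (by omega) hb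
    refine ⟨a + a', Submodule.add_mem _ (lo_mono _ (by omega) ha) (hom_lo _ (by omega) ha'), c + c', ?_⟩
    rw [tm_add_left, add_smul]; abel

lemma att_good {R : CDGAPack k} (hR : Good R) {q : ℕ} (hq : 2 ≤ q) (z : R.carrier) (hz : z ∈ R.grading (q+1))
    (dz : R.diff z = 0) : Good (att R hq z hz dz) where
  z0 x hx := by
    obtain ⟨a, ha, c, hc, rfl⟩ := att_low hR hq (by omega) hx
    obtain ⟨c', rfl⟩ := hR.z0 a ha
    exact ⟨c', by rw [hc (by omega), tm_smul_left, tm_one, zero_smul, add_zero]⟩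
  z1 := by
    rw [eq_bot_iff]
    intro x hx
    obtain ⟨a, ha, c, hc, rfl⟩ := att_low hR hq (by omega) hx
    rw [hR.z1] at ha
    rw [(Submodule.mem_bot k).1 ha, hc (by omega), Submodule.mem_bot]; simp
  ft := tgr_ft _ _ hR.ft (gen k q hq).ft

/-- homogeneous cone cycles -/
def CZ {R D : CDGAPack k} (φ : Hm R D) (M : ℕ) : Submodule k (R.carrier × D.carrier) where
  carrier := {p | p.1 ∈ R.grading (M+1) ∧ p.2 ∈ D.grading M ∧ R.diff p.1 = 0 ∧ φ.f p.1 = D.diff p.2}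
  add_mem' := by
    rintro a b ⟨h1, h2, h3, h4⟩ ⟨h1', h2', h3', h4'⟩
    exact ⟨Submodule.add_mem _ h1 h1', Submodule.add_mem _ h2 h2', by simp [h3, h3'], by simp [h4, h4']⟩
  zero_mem' := ⟨Submodule.zero_mem _, Submodule.zero_mem _, by simp, by simp⟩
  smul_mem' := by
    rintro c a ⟨h1, h2, h3, h4⟩
    exact ⟨Submodule.smul_mem _ _ h1, Submodule.smul_mem _ _ h2, by simp [h3], by simp [h4]⟩

/-- cone boundaries -/
def BD {R D : CDGAPack k} (φ : Hm R D) : Submodule k (R.carrier × D.carrier) where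
  carrier := {p | ∃ a x, p.1 = R.diff a ∧ p.2 = φ.f a + D.diff x}
  add_mem' := by
    rintro p p' ⟨a, x, h1, h2⟩ ⟨a', x', h1', h2'⟩
    exact ⟨a + a', x + x', by simp [h1, h1'], by simp [h2, h2']; abel⟩
  zero_mem' := ⟨0, 0, by simp, by simp⟩
  smul_mem' := by
    rintro c p ⟨a, x, h1, h2⟩
    exact ⟨c • a, c • x, by simp [h1], by simp [h2]⟩

lemma eqv_step {R D : CDGAPack k} (φ : Hm R D) {M : ℕ} (h : Eqv φ M) (hc : CZ φ M ≤ BD φ) : Eqv φ (M+1) := by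
  apply Eqv.mk
  intro a x ha hx da he
  obtain ⟨u, a1, hu, ha1, rfl⟩ := lo_succ _ ha
  obtain ⟨w, x1, hw, hx1, rfl⟩ := lo_succ _ hx
  obtain ⟨du, da1⟩ := d_split R hu ha1 da
  have h1 := congrArg (pr D.grading (M+1)) he
  rw [pr_d, map_add, map_add, map_add, pr_same _ hx1, (mem_lo _).1 hw M le_rfl, zero_add,
    pr_same _ (φ.gr _ _ ha1), (mem_lo _).1 (lo_f φ hu) (M+1) le_rfl, zero_add] at h1
  rw [map_add, map_add, h1] at he
  obtain ⟨b, y, _, _, e1, e2⟩ := h u w hu hw du (add_right_cancel he)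
  obtain ⟨b', y', e3, e4⟩ := hc (show (a1, x1) ∈ CZ φ M from ⟨ha1, hx1, da1, h1⟩)
  refine ⟨b + b', y + y', by rw [map_add, ← e1, ← e3], ?_⟩
  dsimp only at e4
  rw [e2, e4, map_add, map_add]; abel

/-- generation by `r` cone cycles -/
def GenBy {R D : CDGAPack k} (φ : Hm R D) (M r : ℕ) : Prop :=
  ∃ w : Fin r → R.carrier × D.carrier, (∀ i, w i ∈ CZ φ M) ∧ ∀ c ∈ CZ φ M, ∃ l : Fin r → k, c - ∑ i, l i • w i ∈ BD φ

lemma exists_genBy {R D : CDGAPack k} (φ : Hm R D) (M : ℕ) (hR : Good R) {N : ℕ} (hD : HC D N) (hM : M ≤ N) :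
    ∃ r, GenBy φ M r := by
  have key : ((CZ φ M).map (BD φ).mkQ).FG := by
    let π : (R.carrier × D.carrier) ⧸ BD φ →ₗ[k] R.carrier ⧸ LinearMap.range R.diff :=
      Submodule.mapQ _ _ (LinearMap.fst k _ _) (by rintro p ⟨a, x, h1, h2⟩; exact ⟨a, h1.symm⟩)
    let ι : D.carrier ⧸ LinearMap.range D.diff →ₗ[k] (R.carrier × D.carrier) ⧸ BD φ :=
      Submodule.mapQ _ _ (LinearMap.inr k _ _) (by rintro _ ⟨a, rfl⟩; exact ⟨0, a, by simp, by simp⟩)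
    apply Submodule.fg_of_fg_map_of_fg_inf_ker π
    · have h1 := (Module.Finite.iff_fg.1 (hR.ft (M+1))).map (LinearMap.range R.diff).mkQ
      have := Module.Finite.iff_fg.2 h1
      refine Submodule.FG.of_le_of_isNoetherian (T := (R.grading (M+1)).map (LinearMap.range R.diff).mkQ) ?_
      rintro _ ⟨_, ⟨p, hp, rfl⟩, rfl⟩
      exact ⟨p.1, hp.1, rfl⟩
    · have h1 := (hD.hf M hM).map ι
      have := Module.Finite.iff_fg.2 h1
      refine Submodule.FG.of_le_of_isNoetherian (T := ((LinearMap.ker D.diff ⊓ D.grading M).map (LinearMap.range D.diff).mkQ).map ι) ?_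
      rintro _ ⟨⟨p, ⟨h1, h2, h3, h4⟩, rfl⟩, hg⟩
      have hg : (Submodule.Quotient.mk p.1 : R.carrier ⧸ LinearMap.range R.diff) = 0 := hg
      rw [Submodule.Quotient.mk_eq_zero] at hg
      obtain ⟨a, ha⟩ := hg
      have ha' : p.1 = R.diff (pr R.grading M a) := by
        rw [← pr_d, ha, pr_same _ h1]
      refine ⟨_, ⟨p.2 - φ.f (pr R.grading M a), ⟨?_, Submodule.sub_mem _ h2 (φ.gr _ _ (pr_mem _ _ _))⟩, rfl⟩, ?_⟩
      · rw [SetLike.mem_coe, LinearMap.mem_ker, map_sub, ← h4, φ.ch, ha', sub_self]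
      · change Submodule.Quotient.mk _ = Submodule.Quotient.mk _
        rw [Submodule.Quotient.eq]
        refine ⟨-pr R.grading M a, 0, ?_, ?_⟩
        · simp [ha']
        · simp
  obtain ⟨r, s, hs⟩ := Submodule.fg_iff_exists_fin_generating_family.1 key
  have hs1 : ∀ i, ∃ w ∈ CZ φ M, (BD φ).mkQ w = s i := fun i => by
    have : s i ∈ (CZ φ M).map (BD φ).mkQ := by rw [← hs]; exact Submodule.subset_span ⟨i, rfl⟩
    exact this
  choose w hw hws using hs1
  refine ⟨r, w, hw, fun c hc => ?_⟩
  have : (BD φ).mkQ c ∈ Submodule.span k (Set.range s) := by rw [hs]; exact ⟨c, hc, rfl⟩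
  rw [Submodule.mem_span_range_iff_exists_fun] at this
  obtain ⟨l, hl⟩ := this
  refine ⟨l, ?_⟩
  rw [← Submodule.ker_mkQ (BD φ), LinearMap.mem_ker, map_sub, map_sum, ← hl]
  simp only [map_smul, hws, sub_self]

/-- invariant of the factorization -/
def Mo {W D T : CDGAPack k} (μ : Hm W D) (τ : Hm W T) (M : ℕ) (P : CDGAPack k) (φ : Hm P D) : Prop :=
  ∃ ι : Hm W P, φ.comp ι = μ ∧ ∃ (Q : CDGAPack k) (κ : Hm P Q) (j : Hm T Q), Eqv κ M ∧ κ.comp ι = j.comp τ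

lemma mo_att {W D T : CDGAPack k} {μ : Hm W D} {τ : Hm W T} {M : ℕ} {P : CDGAPack k} {φ : Hm P D} (h : Mo μ τ M P φ)
    {q : ℕ} (hq : 2 ≤ q) (z : P.carrier) (hz : z ∈ P.grading (q+1)) (dz : P.diff z = 0)
    (ψ : Hm (att P hq z hz dz) D) (hψ : ψ.comp (attIn P hq z hz dz) = φ) : Mo μ τ M (att P hq z hz dz) ψ := by
  obtain ⟨ι, h1, Q, κ, j, hκ, h2⟩ := h
  have dz' : Q.diff (κ.f z) = 0 := by rw [κ.ch, dz, map_zero]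
  refine ⟨(attIn P hq z hz dz).comp ι, by rw [← comp_assoc', hψ, h1], att Q hq (κ.f z) (κ.gr _ _ hz) dz', 
    twBC P (gen k q hq).gr z (gen k q hq).δ hz dz (gen k q hq).gc (gen k q hq).der Q κ (κ.f z) (κ.gr _ _ hz) dz' rfl,
    (attIn Q hq (κ.f z) (κ.gr _ _ hz) dz').comp j, eqv_bc _ _ _ _ (show q + 1 ≠ 1 by omega) _ _ _ _ _ _ _ _ _ _ _ hκ, ?_⟩
  apply Hm.ext'
  intro a
  have := congrArg (fun t : Hm W Q => t.f a) h2
  simp only [Hm.comp_f] at this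
  refine (twBC_tm P (gen k q hq).gr z (gen k q hq).δ hz dz (gen k q hq).gc (gen k q hq).der Q κ (κ.f z) (κ.gr _ _ hz) dz' rfl (ι.f a) 1).trans ?_
  rw [this]; rfl

theorem factor_step {W D T : CDGAPack k} {μ : Hm W D} {τ : Hm W T} {M q r : ℕ} (hq : 2 ≤ q) {R : CDGAPack k} {φ : Hm R D}
    (hR : Good R) (hφ : Eqv φ q) (hm : Mo μ τ M R φ) (hg : GenBy φ q r) :
    ∃ (P : CDGAPack k) (ψ : Hm P D), Good P ∧ Eqv ψ (q+1) ∧ Mo μ τ M P ψ := by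
  induction r generalizing R with
  | zero =>
    refine ⟨R, φ, hR, eqv_step φ hφ ?_, hm⟩
    obtain ⟨w, _, h⟩ := hg
    intro c hc
    obtain ⟨l, hl⟩ := h c hc
    simpa using hl
  | succ r ih =>
    obtain ⟨w, hw, h⟩ := hg
    by_cases hb : w 0 ∈ BD φ
    · refine ih hR hφ hm ⟨fun i => w i.succ, fun i => hw _, fun c hc => ?_⟩
      obtain ⟨l, hl⟩ := h c hc
      refine ⟨fun i => l i.succ, ?_⟩
      rw [Fin.sum_univ_succ] at hl
      have := Submodule.add_mem _ hl (Submodule.smul_mem _ (l 0) hb)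
      convert this using 1
      abel
    · obtain ⟨hz, hs, dz, e⟩ := hw 0
      set z := (w 0).1 with hzdef
      set s := (w 0).2 with hsdef
      obtain ⟨ψ, hψ, hv⟩ := exists_attMap R hq z hz dz D φ s hs e
      have hψ' : ∀ a, ψ.f (tm R.grading (gen k q hq).gr a 1) = φ.f a := fun a => congrArg (fun t : Hm R D => t.f a) hψ
      refine ih (att_good hR hq z hz dz) (φ := ψ) ?_ (mo_att hm hq z hz dz ψ hψ) 
        ⟨fun i => (tm R.grading (gen k q hq).gr (w i.succ).1 1, (w i.succ).2), fun i => ?_, ?_⟩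
      · apply Eqv.mk
        intro a x ha hx da he
        obtain ⟨r, hr, c, rfl⟩ := att_lo hR hq (by omega) ha
        have hd : R.diff r + c • z = 0 := by
          apply att_inj hq
          rw [map_add, map_smul, att_d, att_dv] at da
          rw [tm_add_left, tm_smul_left]; exact da
        rw [map_add, map_smul, hv, hψ'] at he
        have hc : c = 0 := by
          by_contra hc
          apply hb
          refine ⟨-(c⁻¹ • r), c⁻¹ • x, ?_, ?_⟩
          · rw [map_neg, map_smul, eq_neg_of_add_eq_zero_left hd, smul_neg, neg_neg, smul_smul, inv_mul_cancel₀ hc, one_smul]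
          · rw [map_neg, map_smul, map_smul, ← he, smul_add, smul_smul, inv_mul_cancel₀ hc, one_smul]; abel
        subst hc
        rw [zero_smul, add_zero] at hd he
        obtain ⟨a', x', _, _, e1, e2⟩ := hφ r x hr hx hd he
        refine ⟨tm R.grading (gen k q hq).gr a' 1, x', ?_, by rw [hψ', e2]⟩
        rw [att_d, ← e1, zero_smul, add_zero]
      · obtain ⟨h1, h2, h3, h4⟩ := hw i.succ
        refine ⟨(attIn R hq z hz dz).gr _ _ h1, h2, ?_, ?_⟩
        · dsimp only
          rw [att_d, h3, tm_zero_left]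
        · dsimp only
          rw [hψ', h4]
      · rintro ⟨c1, c2⟩ ⟨h1, h2, h3, h4⟩
        dsimp only at h1 h2 h3 h4
        obtain ⟨a, ha, c, hc, rfl⟩ := att_low hR hq le_rfl h1
        obtain rfl := hc (by omega)
        rw [zero_smul, add_zero] at *
        rw [att_d] at h3
        rw [hψ'] at h4
        obtain ⟨l, b, y, e1, e2⟩ := h (a, c2) ⟨ha, h2, att_inj hq h3, h4⟩
        rw [Fin.sum_univ_succ] at e1 e2
        refine ⟨fun i => l i.succ, tm R.grading (gen k q hq).gr b 1 + l 0 • tm R.grading (gen k q hq).gr 1 (gen k q hq).v, y, ?_, ?_⟩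
        · rw [map_add, map_smul, att_d, att_dv, ← tm_smul_left, ← tm_add_left, ← e1]
          simp only [Prod.fst_sub, Prod.fst_add, Prod.fst_sum, Prod.smul_fst]
          have L : ∀ u, tm R.grading (gen k q hq).gr u 1 = (attIn R hq z hz dz).f u := fun u => rfl
          simp only [L]
          simp only [← map_smul, ← map_sum]
          rw [← map_sub]
          congr 1
          rw [← hzdef]; abel
        · simp only [Prod.snd_sub, Prod.snd_add, Prod.snd_sum, Prod.smul_snd, ← hsdef] at e2 ⊢
          rw [map_add, map_smul, hv, hψ', add_right_comm, ← e2]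
          abel

theorem factor {W D T : CDGAPack k} (μ : Hm W D) (τ : Hm W T) (M : ℕ) (hτ : Eqv τ M) (hW : Good W) (hμ : Eqv μ 2)
    (N : ℕ) (hD : HC D N) : ∃ (P : CDGAPack k) (ψ : Hm P D), Good P ∧ Eqv ψ (N+1) ∧ Mo μ τ M P ψ := by
  have h0 : Mo μ τ M W μ := ⟨Hm.id W, rfl, T, τ, Hm.id T, hτ, rfl⟩
  have : ∀ j, j ≤ N + 1 → ∃ (P : CDGAPack k) (ψ : Hm P D), Good P ∧ Eqv ψ j ∧ Mo μ τ M P ψ := by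
    intro j
    induction j with
    | zero => exact fun _ => ⟨W, μ, hW, hμ.mono (by omega), h0⟩
    | succ j ih =>
      intro hj
      by_cases h2 : 2 ≤ j
      · obtain ⟨P, ψ, h3, h4, h5⟩ := ih (by omega)
        obtain ⟨r, hr⟩ := exists_genBy ψ j h3 hD (by omega)
        exact factor_step h2 h3 h4 h5 hr
      · exact ⟨W, μ, hW, hμ.mono (by omega), h0⟩
  exact this _ le_rfl
end att
end PDCDGA

namespace PDCDGA
open DirectSum TensorProduct

section zigzag
variable {k : Type} [Field k]

lemma K0_pos {i : ℕ} (hi : i ≠ 0) {a : (K0 k).carrier} (ha : a ∈ (K0 k).grading i) : a = 0 := by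
  rw [K0_eq a, ha.1 hi, zero_smul]

lemma K0_good : Good (K0 k) where
  z0 a _ := ⟨_, K0_eq a⟩
  z1 := by
    rw [eq_bot_iff]
    intro a ha
    exact K0_pos one_ne_zero ha
  ft i := by
    have h : (K0 k).grading i ≤ Submodule.span k {(1 : (K0 k).carrier)} := by
      intro a _
      rw [K0_eq a]
      exact Submodule.smul_mem _ _ (Submodule.mem_span_singleton_self _)
    have : FiniteDimensional k (Submodule.span k {(1 : (K0 k).carrier)}) := inferInstance
    exact Submodule.finiteDimensional_of_le h

lemma z2_of_eqv {S A : CDGAPack k} {σ : Hm S A} {M N : ℕ} (h : Eqv σ M) (hM : 2 ≤ M) (hS : Good S) (hA : HC A N) :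
    ∀ a ∈ S.grading 2, S.diff a = 0 → a = 0 := by
  intro a ha da
  obtain ⟨b, hb⟩ := hA.h12 2 (by omega) le_rfl (σ.f a) (σ.gr _ _ ha) (by rw [σ.ch, da, map_zero])
  obtain ⟨c, hc⟩ := h.inj hM ha da hb
  have e := pr_d S 1 c
  rw [← hc, pr_same _ ha] at e
  have : pr S.grading 1 c ∈ S.grading 1 := pr_mem _ _ _
  rw [hS.z1, Submodule.mem_bot] at this
  rw [e, this, map_zero]

lemma eqv_id (X : CDGAPack k) (M : ℕ) : Eqv (Hm.id X) M := eqv_iso _ (Hm.id X) rfl rfl M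

/-- a good model -/
lemma exists_model {A : CDGAPack k} {N : ℕ} (hA : HC A N) : ∃ (S : CDGAPack k) (σ : Hm S A), Good S ∧ Eqv σ (N+1) := by
  obtain ⟨P, ψ, h1, h2, _⟩ := factor (K0u A) (Hm.id _) 0 (eqv_id _ 0) K0_good
    (eqv_two _ K0_good.z0 K0_good.z1 (fun a ha _ => K0_pos two_ne_zero ha) hA) N hA
  exact ⟨P, ψ, h1, h2⟩

/-- completion of spans -/
lemma span_completion {S E B : CDGAPack k} {M : ℕ} (hS : Good S) (hH : HC S M) (hz : ∀ a ∈ S.grading 2, S.diff a = 0 → a = 0)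
    (α : Hm S E) (β : Hm S B) (hα : Eqv α (M+1)) (hβ : Eqv β (M+1)) :
    ∃ (Q : CDGAPack k) (u : Hm E Q) (v : Hm B Q), Eqv u M ∧ Eqv v M := by
  obtain ⟨hg, hz2⟩ := tens_low hS hS hH.nt hH.nt hz hz
  obtain ⟨P, ψ, _, hψ, ι, e1, Q, κ, j, hκ, e2⟩ := factor (tlft (Hm.id S) (Hm.id S)) (tensMap α β) (M+1) (eqv_tensMap hα hβ) hg
    (eqv_two _ hg.z0 hg.z1 hz2 hH) M hH
  have il : Eqv (ι.comp (inl S S)) (M+1) := by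
    apply Eqv.alpha hψ
    rw [← comp_assoc', e1, tlft_inl]; exact eqv_id _ _
  have ir : Eqv (ι.comp (inr S S)) (M+1) := by
    apply Eqv.alpha hψ
    rw [← comp_assoc', e1, tlft_inr]; exact eqv_id _ _
  refine ⟨Q, j.comp (inl E B), j.comp (inr E B), Eqv.beta hα ?_, Eqv.beta hβ ?_⟩
  · have : (j.comp (inl E B)).comp α = κ.comp (ι.comp (inl S S)) := by
      rw [← comp_assoc', e2, comp_assoc', comp_assoc', tensMap, tlft_inl]
    rw [this]; exact hκ.comp il
  · have : (j.comp (inr E B)).comp β = κ.comp (ι.comp (inr S S)) := by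
      rw [← comp_assoc', e2, comp_assoc', comp_assoc', tensMap, tlft_inr]
    rw [this]; exact hκ.comp ir

/-- cospan of approximate equivalences -/
def Cos (X B : CDGAPack k) (N : ℕ) : Prop :=
  ∃ (E : CDGAPack k) (u : Hm X E) (v : Hm B E), Eqv u N ∧ Eqv v N

lemma cos_fwd {X A B : CDGAPack k} (hX : ∀ N, HC X N) (f : Hm A B) (hf : ∀ M, Eqv f M) (h : ∀ N, Cos X A N) (N : ℕ) : Cos X B N := by
  obtain ⟨E, u, v, hu, hv⟩ := h (N + 4)
  have hA : HC A (N+3) := HC.bwd hv (by omega) (by omega) (HC.fwd hu (by omega) (by omega) (hX (N+3)))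
  obtain ⟨S, σ, hS, hσ⟩ := exists_model hA
  have hH : HC S (N+2) := HC.bwd (hσ.mono (show N + 3 ≤ N + 3 + 1 by omega)) (by omega) (by omega)
    ⟨hA.nt, hA.h0, hA.h12, fun i hi => hA.hf i (by omega)⟩
  obtain ⟨Q, a, b, ha, hb⟩ := span_completion hS hH (z2_of_eqv hσ (by omega) hS hA) (v.comp σ) (f.comp σ)
    ((hv.mono (by omega)).comp (hσ.mono (by omega))) ((hf _).comp (hσ.mono (by omega)))
  exact ⟨Q, a.comp u, b, (ha.mono (by omega)).comp (hu.mono (by omega)), hb.mono (by omega)⟩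

lemma cos_bwd {X A B : CDGAPack k} (f : Hm A B) (hf : ∀ M, Eqv f M) (h : ∀ N, Cos X B N) (N : ℕ) : Cos X A N := by
  obtain ⟨E, u, v, hu, hv⟩ := h N
  exact ⟨E, u, v.comp f, hu, hv.comp (hf N)⟩

lemma step_hm {A B : CDGAPack k} (h : QIStep A B) : ∃ f : Hm A B, ∀ M, Eqv f M := by
  obtain ⟨f, h1, h2, h3⟩ := h
  exact ⟨⟨f, h1, h2⟩, fun M => eqv_of_qi _ h3 M⟩

lemma cos_iff {X A B : CDGAPack k} (hX : ∀ N, HC X N) (h : WeaklyEquivalent A B) : (∀ N, Cos X A N) ↔ (∀ N, Cos X B N) := by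
  induction h with
  | rel A B h =>
    obtain ⟨f, hf⟩ := step_hm h
    exact ⟨cos_fwd hX f hf, cos_bwd f hf⟩
  | refl A => exact Iff.rfl
  | symm A B _ ih => exact ih.symm
  | trans A B C _ _ h1 h2 => exact h1.trans h2

lemma cos_of_we {X Y : CDGAPack k} (hX : ∀ N, HC X N) (h : WeaklyEquivalent X Y) (N : ℕ) : Cos X Y N :=
  (cos_iff hX h).1 (fun N => ⟨X, Hm.id X, Hm.id X, eqv_id _ _, eqv_id _ _⟩) N

lemma triv_iff {X Y : CDGAPack k} (h : WeaklyEquivalent X Y) : (1 : X.carrier) = 0 ↔ (1 : Y.carrier) = 0 := by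
  induction h with
  | rel A B h =>
    obtain ⟨f, hf⟩ := step_hm h
    constructor
    · intro h; rw [← map_one f.f, h, map_zero]
    · intro h1
      obtain ⟨b, hb⟩ := (hf 0).inj le_rfl (one_mem' A) (d_one A) (x := 0) (by rw [map_one, h1, map_zero])
      exact exact_deg0 A (one_mem' A) hb
  | refl A => exact Iff.rfl
  | symm A B _ ih => exact ih.symm
  | trans A B C _ _ h1 h2 => exact h1.trans h2

/-- common good target -/
theorem common_good {X Y : CDGAPack k} (hX : Good X) (hY : Good Y) (hx2 : X.grading 2 = ⊥) (hy2 : Y.grading 2 = ⊥)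
    (hXH : ∀ N, HC X N) (h : WeaklyEquivalent X Y) (N : ℕ) :
    ∃ (A : CDGAPack k) (f : Hm X A) (g : Hm Y A), Good A ∧ Eqv f N ∧ Eqv g N := by
  obtain ⟨E, u, v, hu, hv⟩ := cos_of_we hXH h (N + 3)
  have hE : HC E (N+2) := HC.fwd hu (by omega) (by omega) (hXH _)
  have hYH : HC Y (N+2) := HC.bwd hv (by omega) (by omega) hE
  obtain ⟨hg, hz2⟩ := tens_low hX hY (hXH 0).nt hYH.nt (fun a ha _ => by rwa [hx2, Submodule.mem_bot] at ha)
    (fun a ha _ => by rwa [hy2, Submodule.mem_bot] at ha)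
  obtain ⟨P, ψ, hP, hψ, ι, e1, _⟩ := factor (tlft u v) (Hm.id _) 0 (eqv_id _ _) hg
    (eqv_two _ hg.z0 hg.z1 hz2 hE) (N+2) hE
  refine ⟨P, ι.comp (inl X Y), ι.comp (inr X Y), hP, Eqv.mono (M := N+3) ?_ (by omega), Eqv.mono (M := N+3) ?_ (by omega)⟩
  · apply Eqv.alpha hψ
    rw [← comp_assoc', e1, tlft_inl]; exact hu
  · apply Eqv.alpha hψ
    rw [← comp_assoc', e1, tlft_inr]; exact hv

lemma HC_of {X : CDGAPack k} (ft : ∀ i, FiniteDimensional k (X.grading i)) (nt : (1 : X.carrier) ≠ 0) 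
    (h0 : ∀ a ∈ X.grading 0, ∃ c : k, a = c • (1 : X.carrier)) (h1 : X.grading 1 = ⊥) (h2 : X.grading 2 = ⊥) (N : ℕ) : HC X N where
  nt := nt
  h0 a ha _ := h0 a ha
  h12 i hi hi' a ha _ := by
    obtain rfl | rfl : i = 1 ∨ i = 2 := by omega
    · rw [h1, Submodule.mem_bot] at ha; exact ⟨0, by rw [ha, map_zero]⟩
    · rw [h2, Submodule.mem_bot] at ha; exact ⟨0, by rw [ha, map_zero]⟩
  hf i _ := by
    apply Submodule.FG.map
    have : FiniteDimensional k (X.grading i) := ft i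
    have h3 : FiniteDimensional k (LinearMap.ker X.diff ⊓ X.grading i : Submodule k X.carrier) :=
      Submodule.finiteDimensional_of_le inf_le_right
    exact (Submodule.fg_iff_finiteDimensional _).2 h3
end zigzag
end PDCDGA

namespace PDCDGA
open DirectSum TensorProduct

section dual
variable {k : Type} [Field k]

lemma factor_fun {V W : Type} [AddCommGroup V] [Module k V] [AddCommGroup W] [Module k W] (g : V →ₗ[k] W) (φ : V →ₗ[k] k)
    (h : ∀ v, g v = 0 → φ v = 0) : ∃ ψ : W →ₗ[k] k, ∀ v, ψ (g v) = φ v := by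
  have : φ ∈ LinearMap.range g.dualMap := by
    rw [LinearMap.range_dualMap_eq_dualAnnihilator_ker, Submodule.mem_dualAnnihilator]
    exact fun v hv => h v hv
  obtain ⟨ψ, hψ⟩ := this
  exact ⟨ψ, fun v => by rw [← hψ]; rfl⟩

/-- differential Poincare duality algebra -/
structure PDp (C : CDGAPack k) (n : ℕ) (ε : C.carrier →ₗ[k] k) : Prop where
  ft : ∀ i : ℕ, FiniteDimensional k (C.grading i)
  hom : ∀ i : ℕ, i ≠ n → ∀ a ∈ C.grading i, ε a = 0
  ed : ∀ a : C.carrier, ε (C.diff a) = 0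
  ndl : ∀ (i : ℕ) (a : C.carrier), a ∈ C.grading i → a ≠ 0 →
      ∃ (jd : ℕ) (b : C.carrier), i + jd = n ∧ b ∈ C.grading jd ∧ ε (a * b) ≠ 0
  ndr : ∀ (jd : ℕ) (b : C.carrier), b ∈ C.grading jd → b ≠ 0 →
      ∃ (i : ℕ) (a : C.carrier), i + jd = n ∧ a ∈ C.grading i ∧ ε (a * b) ≠ 0

variable {C : CDGAPack k} {n : ℕ} {ε : C.carrier →ₗ[k] k}

lemma PDp.above (h : PDp C n ε) {i : ℕ} (hi : n < i) {a : C.carrier} (ha : a ∈ C.grading i) : a = 0 := by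
  by_contra h0
  obtain ⟨j, b, e, _⟩ := h.ndl i a ha h0
  omega

lemma PDp.eq_zero (h : PDp C n ε) {i j : ℕ} (hij : i + j = n) {a : C.carrier} (ha : a ∈ C.grading i)
    (h1 : ∀ b ∈ C.grading j, ε (a * b) = 0) : a = 0 := by
  by_contra h0
  obtain ⟨j', b, e, hb, hne⟩ := h.ndl i a ha h0
  obtain rfl : j = j' := by omega
  exact hne (h1 b hb)

lemma PDp.repr (h : PDp C n ε) {i j : ℕ} (hij : i + j = n) (l : C.carrier →ₗ[k] k) :
    ∃ y ∈ C.grading i, ∀ w ∈ C.grading j, ε (y * w) = l w := by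
  have := h.ft i
  have := h.ft j
  let p : C.grading i →ₗ[k] Module.Dual k (C.grading j) :=
    LinearMap.mk₂ k (fun a b => ε (a.1 * b.1)) (fun a b c => by simp [add_mul]) (fun c a b => by simp)
      (fun a b c => by simp [mul_add]) (fun c a b => by simp)
  let p' : C.grading j →ₗ[k] Module.Dual k (C.grading i) := p.flip
  have hp : Function.Injective p := by
    rw [injective_iff_map_eq_zero]
    intro a ha
    apply Subtype.ext
    exact h.eq_zero hij a.2 (fun b hb => LinearMap.congr_fun ha ⟨b, hb⟩)
  have hp' : Function.Injective p' := by
    rw [injective_iff_map_eq_zero]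
    intro b hb
    by_contra h0
    obtain ⟨i', a, e, ha, hne⟩ := h.ndr j b.1 b.2 (fun h => h0 (Subtype.ext h))
    obtain rfl : i = i' := by omega
    exact hne (LinearMap.congr_fun hb ⟨a, ha⟩)
  have h1 := LinearMap.finrank_le_finrank_of_injective hp
  have h2 := LinearMap.finrank_le_finrank_of_injective hp'
  rw [Subspace.dual_finrank_eq] at h1 h2
  have h3 : Module.finrank k (C.grading i) = Module.finrank k (Module.Dual k (C.grading j)) := by
    rw [Subspace.dual_finrank_eq]; omega
  obtain ⟨y, hy⟩ := (LinearMap.injective_iff_surjective_of_finrank_eq_finrank h3).1 hp (l ∘ₗ (C.grading j).subtype)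
  exact ⟨y.1, y.2, fun w hw => LinearMap.congr_fun hy ⟨w, hw⟩⟩

lemma leib_ev (C : CDGAPack k) (ε : C.carrier →ₗ[k] k) (ed : ∀ a : C.carrier, ε (C.diff a) = 0) {i : ℕ} {a : C.carrier} (ha : a ∈ C.grading i)
    (b : C.carrier) : ε (C.diff a * b) = - ((-1 : k)^i * ε (a * C.diff b)) := by
  have := ed (a * b)
  rw [C.isdiff.leibniz i a b ha, map_add, map_smul, smul_eq_mul] at this
  exact eq_neg_of_add_eq_zero_left this

lemma PDp.exact_of_perp (h : PDp C n ε) {i j : ℕ} (hij : i + j = n) {x : C.carrier} (hx : x ∈ C.grading i)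
    (h1 : ∀ z ∈ C.grading j, C.diff z = 0 → ε (x * z) = 0) : ∃ y, x = C.diff y := by
  by_cases hi : i = 0
  · refine ⟨0, ?_⟩
    rw [map_zero]
    refine h.eq_zero hij hx (fun b hb => h1 b hb ?_)
    exact h.above (show n < j + 1 by omega) (C.isdiff.grade _ _ hb)
  obtain ⟨i, rfl⟩ : ∃ m, i = m + 1 := ⟨i - 1, by omega⟩
  obtain ⟨l, hl⟩ := factor_fun (C.diff ∘ₗ (C.grading j).subtype) (ε ∘ₗ LinearMap.mulLeft k x ∘ₗ (C.grading j).subtype)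
    (fun v hv => h1 v.1 v.2 hv)
  obtain ⟨y, hy, e⟩ := h.repr (i := i) (j := j + 1) (by omega) l
  refine ⟨(-(-1 : k)^i) • y, ?_⟩
  rw [← sub_eq_zero]
  refine h.eq_zero hij (Submodule.sub_mem _ hx ?_) ?_
  · rw [map_smul]; exact Submodule.smul_mem _ _ (C.isdiff.grade _ _ hy)
  intro b hb
  have h2 : l (C.diff b) = ε (x * b) := hl ⟨b, hb⟩
  rw [sub_mul, map_sub, map_smul, smul_mul_assoc, map_smul, leib_ev C ε h.ed hy, e _ (C.isdiff.grade _ _ hb), h2, smul_eq_mul,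
    neg_mul_neg, ← mul_assoc, ← pow_add, ← two_mul, pow_mul]
  simp

lemma d_mul_cyc (C : CDGAPack k) (c : C.carrier) {z : C.carrier} (hz : C.diff z = 0) : C.diff (c * z) = C.diff c * z := by
  refine hom_ind C.grading (p := fun c => C.diff (c * z) = C.diff c * z) c (by simp) (fun a b ha hb => ?_) (fun i a ha => ?_)
  · rw [add_mul, map_add, map_add, ha, hb, add_mul]
  · rw [C.isdiff.leibniz i a z ha, hz]; simp

lemma mem_of_pr {A : Type} [Ring A] [Algebra k A] (𝒜 : ℕ → Submodule k A) [GradedRing 𝒜] (S : Submodule k A) {a : A}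
    (h : ∀ i, pr 𝒜 i a ∈ S) : a ∈ S := by
  obtain ⟨N, hN, _⟩ := sum_pr 𝒜 a
  rw [hN]
  exact Submodule.sum_mem _ (fun i _ => h i)

lemma exists_pr_exact (C : CDGAPack k) (i : ℕ) {a b : C.carrier} (h : a = C.diff b) : ∃ c, pr C.grading i a = C.diff c := by
  rw [h]
  cases i with
  | zero => exact ⟨0, by rw [pr_d_zero, map_zero]⟩
  | succ i => exact ⟨_, pr_d C i b⟩

lemma cyc_pr (C : CDGAPack k) (i : ℕ) {a : C.carrier} (h : C.diff a = 0) : C.diff (pr C.grading i a) = 0 := by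
  rw [← pr_d, h, map_zero]

lemma qi_of_hom {X Y : CDGAPack k} (f : Hm X Y)
    (h1 : ∀ i, ∀ a ∈ X.grading i, X.diff a = 0 → (∃ b, f.f a = Y.diff b) → ∃ a', a = X.diff a')
    (h2 : ∀ i, ∀ x ∈ Y.grading i, Y.diff x = 0 → ∃ a b, X.diff a = 0 ∧ x = f.f a + Y.diff b) :
    IsQuasiIsoMap X Y f.f := by
  refine ⟨f.gr, f.ch, ?_, ?_⟩
  · rintro a da ⟨b, hb⟩
    have : a ∈ LinearMap.range X.diff := by
      apply mem_of_pr X.grading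
      intro i
      obtain ⟨c, hc⟩ := exists_pr_exact Y i hb
      rw [pr_f] at hc
      obtain ⟨a', ha'⟩ := h1 i _ (pr_mem _ _ _) (cyc_pr X i da) ⟨c, hc⟩
      exact ⟨a', ha'.symm⟩
    obtain ⟨a', ha'⟩ := this
    exact ⟨a', ha'.symm⟩
  · intro x dx
    have : x ∈ (LinearMap.ker X.diff).map f.f.toLinearMap ⊔ LinearMap.range Y.diff := by
      apply mem_of_pr Y.grading
      intro i
      obtain ⟨a, b, da, e⟩ := h2 i _ (pr_mem _ _ _) (cyc_pr Y i dx)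
      rw [e]
      exact Submodule.add_mem_sup ⟨a, da, rfl⟩ ⟨b, rfl⟩
    obtain ⟨_, ⟨a, da, rfl⟩, _, ⟨b, rfl⟩, e⟩ := Submodule.mem_sup.1 this
    exact ⟨a, b, da, e.symm⟩

/-- the orientation on `A` extending that of `X` -/
lemma exists_eps {X A : CDGAPack k} {εX : X.carrier →ₗ[k] k} (h : PDp X n εX) (f : Hm X A) {N : ℕ} (hf : Eqv f N) (hN : n ≤ N) :
    ∃ ε : A.carrier →ₗ[k] k, (∀ i, i ≠ n → ∀ a ∈ A.grading i, ε a = 0) ∧ (∀ a, ε (A.diff a) = 0) ∧ ∀ x, ε (f.f x) = εX x := by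
  obtain ⟨ψ, hψ⟩ := factor_fun ((LinearMap.range A.diff).mkQ ∘ₗ f.f.toLinearMap ∘ₗ (X.grading n).subtype) (εX ∘ₗ (X.grading n).subtype)
    (by
      rintro ⟨x, hx⟩ h1
      have h2 : f.f x ∈ LinearMap.range A.diff := (Submodule.Quotient.mk_eq_zero _).1 h1
      obtain ⟨y, hy⟩ := h2
      obtain ⟨b, hb⟩ := hf.inj hN hx (h.above (by omega) (X.isdiff.grade _ _ hx)) hy.symm
      change εX x = 0
      rw [hb, h.ed])
  have key : ∀ a, ψ ((LinearMap.range A.diff).mkQ (A.diff a)) = 0 := by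
    intro a
    have : (LinearMap.range A.diff).mkQ (A.diff a) = 0 := (Submodule.Quotient.mk_eq_zero _).2 ⟨a, rfl⟩
    rw [this, map_zero]
  refine ⟨ψ ∘ₗ (LinearMap.range A.diff).mkQ ∘ₗ pr A.grading n, ?_, ?_, ?_⟩
  · intro i hi a ha
    simp only [LinearMap.comp_apply]
    rw [pr_ne _ ha hi, map_zero, map_zero]
  · intro a
    simp only [LinearMap.comp_apply]
    obtain ⟨c, hc⟩ := exists_pr_exact A n (rfl : A.diff a = A.diff a)
    rw [hc, key]
  · intro x
    simp only [LinearMap.comp_apply]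
    rw [pr_f]
    refine (hψ ⟨pr X.grading n x, pr_mem _ _ _⟩).trans ?_
    change εX (pr X.grading n x) = εX x
    rw [← sub_eq_zero, ← map_sub]
    have : (pr X.grading n x - x) ∈ LinearMap.ker εX := by
      apply mem_of_pr X.grading
      intro i
      rw [LinearMap.mem_ker]
      by_cases hi : i = n
      · subst hi
        rw [map_sub, pr_same _ (pr_mem _ _ _), sub_self, map_zero]
      · exact h.hom i hi _ (pr_mem _ _ _)
    exact this
end dual
end PDCDGA

namespace PDCDGA
open DirectSum TensorProduct

section quot
variable {k : Type} [Field k]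

lemma eps_pr (B : CDGAPack k) {n : ℕ} {ε : B.carrier →ₗ[k] k} (hom : ∀ i : ℕ, i ≠ n → ∀ a ∈ B.grading i, ε a = 0)
    {i j : ℕ} (hij : i + j = n) {a : B.carrier} (ha : a ∈ B.grading i) (b : B.carrier) : ε (a * b) = ε (a * pr B.grading j b) ∧
      ε (b * a) = ε (pr B.grading j b * a) := by
  refine hom_ind B.grading (p := fun b => ε (a * b) = ε (a * pr B.grading j b) ∧
      ε (b * a) = ε (pr B.grading j b * a)) b (by rw [map_zero]; simp) (fun x y hx hy => ?_) (fun m x hx => ?_)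
  · rw [map_add, mul_add, map_add, hx.1, hy.1, mul_add, map_add, add_mul, map_add, hx.2, hy.2, add_mul, map_add]
    exact ⟨rfl, rfl⟩
  · by_cases hm : m = j
    · subst hm
      rw [pr_same _ hx]; exact ⟨rfl, rfl⟩
    · rw [pr_ne _ hx hm]
      rw [hom (i + m) (by omega) _ (mul_mem' B ha hx rfl), hom (i + m) (by omega) _ (mul_mem' B hx ha (by omega))]; simp

lemma eps_big (B : CDGAPack k) {n : ℕ} {ε : B.carrier →ₗ[k] k} (hom : ∀ i : ℕ, i ≠ n → ∀ a ∈ B.grading i, ε a = 0)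
    {i : ℕ} (hi : n < i) {a : B.carrier} (ha : a ∈ B.grading i) (b : B.carrier) : ε (a * b) = 0 ∧ ε (b * a) = 0 := by
  refine hom_ind B.grading (p := fun b => ε (a * b) = 0 ∧ ε (b * a) = 0) b (by simp) (fun x y hx hy => ?_) (fun m x hx => ?_)
  · rw [mul_add, add_mul, map_add, map_add, hx.1, hx.2, hy.1, hy.2]; simp
  · exact ⟨hom (i + m) (by omega) _ (mul_mem' B ha hx rfl), hom (i + m) (by omega) _ (mul_mem' B hx ha (by omega))⟩

lemma orph_left (B : CDGAPack k) {n : ℕ} {ε : B.carrier →ₗ[k] k} (hom : ∀ i : ℕ, i ≠ n → ∀ a ∈ B.grading i, ε a = 0)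
    {a : B.carrier} (ha : a ∈ Orphans ε) (c : B.carrier) : ε (c * a) = 0 := by
  rw [mem_orphans] at ha
  refine hom_ind B.grading (p := fun c => ε (c * a) = 0) c (by simp) (fun x y hx hy => ?_) (fun m x hx => ?_)
  · rw [add_mul, map_add, hx, hy, add_zero]
  · by_cases hm : m ≤ n
    · obtain ⟨e1, e2⟩ := eps_pr B hom (show m + (n - m) = n by omega) hx a
      have := ha x
      rw [e2] at this
      rw [e1, B.gcomm.mul_comm m (n-m) x _ hx (pr_mem _ _ _), map_smul, this, smul_zero]
    · exact (eps_big B hom (by omega) hx a).1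

/-- the orphans as a left ideal -/
def orphI (B : CDGAPack k) {n : ℕ} {ε : B.carrier →ₗ[k] k} (hom : ∀ i : ℕ, i ≠ n → ∀ a ∈ B.grading i, ε a = 0) : Ideal B.carrier where
  carrier := {a | a ∈ Orphans ε}
  add_mem' := fun h1 h2 => (Orphans ε).add_mem h1 h2
  zero_mem' := (Orphans ε).zero_mem
  smul_mem' := by
    intro c a ha
    change c * a ∈ Orphans ε
    rw [mem_orphans]
    intro b
    rw [mul_assoc]
    apply orph_left B hom
    rw [mem_orphans]
    intro b'
    rw [mul_assoc]
    exact (mem_orphans ε a).1 ha _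

lemma orph_ts (B : CDGAPack k) {n : ℕ} {ε : B.carrier →ₗ[k] k} (hom : ∀ i : ℕ, i ≠ n → ∀ a ∈ B.grading i, ε a = 0) :
    (orphI B hom).IsTwoSided := by
  constructor
  intro a b ha
  change a * b ∈ Orphans ε
  rw [mem_orphans]
  intro b'
  rw [mul_assoc]
  exact (mem_orphans ε a).1 ha _

lemma orph_pr (B : CDGAPack k) {n : ℕ} {ε : B.carrier →ₗ[k] k} (hom : ∀ i : ℕ, i ≠ n → ∀ a ∈ B.grading i, ε a = 0)
    {a : B.carrier} (ha : a ∈ Orphans ε) (i : ℕ) : pr B.grading i a ∈ Orphans ε := by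
  rw [mem_orphans] at ha ⊢
  intro b
  by_cases hi : i ≤ n
  · rw [(eps_pr B hom (show i + (n - i) = n by omega) (pr_mem _ _ _) b).1,
      ← (eps_pr B hom (show (n - i) + i = n by omega) (pr_mem B.grading (n-i) b) a).2]
    exact ha _
  · exact (eps_big B hom (by omega) (pr_mem _ _ _) b).1

lemma orph_d (B : CDGAPack k) {n : ℕ} {ε : B.carrier →ₗ[k] k} (hom : ∀ i : ℕ, i ≠ n → ∀ a ∈ B.grading i, ε a = 0)
    (ed : ∀ a, ε (B.diff a) = 0)
    {a : B.carrier} (ha : a ∈ Orphans ε) : B.diff a ∈ Orphans ε := by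
  have : a ∈ (Orphans ε).comap B.diff := by
    apply mem_of_pr B.grading
    intro i
    have h := orph_pr B hom ha i
    rw [mem_orphans] at h
    rw [Submodule.mem_comap, mem_orphans]
    intro b
    rw [leib_ev B ε ed (pr_mem _ _ _), h]; simp
  exact this

lemma exists_quot (B : CDGAPack k) {n : ℕ} {ε : B.carrier →ₗ[k] k} (ft : ∀ i, FiniteDimensional k (B.grading i))
    (hom : ∀ i : ℕ, i ≠ n → ∀ a ∈ B.grading i, ε a = 0)
    (ed : ∀ a, ε (B.diff a) = 0) :
    ∃ (C : CDGAPack k) (π : Hm B C) (εC : C.carrier →ₗ[k] k), PDp C n εC ∧ (∀ b, π.f b = 0 ↔ b ∈ Orphans ε) ∧ (∀ b, εC (π.f b) = ε b) ∧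
      ∀ i, ∀ c ∈ C.grading i, ∃ b ∈ B.grading i, π.f b = c := by
  have := orph_ts B hom
  let Q : Type := B.carrier ⧸ orphI B hom
  let q : B.carrier →ₐ[k] Q := Ideal.Quotient.mkₐ k (orphI B hom)
  have hq : Function.Surjective q := Ideal.Quotient.mkₐ_surjective k _
  have hk : ∀ b, q b = 0 ↔ b ∈ Orphans ε := fun b => Ideal.Quotient.eq_zero_iff_mem
  obtain ⟨s, hs⟩ := LinearMap.exists_rightInverse_of_surjective q.toLinearMap (LinearMap.range_eq_top.2 hq)
  have hs' : ∀ x, q (s x) = x := fun x => LinearMap.congr_fun hs x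
  have hsq : ∀ b, s (q b) - b ∈ Orphans ε := fun b => by rw [← hk, map_sub, hs', sub_self]
  let dQ : Q →ₗ[k] Q := q.toLinearMap ∘ₗ B.diff ∘ₗ s
  have hd : ∀ b, dQ (q b) = q (B.diff b) := by
    intro b
    have := (hk _).2 (orph_d B hom ed (hsq b))
    rw [map_sub, map_sub, sub_eq_zero] at this
    exact this
  let pQ : ℕ → Q →ₗ[k] Q := fun i => q.toLinearMap ∘ₗ pr B.grading i ∘ₗ s
  have hp : ∀ i b, pQ i (q b) = q (pr B.grading i b) := by
    intro i b
    have := (hk _).2 (orph_pr B hom (hsq b) i)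
    rw [map_sub, map_sub, sub_eq_zero] at this
    exact this
  let eQ : Q →ₗ[k] k := ε ∘ₗ s
  have he : ∀ b, eQ (q b) = ε b := by
    intro b
    have := (mem_orphans _ _).1 (hsq b) 1
    rw [mul_one, map_sub, sub_eq_zero] at this
    exact this
  let gQ : ℕ → Submodule k Q := fun i => (B.grading i).map q.toLinearMap
  have hg : ∀ i b, b ∈ B.grading i → q b ∈ gQ i := fun i b hb => ⟨b, hb, rfl⟩
  letI : GradedRing gQ := mkGraded (k := k) (A := Q) gQ pQ
    (by
      rintro i _ ⟨b, hb, rfl⟩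
      change pQ i (q b) = q b
      rw [hp, pr_same _ hb])
    (by
      rintro i j hij _ ⟨b, hb, rfl⟩
      change pQ j (q b) = 0
      rw [hp, pr_ne _ hb hij, map_zero])
    (by
      rw [eq_top_iff]
      rintro x -
      obtain ⟨b, rfl⟩ := hq x
      have : b ∈ (⨆ i, gQ i).comap q.toLinearMap := by
        apply mem_of_pr B.grading
        intro i
        exact (le_iSup gQ i) (hg i _ (pr_mem _ _ _))
      exact this)
    ⟨1, one_mem' B, map_one q⟩
    (by
      rintro i j _ _ ⟨a, ha, rfl⟩ ⟨b, hb, rfl⟩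
      exact ⟨a * b, mul_mem' B ha hb rfl, map_mul q a b⟩)
  let C : CDGAPack k :=
    { carrier := Q
      grading := gQ
      diff := dQ
      gcomm := by
        constructor
        · rintro i j _ _ ⟨a, ha, rfl⟩ ⟨b, hb, rfl⟩
          change q a * q b = _ • (q b * q a)
          rw [← map_mul, ← map_mul, B.gcomm.mul_comm i j a b ha hb, map_smul]
        · rintro i hi _ ⟨a, ha, rfl⟩
          change q a * q a = 0
          rw [← map_mul, B.gcomm.odd_sq i hi a ha, map_zero]
      isdiff := by
        constructor
        · rintro i _ ⟨a, ha, rfl⟩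
          change dQ (q a) ∈ _
          rw [hd]; exact hg _ _ (B.isdiff.grade _ _ ha)
        · intro x
          obtain ⟨b, rfl⟩ := hq x
          rw [hd, hd, B.isdiff.d_sq, map_zero]
        · rintro i _ x ⟨a, ha, rfl⟩
          obtain ⟨b, rfl⟩ := hq x
          change dQ (q a * q b) = dQ (q a) * q b + _ • (q a * dQ (q b))
          rw [← map_mul, hd, hd, hd, B.isdiff.leibniz i a b ha, map_add, map_smul, map_mul, map_mul] }
  refine ⟨C, ⟨q, hg, hd⟩, eQ, ⟨?_, ?_, ?_, ?_, ?_⟩, hk, he, ?_⟩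
  · intro i
    have := ft i
    change FiniteDimensional k ((B.grading i).map q.toLinearMap)
    infer_instance
  · rintro i hi _ ⟨a, ha, rfl⟩
    change eQ (q a) = 0
    rw [he, hom i hi a ha]
  · intro x
    obtain ⟨b, rfl⟩ := hq x
    change eQ (dQ (q b)) = 0
    rw [hd, he, ed]
  · rintro i _ ⟨a, ha, rfl⟩ hne
    have h1 : a ∉ Orphans ε := fun h => hne ((hk a).2 h)
    rw [mem_orphans] at h1
    push Not at h1
    obtain ⟨b, hb⟩ := h1
    by_cases hi : i ≤ n
    · refine ⟨n - i, q (pr B.grading (n-i) b), by omega, hg _ _ (pr_mem _ _ _), ?_⟩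
      change eQ (q a * q (pr B.grading (n-i) b)) ≠ 0
      rw [← map_mul, he, ← (eps_pr B hom (show i + (n - i) = n by omega) ha b).1]
      exact hb
    · exact absurd (eps_big B hom (by omega) ha b).1 hb
  · rintro i _ ⟨a, ha, rfl⟩ hne
    have h1 : a ∉ Orphans ε := fun h => hne ((hk a).2 h)
    rw [mem_orphans] at h1
    push Not at h1
    obtain ⟨b, hb⟩ := h1
    by_cases hi : i ≤ n
    · refine ⟨n - i, q (pr B.grading (n-i) b), by omega, hg _ _ (pr_mem _ _ _), ?_⟩
      change eQ (q (pr B.grading (n-i) b) * q a) ≠ 0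
      rw [← map_mul, he]
      rw [(eps_pr B hom (show i + (n - i) = n by omega) ha b).1, B.gcomm.mul_comm i (n-i) a _ ha (pr_mem _ _ _), map_smul] at hb
      exact fun h => hb (by rw [h, smul_zero])
    · exact absurd (eps_big B hom (by omega) ha b).1 hb
  · rintro i _ ⟨a, ha, rfl⟩
    exact ⟨a, ha, rfl⟩
end quot
end PDCDGA

namespace PDCDGA
open DirectSum TensorProduct

section ext
variable {k : Type} [Field k]

lemma exists_dat (A : CDGAPack k) (ft : ∀ i, FiniteDimensional k (A.grading i)) (ε : A.carrier →ₗ[k] k) (n : ℕ) :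
    ∃ (T : Type) (_ : Fintype T) (p : T → ℕ) (ψ : T → A.carrier →ₗ[k] k) (b : T → A.carrier),
      (∀ t, 2 * p t ≤ n) ∧ (∀ t i, i ≠ p t + 1 → ∀ a ∈ A.grading i, ψ t a = 0) ∧ (∀ t, b t ∈ A.grading (p t)) ∧
      (∀ t, A.diff (b t) ∈ Orphans ε) ∧ (∀ t, ψ t (A.diff (b t)) = 1) ∧ (∀ t t', t' ≠ t → ψ t' (A.diff (b t)) = 0) ∧
      (∀ i, 2 * i ≤ n → ∀ a ∈ A.grading i, A.diff a ∈ Orphans ε → (∀ t, ψ t (A.diff a) = 0) → A.diff a = 0) := by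
  let W : ℕ → Submodule k A.carrier := fun i => (A.grading i).map A.diff ⊓ Orphans ε
  have hW : ∀ i, FiniteDimensional k (W i) := fun i => by
    have := ft i
    exact Submodule.finiteDimensional_of_le (inf_le_left : W i ≤ (A.grading i).map A.diff)
  let B : ∀ i, Module.Basis (Fin (Module.finrank k (W i))) k (W i) := fun i => Module.finBasis k (W i)
  have hb : ∀ i (s : Fin (Module.finrank k (W i))), ∃ b ∈ A.grading i, A.diff b = B i s := fun i s => (B i s).2.1
  choose b hb1 hb2 using hb
  have hx : ∀ i (s : Fin (Module.finrank k (W i))), ∃ g : A.carrier →ₗ[k] k, g ∘ₗ (W i).subtype = (B i).coord s :=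
    fun i s => LinearMap.exists_extend _
  choose g hg using hx
  have hg' : ∀ i s (w : W i), g i s w.1 = (B i).coord s w := fun i s w => LinearMap.congr_fun (hg i s) w
  have hWg : ∀ i (w : W i), w.1 ∈ A.grading (i+1) := by
    rintro i ⟨w, ⟨a, ha, rfl⟩, _⟩
    exact A.isdiff.grade _ _ ha
  refine ⟨Σ i : Fin (n/2+1), Fin (Module.finrank k (W i)), inferInstance, fun t => t.1, fun t => g t.1 t.2 ∘ₗ pr A.grading (t.1 + 1),
    fun t => b t.1 t.2, ?_, ?_, fun t => hb1 _ _, ?_, ?_, ?_, ?_⟩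
  · intro t
    have := t.1.2
    change 2 * (t.1 : ℕ) ≤ n
    omega
  · intro t i hi a ha
    rw [LinearMap.comp_apply, pr_ne _ ha hi, map_zero]
  · intro t
    rw [hb2]; exact (B t.1 t.2).2.2
  · intro t
    rw [hb2, LinearMap.comp_apply, pr_same _ (hWg _ _), hg']
    simp
  · rintro ⟨i, s⟩ ⟨i', s'⟩ hne
    dsimp only
    rw [hb2, LinearMap.comp_apply]
    by_cases h : i = i'
    · subst h
      rw [pr_same _ (hWg _ _), hg', Module.Basis.coord_apply, Module.Basis.repr_self]
      rw [Finsupp.single_eq_of_ne]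
      intro h
      apply hne
      rw [h]
    · rw [pr_ne _ (hWg _ _), map_zero]
      intro h'
      apply h
      apply Fin.ext
      omega
  · intro i hi a ha ho h
    let w : W i := ⟨A.diff a, ⟨a, ha, rfl⟩, ho⟩
    have : w = 0 := by
      apply (B i).ext_elem
      intro s
      have := h ⟨⟨i, by omega⟩, s⟩
      dsimp only at this
      rw [LinearMap.comp_apply, pr_same _ (A.isdiff.grade _ _ ha)] at this
      rw [map_zero, Finsupp.zero_apply, ← Module.Basis.coord_apply, ← hg']
      exact this
    exact congrArg Subtype.val this

variable {T : Type}

/-- degrees -/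
def edg (e : T → ℕ) : T ⊕ T → ℕ := Sum.elim e (fun t => e t + 1)

lemma edg_pos (e : T → ℕ) (he : ∀ t, 0 < e t) (t) : 0 < edg e t := by
  cases t with
  | inl t => exact he t
  | inr t => exact Nat.succ_pos _

/-- differential on the acyclic extension -/
noncomputable def exd (k T : Type) [Field k] : SQ k (T ⊕ T) →ₗ[k] SQ k (T ⊕ T) where
  toFun x := TrivSqZeroExt.inr (Sum.elim (fun _ => 0) (fun t => x.snd (Sum.inl t)))
  map_add' x y := by
    apply SQ.ext'
    · simp
    · rintro (t | t) <;> simp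
  map_smul' c x := by
    apply SQ.ext'
    · simp
    · rintro (t | t) <;> simp

lemma exd_fst (x : SQ k (T ⊕ T)) : (exd k T x).fst = 0 := rfl
lemma exd_inl (x : SQ k (T ⊕ T)) (t : T) : (exd k T x).snd (Sum.inl t) = 0 := rfl
lemma exd_inr (x : SQ k (T ⊕ T)) (t : T) : (exd k T x).snd (Sum.inr t) = x.snd (Sum.inl t) := rfl

/-- acyclic extension -/
noncomputable def Kx (k : Type) [Field k] [Finite T] (e : T → ℕ) (he : ∀ t, 0 < e t) : CDGAPack k :=
  letI := sqGraded (k := k) (edg e) (edg_pos e he)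
  { carrier := SQ k (T ⊕ T)
    grading := sqgr (edg e)
    diff := exd k T
    gcomm := sq_gcomm _ (edg_pos e he)
    isdiff := by
      constructor
      · rintro i x ⟨h1, h2⟩
        refine ⟨fun _ => rfl, ?_⟩
        rintro (t | t) ht
        · rfl
        · rw [exd_inr]
          apply h2
          simp only [edg, Sum.elim_inl, Sum.elim_inr] at ht ⊢
          omega
      · intro x
        apply SQ.ext'
        · rfl
        · rintro (t | t) <;> rfl
      · intro i a b ha
        apply SQ.ext'
        · simp [exd_fst]
        · rintro (t | t)
          · simp only [exd_inl, exd_fst, TrivSqZeroExt.snd_add, TrivSqZeroExt.snd_smul, Pi.add_apply, Pi.smul_apply, SQ.snd_mul']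
            simp
          · simp only [exd_inr, exd_fst, TrivSqZeroExt.snd_add, TrivSqZeroExt.snd_smul, Pi.add_apply, Pi.smul_apply, SQ.snd_mul', smul_eq_mul]
            by_cases hi : i = 0
            · subst hi; rw [pow_zero]; ring
            · rw [ha.1 hi]; ring }

section acc
variable [Finite T] (e : T → ℕ) (he : ∀ t, 0 < e t)

/-- scalar part -/
noncomputable def kf : (Kx k e he).carrier →ₗ[k] k where
  toFun (x : SQ k (T ⊕ T)) := x.fst
  map_add' _ _ := rfl
  map_smul' _ _ := rfl
/-- coordinates on the generators -/
noncomputable def kl (t : T) : (Kx k e he).carrier →ₗ[k] k where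
  toFun (x : SQ k (T ⊕ T)) := x.snd (Sum.inl t)
  map_add' _ _ := rfl
  map_smul' _ _ := rfl
/-- coordinates on the differentials of generators -/
noncomputable def kr (t : T) : (Kx k e he).carrier →ₗ[k] k where
  toFun (x : SQ k (T ⊕ T)) := x.snd (Sum.inr t)
  map_add' _ _ := rfl
  map_smul' _ _ := rfl

lemma k_mem {s : ℕ} {b : (Kx k e he).carrier} : b ∈ (Kx k e he).grading s ↔ (s ≠ 0 → kf e he b = 0) ∧ (∀ t, e t ≠ s → kl e he t b = 0) ∧
    ∀ t, e t + 1 ≠ s → kr e he t b = 0 := by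
  constructor
  · rintro ⟨h1, h2⟩
    exact ⟨h1, fun t h => h2 (Sum.inl t) h, fun t h => h2 (Sum.inr t) h⟩
  · rintro ⟨h1, h2, h3⟩
    refine ⟨h1, ?_⟩
    rintro (t | t) h
    · exact h2 t h
    · exact h3 t h

lemma kf_d (b : (Kx k e he).carrier) : kf e he ((Kx k e he).diff b) = 0 := rfl
lemma kl_d (t : T) (b : (Kx k e he).carrier) : kl e he t ((Kx k e he).diff b) = 0 := rfl
lemma kr_d (t : T) (b : (Kx k e he).carrier) : kr e he t ((Kx k e he).diff b) = kl e he t b := rfl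
lemma kf_one : kf e he (1 : (Kx k e he).carrier) = 1 := rfl
lemma kl_one (t : T) : kl e he t (1 : (Kx k e he).carrier) = 0 := rfl
lemma kr_one (t : T) : kr e he t (1 : (Kx k e he).carrier) = 0 := rfl

lemma k_ext {a b : (Kx k e he).carrier} (h1 : kf e he a = kf e he b) (h2 : ∀ t, kl e he t a = kl e he t b)
    (h3 : ∀ t, kr e he t a = kr e he t b) : a = b := by
  refine SQ.ext' (k := k) (x := a) (y := b) h1 ?_
  rintro (t | t)
  · exact h2 t
  · exact h3 t

lemma k_exists (x : T → k) : ∃ b : (Kx k e he).carrier, kf e he b = 0 ∧ (∀ t, kl e he t b = x t) ∧ ∀ t, kr e he t b = 0 :=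
  ⟨(TrivSqZeroExt.inr (Sum.elim x (fun _ => 0)) : SQ k (T ⊕ T)), rfl, fun _ => rfl, fun _ => rfl⟩

lemma k_deg0 {b : (Kx k e he).carrier} (hb : b ∈ (Kx k e he).grading 0) : b = kf e he b • 1 := by
  rw [k_mem] at hb
  apply k_ext
  · rw [map_smul, kf_one]; simp
  · intro t; rw [map_smul, kl_one, hb.2.1 t (he t).ne', smul_zero]
  · intro t; rw [map_smul, kr_one, hb.2.2 t (by omega), smul_zero]

lemma k_ft (i : ℕ) : FiniteDimensional k ((Kx k e he).grading i) := by
  have : FiniteDimensional k (Kx k e he).carrier := sq_fd (k := k) (ι := T ⊕ T)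
  infer_instance
end acc

variable [Fintype T]

/-- the functional on the extension -/
noncomputable def ehat (A : CDGAPack k) (ε : A.carrier →ₗ[k] k) (e : T → ℕ) (he : ∀ t, 0 < e t) (ψ : T → A.carrier →ₗ[k] k) :
    (tens A (Kx k e he)).carrier →ₗ[k] k :=
  tlift (𝒜 := A.grading) (ℬ := (Kx k e he).grading) (LinearMap.mk₂ k (fun (a : A.carrier) (κ : (Kx k e he).carrier) =>
    kf e he κ * ε a + ∑ t, (kl e he t κ * ψ t a 
      - kr e he t κ * ψ t (A.diff (sg A.grading a))))
    (by
      intro a b κ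
      rw [add_add_add_comm, ← Finset.sum_add_distrib, map_add, mul_add]
      congr 1
      refine Finset.sum_congr rfl fun t _ => ?_
      rw [map_add, map_add, map_add, map_add]; ring)
    (by
      intro c a κ
      rw [smul_add, Finset.smul_sum, map_smul]
      congr 1
      · simp only [smul_eq_mul]; ring
      refine Finset.sum_congr rfl fun t _ => ?_
      rw [map_smul, map_smul, map_smul, map_smul]; simp only [smul_eq_mul]; ring)
    (by
      intro a κ κ'
      rw [add_add_add_comm, ← Finset.sum_add_distrib]
      congr 1
      · rw [map_add]; ring
      refine Finset.sum_congr rfl fun t _ => ?_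
      rw [map_add, map_add]; ring)
    (by
      intro c a κ
      rw [smul_add, Finset.smul_sum]
      congr 1
      · rw [map_smul]; simp only [smul_eq_mul]; ring
      refine Finset.sum_congr rfl fun t _ => ?_
      rw [map_smul, map_smul]; simp only [smul_eq_mul]; ring))

variable (A : CDGAPack k) (ε : A.carrier →ₗ[k] k) (e : T → ℕ) (he : ∀ t, 0 < e t) (ψ : T → A.carrier →ₗ[k] k)

lemma ehat_tm (a : A.carrier) (κ : (Kx k e he).carrier) : ehat A ε e he ψ (tm A.grading (Kx k e he).grading a κ) =
    kf e he κ * ε a + ∑ t, (kl e he t κ * ψ t a 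
      - kr e he t κ * ψ t (A.diff (sg A.grading a))) :=
  tlift_tm _ _ _

lemma ehat_ed (ed : ∀ a, ε (A.diff a) = 0) (x : (tens A (Kx k e he)).carrier) :
    ehat A ε e he ψ ((tens A (Kx k e he)).diff x) = 0 := by
  refine tm_ind (𝒜 := A.grading) (ℬ := (Kx k e he).grading) (p := fun x => ehat A ε e he ψ ((tens A (Kx k e he)).diff x) = 0) x 
    ?_ ?_ ?_
  · rw [map_zero, map_zero]
  · intro x y hx hy
    rw [map_add, map_add, hx, hy, add_zero]
  · intro i j a ha b hb
    rw [tens_diff, map_add, ehat_tm, ehat_tm, ed, kf_d]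
    have h1 : A.diff (sg A.grading (A.diff a)) = 0 := by
      rw [sg_apply _ (A.isdiff.grade _ _ ha), map_smul, A.isdiff.d_sq, smul_zero]
    rw [h1, sg_sg]
    simp only [kl_d, kr_d]
    simp

lemma ehat_hom {n : ℕ} (hom : ∀ i : ℕ, i ≠ n → ∀ a ∈ A.grading i, ε a = 0) (p : T → ℕ) (hp : ∀ t, e t + p t + 1 = n)
    (hψ : ∀ t i, i ≠ p t + 1 → ∀ a ∈ A.grading i, ψ t a = 0) (i : ℕ) (hi : i ≠ n) (x : (tens A (Kx k e he)).carrier)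
    (hx : x ∈ (tens A (Kx k e he)).grading i) : ehat A ε e he ψ x = 0 := by
  refine tgr_ind (𝒜 := A.grading) (ℬ := (Kx k e he).grading) (p := fun x => ehat A ε e he ψ x = 0) x hx ?_ ?_ ?_
  · rw [map_zero]
  · intro x y _ _ hx hy
    rw [map_add, hx, hy, add_zero]
  · intro r s hrs a ha b hb
    rw [k_mem] at hb
    rw [ehat_tm]
    have h1 : kf e he b * ε a = 0 := by
      by_cases hs : s = 0
      · rw [hom r (by omega) a ha, mul_zero]
      · rw [hb.1 hs, zero_mul]
    rw [h1, zero_add]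
    refine Finset.sum_eq_zero fun t _ => ?_
    have h2 : kl e he t b * ψ t a = 0 := by
      by_cases hs : e t = s
      · rw [hψ t r (by have := hp t; omega) a ha, mul_zero]
      · rw [hb.2.1 t hs, zero_mul]
    have h3 : kr e he t b * ψ t (A.diff (sg A.grading a)) = 0 := by
      by_cases hs : e t + 1 = s
      · rw [hψ t (r+1) (by have := hp t; omega) _ (A.isdiff.grade _ _ (by rw [sg_apply _ ha]; exact Submodule.smul_mem _ _ ha)), mul_zero]
      · rw [hb.2.2 t hs, zero_mul]
    rw [h2, h3, sub_zero]

end ext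
end PDCDGA

namespace PDCDGA
open DirectSum TensorProduct

section low
variable {k : Type} [Field k] {T : Type} [Fintype T] {A : CDGAPack k} 

lemma low_dec (hA : Good A) (e : T → ℕ) (he : ∀ t, 0 < e t) {i : ℕ} (hi : ∀ t, i ≤ e t + 1) (x : (tens A (Kx k e he)).carrier)
    (hx : x ∈ (tens A (Kx k e he)).grading i) : ∃ a ∈ A.grading i, ∃ v ∈ (Kx k e he).grading i, kf e he v = 0 ∧
      x = tm A.grading (Kx k e he).grading a 1 + tm A.grading (Kx k e he).grading 1 v := by
  refine tgr_ind (𝒜 := A.grading) (ℬ := (Kx k e he).grading) (p := fun x => ∃ a ∈ A.grading i, ∃ v ∈ (Kx k e he).grading i, kf e he v = 0 ∧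
      x = tm A.grading (Kx k e he).grading a 1 + tm A.grading (Kx k e he).grading 1 v) x hx ?_ ?_ ?_
  · exact ⟨0, Submodule.zero_mem _, 0, Submodule.zero_mem _, map_zero _, by simp⟩
  · rintro _ _ - - ⟨a, ha, v, hv, h0, rfl⟩ ⟨a', ha', v', hv', h0', rfl⟩
    refine ⟨a + a', Submodule.add_mem _ ha ha', v + v', Submodule.add_mem _ hv hv', by rw [map_add, h0, h0', add_zero], ?_⟩
    rw [tm_add_left, tm_add_right]; abel
  · intro r s hrs a ha b hb
    by_cases hs : s = 0
    · subst hs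
      obtain rfl : r = i := by omega
      refine ⟨kf e he b • a, Submodule.smul_mem _ _ ha, 0, Submodule.zero_mem _, map_zero _, ?_⟩
      rw [tm_zero_right, add_zero, tm_smul_left, ← tm_smul_right, ← k_deg0 e he hb]
    have hb' := hb
    rw [k_mem] at hb'
    by_cases hr : r = 0
    · subst hr
      obtain rfl : s = i := by omega
      obtain ⟨c, rfl⟩ := hA.z0 a ha
      refine ⟨0, Submodule.zero_mem _, c • b, Submodule.smul_mem _ _ hb, by rw [map_smul, hb'.1 hs, smul_zero], ?_⟩
      rw [tm_zero_left, zero_add, tm_smul_left, tm_smul_right]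
    have : tm A.grading (Kx k e he).grading a b = 0 := by
      by_cases hr1 : r = 1
      · subst hr1
        rw [hA.z1, Submodule.mem_bot] at ha
        rw [ha, tm_zero_left]
      · have : b = 0 := by
          apply k_ext
          · rw [hb'.1 hs, map_zero]
          · intro t; rw [hb'.2.1 t (by have := hi t; omega), map_zero]
          · intro t; rw [hb'.2.2 t (by have := hi t; omega), map_zero]
        rw [this, tm_zero_right]
    rw [this]
    exact ⟨0, Submodule.zero_mem _, 0, Submodule.zero_mem _, map_zero _, by simp⟩

lemma low_cyc (hA : Good A) (e : T → ℕ) (he : ∀ t, 0 < e t) {n : ℕ} {ε : A.carrier →ₗ[k] k}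
    (hom : ∀ i : ℕ, i ≠ n → ∀ a ∈ A.grading i, ε a = 0) (ed : ∀ a, ε (A.diff a) = 0)
    (p : T → ℕ) (hp : ∀ t, e t + p t + 1 = n) (ψ : T → A.carrier →ₗ[k] k) (b : T → A.carrier)
    (h1 : ∀ t, 2 * p t ≤ n) (h3 : ∀ t, b t ∈ A.grading (p t)) (h4 : ∀ t, A.diff (b t) ∈ Orphans ε)
    (h5 : ∀ t, ψ t (A.diff (b t)) = 1) (h6 : ∀ t t', t' ≠ t → ψ t' (A.diff (b t)) = 0)
    (h7 : ∀ i, 2 * i ≤ n → ∀ a ∈ A.grading i, A.diff a ∈ Orphans ε → (∀ t, ψ t (A.diff a) = 0) → A.diff a = 0)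
    {i : ℕ} (hi : 2 * i ≤ n) (x : (tens A (Kx k e he)).carrier)
    (hx : x ∈ (tens A (Kx k e he)).grading i) (hD : (tens A (Kx k e he)).diff x ∈ Orphans (ehat A ε e he ψ)) :
    ∃ a ∈ A.grading i, A.diff a = 0 ∧ ∃ y, x = (inl A (Kx k e he)).f a + (tens A (Kx k e he)).diff y := by
  obtain ⟨a, ha, v, hv, hv0, rfl⟩ := low_dec hA e he (fun t => by have := hp t; have := h1 t; omega) x hx
  have sg1 : sg A.grading (1 : A.carrier) = 1 := by rw [sg_apply _ (one_mem' A)]; simp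
  have hDx : (tens A (Kx k e he)).diff (tm A.grading (Kx k e he).grading a 1 + tm A.grading (Kx k e he).grading 1 v)
      = tm A.grading (Kx k e he).grading (A.diff a) 1 + tm A.grading (Kx k e he).grading 1 ((Kx k e he).diff v) := by
    rw [map_add, tens_diff, tens_diff, d_one, d_one, tm_zero_right, tm_zero_left, add_zero, zero_add, sg1]
  rw [hDx, mem_orphans] at hD
  have hl : ∀ t, kl e he t v = 0 := by
    classical
    intro t
    by_cases ht : e t = i
    · have h8 := hD (tm A.grading (Kx k e he).grading (b t) 1)
      have hd1 := (Kx k e he).isdiff.grade _ _ hv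
      have e1 : tm A.grading (Kx k e he).grading (A.diff a) 1 * tm A.grading (Kx k e he).grading (b t) 1 
          = tm A.grading (Kx k e he).grading (A.diff a * b t) 1 := by
        rw [tm_mul _ (one_mem' (Kx k e he)) (h3 t)]; simp
      have e2 := tm_mul (1 : A.carrier) hd1 (h3 t) (1 : (Kx k e he).carrier)
      rw [one_mul, mul_one] at e2
      have e3 := add_mul (tm A.grading (Kx k e he).grading (A.diff a) 1) (tm A.grading (Kx k e he).grading 1 ((Kx k e he).diff v))
        (tm A.grading (Kx k e he).grading (b t) 1)
      have h9 := (congrArg (ehat A ε e he ψ) e3).symm.trans h8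
      rw [e1, e2, map_add, map_smul, ehat_tm, ehat_tm, kf_one, kf_d, leib_ev A ε ed ha, orph_left A hom (h4 t), sg_apply _ (h3 t)] at h9
      have e4 : ∀ t', kl e he t' ((Kx k e he).diff v) * ψ t' (b t) - kr e he t' ((Kx k e he).diff v) * ψ t' (A.diff ((-1 : k) ^ p t • b t))
          = if t' = t then - ((-1 : k) ^ p t * kl e he t v) else 0 := by
        intro t'
        rw [kl_d, kr_d, map_smul, map_smul]
        split_ifs with h
        · subst h; rw [h5]; simp; ring
        · rw [h6 t t' h]; simp
      rw [Finset.sum_congr rfl (fun t' _ => e4 t')] at h9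
      simp only [kl_one, kr_one, Finset.sum_ite_eq', Finset.mem_univ, if_true] at h9
      simpa using h9
    · exact ((k_mem e he).1 hv).2.1 t ht
  have hdv : (Kx k e he).diff v = 0 := by
    apply k_ext
    · rw [kf_d, map_zero]
    · intro t; rw [kl_d, map_zero]
    · intro t; rw [kr_d, hl, map_zero]
  rw [hdv, tm_zero_right, add_zero] at hD
  have hO : A.diff a ∈ Orphans ε := by
    rw [mem_orphans]
    intro c
    have h8 := hD (tm A.grading (Kx k e he).grading c 1)
    have h9 := (congrArg (ehat A ε e he ψ) (tm_one_mul (A.diff a) c (1 : (Kx k e he).carrier))).symm.trans h8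
    rw [ehat_tm, kf_one] at h9
    simpa [kl_one, kr_one] using h9
  have hda : A.diff a = 0 := by
    refine h7 i hi a ha hO (fun t => ?_)
    classical
    obtain ⟨u, hu1, hu2, hu3⟩ := k_exists (k := k) e he (fun t' => if t' = t then 1 else 0)
    have h8 := hD (tm A.grading (Kx k e he).grading 1 u)
    have e2 := tm_mul (A.diff a) (one_mem' (Kx k e he)) (one_mem' A) u
    rw [zero_mul, pow_zero, one_smul, mul_one, one_mul] at e2
    have h9 := (congrArg (ehat A ε e he ψ) e2).symm.trans h8
    rw [ehat_tm, hu1] at h9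
    simpa [hu2, hu3] using h9
  obtain ⟨v', h8, h9, h10⟩ := k_exists e he (fun t => kr e he t v)
  refine ⟨a, ha, hda, tm A.grading (Kx k e he).grading 1 v', ?_⟩
  rw [tens_diff, d_one, tm_zero_left, zero_add, sg1]
  have : (Kx k e he).diff v' = v := by
    apply k_ext
    · rw [kf_d, hv0]
    · intro t; rw [kl_d, hl]
    · intro t; rw [kr_d, h9]
  rw [this]; rfl
end low
end PDCDGA

namespace PDCDGA
open DirectSum TensorProduct

section final
variable {k : Type} [Field k]

theorem completion {X A : CDGAPack k} {n : ℕ} (hn : 3 ≤ n) {εX : X.carrier →ₗ[k] k} (hX : PDp X n εX) (hA : Good A) (f : Hm X A)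
    {N : ℕ} (hf : Eqv f N) (hN : n < N) :
    ∃ (C : CDGAPack k) (ρ : Hm A C) (εC : C.carrier →ₗ[k] k), PDp C n εC ∧ (∀ x, εC (ρ.f (f.f x)) = εX x) ∧
      ∀ i, 2 * i ≤ n → ∀ c ∈ C.grading i, C.diff c = 0 → ∃ a ∈ A.grading i, A.diff a = 0 ∧ ∃ y, c = ρ.f a + C.diff y := by
  obtain ⟨ε, hom, ed, hε⟩ := exists_eps hX f hf (by omega)
  obtain ⟨T, _, p, ψ, b, h1, h2, h3, h4, h5, h6, h7⟩ := exists_dat A hA.ft ε n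
  let e : T → ℕ := fun t => n - 1 - p t
  have hp : ∀ t, e t + p t + 1 = n := fun t => by have := h1 t; simp only [e]; omega
  have he : ∀ t, 0 < e t := fun t => by have := h1 t; simp only [e]; omega
  obtain ⟨C, π, εC, hC, hk, hE, hs⟩ := exists_quot (tens A (Kx k e he)) (n := n) (ε := ehat A ε e he ψ)
    (tgr_ft _ _ hA.ft (k_ft e he)) (fun i hi x hx => ehat_hom A ε e he ψ hom p hp h2 i hi x hx) (ehat_ed A ε e he ψ ed)
  refine ⟨C, π.comp (inl A (Kx k e he)), εC, hC, ?_, ?_⟩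
  · intro x
    rw [Hm.comp_f, hE, inl_f, ehat_tm, kf_one, hε]
    simp [kl_one, kr_one]
  · intro i hi c hc dc
    obtain ⟨x, hx, rfl⟩ := hs i c hc
    obtain ⟨a, ha, da, y, rfl⟩ := low_cyc hA e he hom ed p hp ψ b h1 h3 h4 h5 h6 h7 hi x hx
      ((hk _).1 (by rw [← π.ch, dc]))
    refine ⟨a, ha, da, π.f y, ?_⟩
    rw [map_add, π.ch]; rfl

theorem main_nontriv {X Y A : CDGAPack k} {n : ℕ} (hn : 3 ≤ n) {εX : X.carrier →ₗ[k] k} (hX : PDp X n εX) 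
    {εY : Y.carrier →ₗ[k] k} (hY : PDp Y n εY) (hA : Good A) (f : Hm X A) (g : Hm Y A)
    {N : ℕ} (hf : Eqv f N) (hg : Eqv g N) (hN : n < N) :
    ∃ (C : CDGAPack k) (εC : C.carrier →ₗ[k] k) (F : Hm X C) (G : Hm Y C), PDp C n εC ∧ IsQuasiIsoMap X C F.f ∧ IsQuasiIsoMap Y C G.f := by
  obtain ⟨C, ρ, εC, hC, hε, hlow⟩ := completion hn hX hA f hf hN
  have inj : ∀ i, ∀ x ∈ X.grading i, X.diff x = 0 → (∃ b, (ρ.comp f).f x = C.diff b) → ∃ a', x = X.diff a' := by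
    rintro i x hx dx ⟨c, hc⟩
    by_cases hi : i ≤ n
    · refine hX.exact_of_perp (show i + (n - i) = n by omega) hx (fun z hz dz => ?_)
      rw [← hε, map_mul, map_mul]
      rw [Hm.comp_f] at hc
      rw [hc, ← d_mul_cyc, hC.ed]
      rw [ρ.ch, f.ch, dz, map_zero, map_zero]
    · exact ⟨0, by rw [map_zero, hX.above (by omega) hx]⟩
  have low : ∀ i, 2 * i ≤ n → ∀ c ∈ C.grading i, C.diff c = 0 → ∃ x ∈ X.grading i, X.diff x = 0 ∧ ∃ y, c = (ρ.comp f).f x + C.diff y := by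
    intro i hi c hc dc
    obtain ⟨a, ha, da, y, rfl⟩ := hlow i hi c hc dc
    obtain ⟨x, a', hx, dx, rfl⟩ := hf.surj (show i < N by omega) ha da
    exact ⟨x, hx, dx, ρ.f a' + y, by rw [map_add, map_add, ρ.ch, Hm.comp_f, add_assoc]⟩
  have surj : ∀ i, ∀ c ∈ C.grading i, C.diff c = 0 → ∃ x ∈ X.grading i, X.diff x = 0 ∧ ∃ y, c = (ρ.comp f).f x + C.diff y := by
    intro i c hc dc
    by_cases hi : 2 * i ≤ n
    · exact low i hi c hc dc
    by_cases hi' : i ≤ n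
    swap
    · exact ⟨0, Submodule.zero_mem _, map_zero _, 0, by rw [map_zero, map_zero, hC.above (by omega) hc, add_zero]⟩
    obtain ⟨x, hx, ex⟩ := hX.repr (show i + (n - i) = n by omega) (εC ∘ₗ LinearMap.mulLeft k c ∘ₗ (ρ.comp f).f.toLinearMap)
    have ex' : ∀ w ∈ X.grading (n - i), εX (x * w) = εC (c * (ρ.comp f).f w) := ex
    have dx : X.diff x = 0 := by
      by_cases hin : i = n
      · exact hX.above (show n < i + 1 by omega) (X.isdiff.grade _ _ hx)
      refine hX.eq_zero (show (i + 1) + (n - i - 1) = n by omega) (X.isdiff.grade _ _ hx) (fun b hb => ?_)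
      have hdb := X.isdiff.grade _ _ hb
      rw [show n - i - 1 + 1 = n - i by omega] at hdb
      have h0 := leib_ev C εC hC.ed hc ((ρ.comp f).f b)
      rw [dc, zero_mul, map_zero, (ρ.comp f).ch] at h0
      rw [leib_ev X εX hX.ed hx, ex' _ hdb, ← h0]
    refine ⟨x, hx, dx, ?_⟩
    have hm := (ρ.comp f).gr _ _ hx
    obtain ⟨y, hy⟩ := hC.exact_of_perp (show i + (n - i) = n by omega) (Submodule.sub_mem _ hc hm) (by
      intro z hz dz
      obtain ⟨w, hw, dw, y, rfl⟩ := low (n - i) (by omega) z hz dz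
      have h0 : C.diff (c - (ρ.comp f).f x) = 0 := by rw [map_sub, dc, (ρ.comp f).ch, dx, map_zero, sub_zero]
      have h1 := leib_ev C εC hC.ed (Submodule.sub_mem _ hc hm) y
      rw [h0, zero_mul, map_zero, eq_comm, neg_eq_zero, mul_eq_zero] at h1
      have h2 := h1.resolve_left (pow_ne_zero _ (by simp))
      rw [mul_add, map_add, h2, add_zero, sub_mul, map_sub, ← ex' _ hw, ← map_mul, Hm.comp_f, hε, sub_self])
    exact ⟨y, by rw [← hy]; abel⟩
  refine ⟨C, εC, ρ.comp f, ρ.comp g, hC, qi_of_hom _ inj (fun i c hc dc => ?_), qi_of_hom _ ?_ (fun i c hc dc => ?_)⟩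
  · obtain ⟨x, _, dx, y, e⟩ := surj i c hc dc
    exact ⟨x, y, dx, e⟩
  · rintro i y hy dy ⟨c, hc⟩
    by_cases hi : i ≤ n
    · obtain ⟨x, a, hx, dx, e⟩ := hf.surj (show i < N by omega) (g.gr _ _ hy) (by rw [g.ch, dy, map_zero])
      rw [Hm.comp_f, e, map_add, ← ρ.ch] at hc
      obtain ⟨x', rfl⟩ := inj i x hx dx ⟨c - ρ.f a, by rw [map_sub, ← hc, Hm.comp_f]; abel⟩
      exact hg.inj (show i ≤ N by omega) hy dy (x := f.f x' + a) (by rw [e, map_add, f.ch])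
    · exact ⟨0, by rw [map_zero, hY.above (by omega) hy]⟩
  · obtain ⟨x, hx, dx, y, e⟩ := surj i c hc dc
    by_cases hi : i ≤ n
    · obtain ⟨z, a, hz, dz, e'⟩ := hg.surj (show i < N by omega) (f.gr _ _ hx) (by rw [f.ch, dx, map_zero])
      refine ⟨z, ρ.f a + y, dz, ?_⟩
      rw [e, Hm.comp_f, e', map_add, map_add, Hm.comp_f, ρ.ch, add_assoc]
    · exact ⟨0, 0, map_zero _, by rw [map_zero, map_zero, hC.above (by omega) hc, add_zero]⟩

theorem main_pd {X Y : CDGAPack k} {n : ℕ} (hn : 3 ≤ n) {εX : X.carrier →ₗ[k] k} (hX : PDp X n εX) 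
    {εY : Y.carrier →ₗ[k] k} (hY : PDp Y n εY)
    (hX0 : ∀ a ∈ X.grading 0, ∃ r : k, a = r • (1 : X.carrier))
    (hX1 : X.grading 1 = ⊥) (hX2 : X.grading 2 = ⊥)
    (hY0 : ∀ a ∈ Y.grading 0, ∃ r : k, a = r • (1 : Y.carrier))
    (hY1 : Y.grading 1 = ⊥) (hY2 : Y.grading 2 = ⊥)
    (hwe : WeaklyEquivalent X Y) :
    ∃ (C : CDGAPack k) (εC : C.carrier →ₗ[k] k) (F : Hm X C) (G : Hm Y C), PDp C n εC ∧ IsQuasiIsoMap X C F.f ∧ IsQuasiIsoMap Y C G.f := by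
  by_cases nt : (1 : X.carrier) = 0
  · have nt' := (triv_iff hwe).1 nt
    have hx : ∀ a : X.carrier, a = 0 := fun a => by rw [← one_mul a, nt, zero_mul]
    have hy : ∀ a : Y.carrier, a = 0 := fun a => by rw [← one_mul a, nt', zero_mul]
    let G : Hm Y X :=
      { f := AlgHom.ofLinearMap 0 (by rw [nt]; rfl) (fun x y => by simp)
        gr := fun i a _ => (hx _).symm ▸ Submodule.zero_mem (X.grading i)
        ch := fun a => by rw [hx (X.diff _)]; exact (hx _).symm }
    refine ⟨X, εX, Hm.id X, G, hX, qi_of_hom _ ?_ ?_, qi_of_hom _ ?_ ?_⟩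
    · exact fun i a _ _ _ => ⟨0, by rw [map_zero, hx a]⟩
    · exact fun i a _ _ => ⟨0, 0, map_zero _, by rw [hx a, map_zero, map_zero, add_zero]⟩
    · exact fun i a _ _ _ => ⟨0, by rw [map_zero, hy a]⟩
    · exact fun i a _ _ => ⟨0, 0, map_zero _, by rw [hx a, map_zero, map_zero, add_zero]⟩
  · obtain ⟨A, f, g, hA, hf, hg⟩ := common_good ⟨hX0, hX1, hX.ft⟩ ⟨hY0, hY1, hY.ft⟩ hX2 hY2
      (HC_of hX.ft nt hX0 hX1 hX2) hwe (n + 1)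
    exact main_nontriv hn hX hY hA f g hf hg (by omega)
end final
end PDCDGA

namespace PDCDGA

/-- two quasi-isomorphic finite-type differential Poincaré duality
algebras of dimension `n ≥ 7` with `H^{≤3} = k` and trivial degrees `1, 2` admit a
common differential Poincaré duality algebra target via quasi-isomorphisms. -/
theorem common_poincare_duality_target {k : Type} [Field k]
    (n : ℕ) (hn : 7 ≤ n)
    (X Y : CDGAPack k) (εX : X.carrier →ₗ[k] k) (εY : Y.carrier →ₗ[k] k)
    (hftX : ∀ i : ℕ, FiniteDimensional k (X.grading i))
    (hftY : ∀ i : ℕ, FiniteDimensional k (Y.grading i))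
    (hXhom : ∀ i : ℕ, i ≠ n → ∀ a ∈ X.grading i, εX a = 0)
    (hXd : ∀ a : X.carrier, εX (X.diff a) = 0)
    (hXndl : ∀ (i : ℕ) (a : X.carrier), a ∈ X.grading i → a ≠ 0 →
      ∃ (jd : ℕ) (b : X.carrier), i + jd = n ∧ b ∈ X.grading jd ∧ εX (a * b) ≠ 0)
    (hXndr : ∀ (jd : ℕ) (b : X.carrier), b ∈ X.grading jd → b ≠ 0 →
      ∃ (i : ℕ) (a : X.carrier), i + jd = n ∧ a ∈ X.grading i ∧ εX (a * b) ≠ 0)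
    (hYhom : ∀ i : ℕ, i ≠ n → ∀ a ∈ Y.grading i, εY a = 0)
    (hYd : ∀ a : Y.carrier, εY (Y.diff a) = 0)
    (hYndl : ∀ (i : ℕ) (a : Y.carrier), a ∈ Y.grading i → a ≠ 0 →
      ∃ (jd : ℕ) (b : Y.carrier), i + jd = n ∧ b ∈ Y.grading jd ∧ εY (a * b) ≠ 0)
    (hYndr : ∀ (jd : ℕ) (b : Y.carrier), b ∈ Y.grading jd → b ≠ 0 →
      ∃ (i : ℕ) (a : Y.carrier), i + jd = n ∧ a ∈ Y.grading i ∧ εY (a * b) ≠ 0)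
    (hX0 : ∀ a ∈ X.grading 0, ∃ r : k, a = r • (1 : X.carrier))
    (hX1 : X.grading 1 = ⊥) (hX2 : X.grading 2 = ⊥)
    (hY0 : ∀ a ∈ Y.grading 0, ∃ r : k, a = r • (1 : Y.carrier))
    (hY1 : Y.grading 1 = ⊥) (hY2 : Y.grading 2 = ⊥)
    (hXH0 : ∀ a ∈ X.grading 0, X.diff a = 0 → ∃ r : k, a = r • (1 : X.carrier))
    (hXH13 : ∀ i : ℕ, 1 ≤ i → i ≤ 3 → ∀ a ∈ X.grading i, X.diff a = 0 →
      a ∈ LinearMap.range X.diff)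
    (hYH0 : ∀ a ∈ Y.grading 0, Y.diff a = 0 → ∃ r : k, a = r • (1 : Y.carrier))
    (hYH13 : ∀ i : ℕ, 1 ≤ i → i ≤ 3 → ∀ a ∈ Y.grading i, Y.diff a = 0 →
      a ∈ LinearMap.range Y.diff)
    (hwe : WeaklyEquivalent X Y) :
    ∃ (C : CDGAPack k) (εC : C.carrier →ₗ[k] k)
      (f : X.carrier →ₐ[k] C.carrier) (g : Y.carrier →ₐ[k] C.carrier),
      (∀ i : ℕ, i ≠ n → ∀ a ∈ C.grading i, εC a = 0) ∧
      (∀ a : C.carrier, εC (C.diff a) = 0) ∧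
      (∀ i jd : ℕ, i + jd = n → ∀ a ∈ C.grading i, a ≠ 0 →
        ∃ b ∈ C.grading jd, εC (a * b) ≠ 0) ∧
      (∀ i jd : ℕ, i + jd = n → ∀ b ∈ C.grading jd, b ≠ 0 →
        ∃ a ∈ C.grading i, εC (a * b) ≠ 0) ∧
      IsQuasiIsoMap X C f ∧ IsQuasiIsoMap Y C g := by
  obtain ⟨C, εC, F, G, hC, hF, hG⟩ := main_pd (by omega)
    ⟨hftX, hXhom, hXd, hXndl, hXndr⟩ ⟨hftY, hYhom, hYd, hYndl, hYndr⟩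
    hX0 hX1 hX2 hY0 hY1 hY2 hwe
  refine ⟨C, εC, F.f, G.f, hC.hom, hC.ed, ?_, ?_, hF, hG⟩
  · intro i jd h a ha h0
    obtain ⟨j, b, e, hb, hne⟩ := hC.ndl i a ha h0
    obtain rfl : jd = j := by omega
    exact ⟨b, hb, hne⟩
  · intro i jd h b hb h0
    obtain ⟨j, a, e, ha, hne⟩ := hC.ndr jd b hb h0
    obtain rfl : i = j := by omega
    exact ⟨a, ha, hne⟩

end PDCDGA
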